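/- Suppose R is a commutative coherent ring such that the map f_R from the lattice of wide subcategories of finitely presented R-modules to the lattice of thick subcategories of small objects of D(R) (sending C to {small X : H_n X ∈ C for all n}) is an isomorphism, and let a be a finitely generated ideal of R. Then the corresponding map f_{R/a} for the ring R/a is also an isomorphism. -/

import Mathlib

open CategoryTheory CategoryTheory.Limits CategoryTheory.Pretriangulated ZeroObject

universe w u

/-- A full subcategory (given as a set of objects) of an abelian category is *wide*
if it is closed under isomorphisms, kernels, cokernels and extensions. -/
structure IsWideSubcategory {A : Type*} [Category A] [Abelian A] (C : Set A) : Prop where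
  mem_of_iso : ∀ {X Y : A}, (X ≅ Y) → X ∈ C → Y ∈ C
  kernel_mem : ∀ {X Y : A} (f : X ⟶ Y), X ∈ C → Y ∈ C → kernel f ∈ C
  cokernel_mem : ∀ {X Y : A} (f : X ⟶ Y), X ∈ C → Y ∈ C → cokernel f ∈ C
  extension_mem : ∀ (S : CategoryTheory.ShortComplex A), S.ShortExact →
    S.X₁ ∈ C → S.X₃ ∈ C → S.X₂ ∈ C

/-- The wide subcategory generated by a set of objects: the intersection of all
wide subcategories containing it. -/
def wideClosure {A : Type*} [Category A] [Abelian A] (S : Set A) : Set A :=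
  ⋂₀ {C : Set A | IsWideSubcategory C ∧ S ⊆ C}

/-- `C₀`, the wide subcategory of `R`-modules generated by the module `R`. -/
def wideSubcatGenByRing (R : Type u) [Ring R] : Set (ModuleCat.{u} R) :=
  wideClosure {ModuleCat.of R R}

/-- A thick subcategory of a (pre)triangulated category: a full triangulated
subcategory closed under retracts (direct summands). -/
structure IsThickSubcategory {T : Type*} [Category T] [HasZeroObject T] [Preadditive T]
    [HasShift T ℤ] [∀ n : ℤ, (shiftFunctor T n).Additive] [Pretriangulated T]
    (D : Set T) : Prop where
  mem_of_iso : ∀ {X Y : T}, (X ≅ Y) → X ∈ D → Y ∈ D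
  zero_mem : (0 : T) ∈ D
  shift_mem : ∀ (X : T) (n : ℤ), X ∈ D → X⟦n⟧ ∈ D
  ext₂ : ∀ (T' : Triangle T), T' ∈ (distTriang T) → T'.obj₁ ∈ D → T'.obj₃ ∈ D → T'.obj₂ ∈ D
  retract_mem : ∀ (X Y : T) (i : X ⟶ Y) (r : Y ⟶ X), i ≫ r = 𝟙 X → Y ∈ D → X ∈ D

/-- An object of the derived category of `R`-modules is *small* if it belongs to every
thick subcategory containing the complex `S⁰R` (`R` concentrated in degree `0`), i.e. to
the thick subcategory generated by `S⁰R`; equivalently, `Hom(X,-)` commutes with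
arbitrary direct sums. -/
def IsSmallObject {R : Type u} [Ring R] [HasDerivedCategory.{w} (ModuleCat.{u} R)]
    (X : DerivedCategory (ModuleCat.{u} R)) : Prop :=
  ∀ D : Set (DerivedCategory (ModuleCat.{u} R)), IsThickSubcategory D →
    (DerivedCategory.singleFunctor (ModuleCat.{u} R) 0).obj (ModuleCat.of R R) ∈ D → X ∈ D

/-- The map `f` : it sends a wide subcategory `C` to the collection of small objects `X`
of the derived category such that `Hₙ X ∈ C` for all `n`. -/
def fSet {R : Type u} [Ring R] [HasDerivedCategory.{w} (ModuleCat.{u} R)]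
    (C : Set (ModuleCat.{u} R)) : Set (DerivedCategory (ModuleCat.{u} R)) :=
  {X | IsSmallObject X ∧
    ∀ n : ℤ, (DerivedCategory.homologyFunctor (ModuleCat.{u} R) n).obj X ∈ C}

/-- The map `g` : it sends a thick subcategory `D` to the wide subcategory generated by
the homology modules `Hₙ X` for `X ∈ D` and `n : ℤ`. -/
def gSet {R : Type u} [Ring R] [HasDerivedCategory.{w} (ModuleCat.{u} R)]
    (D : Set (DerivedCategory (ModuleCat.{u} R))) : Set (ModuleCat.{u} R) :=
  wideClosure {M | ∃ X ∈ D, ∃ n : ℤ,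
    Nonempty ((DerivedCategory.homologyFunctor (ModuleCat.{u} R) n).obj X ≅ M)}

/-- A ring is left coherent if every finitely generated left ideal is finitely
presented as a module. -/
def IsLeftCoherentRing (R : Type u) [Ring R] : Prop :=
  ∀ I : Ideal R, I.FG → Module.FinitePresentation R I

/-- The collection of finitely presented `R`-modules. -/
def finPresModules (R : Type u) [Ring R] : Set (ModuleCat.{u} R) :=
  {M : ModuleCat.{u} R | Module.FinitePresentation R M}

/-- The lattice of (nonempty) wide subcategories of finitely presented `R`-modules. -/
def wideLatticeFP (R : Type u) [Ring R] : Set (Set (ModuleCat.{u} R)) :=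
  {C | IsWideSubcategory C ∧ C.Nonempty ∧ C ⊆ finPresModules R}

/-- The lattice of thick subcategories of small objects of the derived category. -/
def thickLatticeSmall (R : Type u) [Ring R] [HasDerivedCategory.{w} (ModuleCat.{u} R)] :
    Set (Set (DerivedCategory (ModuleCat.{u} R))) :=
  {D | IsThickSubcategory D ∧ ∀ X ∈ D, IsSmallObject X}

/-- `f` is a lattice isomorphism from the lattice of wide subcategories of finitely
presented `R`-modules onto the lattice of thick subcategories of small objects of
`D(R)`: it maps the first lattice into the second, preserves and reflects inclusions,
and is surjective. -/
def fIsLatticeIso (R : Type u) [Ring R] [HasDerivedCategory.{w} (ModuleCat.{u} R)] : Prop :=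
  (∀ C ∈ wideLatticeFP R, fSet C ∈ thickLatticeSmall R) ∧
  (∀ C₁ ∈ wideLatticeFP R, ∀ C₂ ∈ wideLatticeFP R, (fSet C₁ ⊆ fSet C₂ ↔ C₁ ⊆ C₂)) ∧
  (∀ D ∈ thickLatticeSmall R, ∃ C ∈ wideLatticeFP R, fSet C = D)

/-!
Write `Ann X` for the ideal of all `x` annihilating every `Hₙ X`. Thomason's theorem says that a
small `X` lies in a thick subcategory containing the small object `Y` as soon as `Ann Y ≤ √(Ann X)`.
Hence `fSet (gSet D) = D` for every thick `D`, and comparing a module with a Koszul object on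
generators of its annihilator shows that `f` is an isomorphism if and only if every wide subcategory
of finitely presented modules contains `R ⧸ ann M` whenever it contains `M`. If `C` is a wide
subcategory over `R ⧸ a`, this property passes to `C` from the wide subcategory of `R`-modules it
generates, because the members of the latter killed by `a` are just those of `C`: if `E` is wide
among the modules killed by `b`, then the modules `N` with `b • N` and `N ⧸ b • N` in `E` are wide
among the modules killed by `b²`, and iterating this gives a wide class of modules killed by powers
of `b` which contains `E`.

For Thomason's theorem, represent `X` and `Y` by bounded complexes of finite free modules. Let `T`
be the tensor algebra of `End Y` shifted by one, whose differential extends that of `End Y` by the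
supertrace `End Y → R`. In `End X ⊗ T` the element `1` is a boundary: it suffices that for each
prime `p` some scalar outside `p` is a boundary modulo `p`. If some scalar outside `p` is
null-homotopic on `Y`, one of its powers is null-homotopic on `X`; otherwise some even cycle `e` of
`End Y` modulo `p` has supertrace outside `p`, and the corresponding letter of `T` has boundary
`str e + d e`. An element with boundary `1` involves only words of bounded length, so the inclusion
of `X` into the truncation of `X ⊗ T` at that length is null-homotopic and `X` is a retract of a
shift of its cokernel, which is filtered by shifts of `Y`.
-/

/-! ### Differential graded algebras and nilpotence -/

section SmulTop

variable {A M N : Type*} [CommRing A] [AddCommGroup M] [Module A M] [AddCommGroup N] [Module A N]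
  {I : Ideal A}

lemma map_mem_smul_top (f : M →ₗ[A] N) {x : M} (hx : x ∈ I • (⊤ : Submodule A M)) :
    f x ∈ I • (⊤ : Submodule A N) := by
  have h := Submodule.mem_map_of_mem (f := f) hx
  rw [Submodule.map_smul''] at h
  exact Submodule.smul_mono le_rfl le_top h

lemma exists_sub_smul_mem_smul_top {a : A} {x : M}
    (hx : x ∈ (I ⊔ Ideal.span {a}) • (⊤ : Submodule A M)) :
    ∃ v, x - a • v ∈ I • (⊤ : Submodule A M) := by
  rw [Submodule.sup_smul] at hx
  obtain ⟨y, hy, z, hz, rfl⟩ := Submodule.mem_sup.1 hx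
  rw [Submodule.ideal_span_singleton_smul] at hz
  obtain ⟨v, -, rfl⟩ := hz
  exact ⟨v, by simpa using hy⟩

lemma mem_smul_top_of_smul_mem [Module.Free A M] [I.IsPrime] {s : A} (hs : s ∉ I) {x : M}
    (hx : s • x ∈ I • (⊤ : Submodule A M)) : x ∈ I • (⊤ : Submodule A M) := by
  let b := Module.Free.chooseBasis A M
  have hcoord (i) : b.repr x i ∈ I := by
    have h := map_mem_smul_top (b.coord i) hx
    rw [smul_eq_mul, Ideal.mul_top, map_smul, smul_eq_mul] at h
    exact (Ideal.IsPrime.mem_or_mem ‹_› h).resolve_left hs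
  rw [← b.linearCombination_repr x, Finsupp.linearCombination_apply]
  exact Submodule.sum_mem _ fun i _ ↦ Submodule.smul_mem_smul (hcoord i) trivial

end SmulTop

/-- A differential graded algebra `B` over `A` in which only the parity of degrees is recorded:
`σ` acts as `(-1)ⁿ` on elements of degree `n`. -/
structure SkewDifferential (A B : Type*) [CommRing A] [Ring B] [Algebra A B] where
  d : B →ₗ[A] B
  σ : B →ₐ[A] B
  d_mul : ∀ x y, d (x * y) = d x * y + σ x * d y
  d_d : ∀ x, d (d x) = 0
  d_σ : ∀ x, d (σ x) = -σ (d x)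
  σ_σ : ∀ x, σ (σ x) = x

namespace SkewDifferential

section Nilpotence

variable {A B : Type*} [CommRing A] [Ring B] [Algebra A B] (S : SkewDifferential A B)

lemma d_one : S.d 1 = 0 := by simpa using S.d_mul 1 1

/-- The elements of `B` that become boundaries in `B / I B`. -/
def boundariesMod (I : Ideal A) : Submodule A B := LinearMap.range S.d ⊔ I • (⊤ : Submodule A B)

variable {S} {I : Ideal A}

lemma mem_boundariesMod {x : B} :
    x ∈ S.boundariesMod I ↔ ∃ u, x - S.d u ∈ I • (⊤ : Submodule A B) := by
  constructor
  · intro h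
    obtain ⟨_, ⟨u, rfl⟩, z, hz, rfl⟩ := Submodule.mem_sup.1 h
    exact ⟨u, by simpa using hz⟩
  · rintro ⟨u, hu⟩
    exact Submodule.mem_sup.2 ⟨S.d u, ⟨u, rfl⟩, _, hu, by simp⟩

lemma mul_mem_smul_top_left {x : B} (y : B) (hx : x ∈ I • (⊤ : Submodule A B)) :
    y * x ∈ I • (⊤ : Submodule A B) :=
  map_mem_smul_top (LinearMap.mulLeft A y) hx

lemma mul_mem_smul_top_right {x : B} (y : B) (hx : x ∈ I • (⊤ : Submodule A B)) :
    x * y ∈ I • (⊤ : Submodule A B) :=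
  map_mem_smul_top (LinearMap.mulRight A y) hx

lemma exists_mem_boundariesMod_of_isChain {c : Set (Ideal A)} (hc : IsChain (· ≤ ·) c)
    (hne : c.Nonempty) {x : B} (hx : x ∈ S.boundariesMod (sSup c)) :
    ∃ I ∈ c, x ∈ S.boundariesMod I := by
  obtain ⟨u, hu⟩ := mem_boundariesMod.1 hx
  have hsup : sSup c • (⊤ : Submodule A B) =
      sSup ((fun I : Ideal A ↦ I • (⊤ : Submodule A B)) '' c) := by
    simp_rw [sSup_image, sSup_eq_iSup, Submodule.iSup_smul]
  have hdir : DirectedOn (· ≤ ·) ((fun I : Ideal A ↦ I • (⊤ : Submodule A B)) '' c) :=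
    hc.directedOn.mono_comp (rb := (· ≤ ·)) fun _ _ h ↦ Submodule.smul_mono_left h
  rw [hsup, Submodule.mem_sSup_of_directed (hne.image _) hdir] at hu
  obtain ⟨_, ⟨I, hI, rfl⟩, hu⟩ := hu
  exact ⟨I, hI, mem_boundariesMod.2 ⟨u, hu⟩⟩

lemma exists_maximal_one_notMem_boundariesMod (h : ∀ t, S.d t ≠ 1) :
    ∃ p : Ideal A, Maximal (fun I ↦ (1 : B) ∉ S.boundariesMod I) p := by
  have hbot : (1 : B) ∉ S.boundariesMod ⊥ := fun h1 ↦ by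
    obtain ⟨u, hu⟩ := mem_boundariesMod.1 h1
    rw [Submodule.bot_smul, Submodule.mem_bot, sub_eq_zero] at hu
    exact h u hu.symm
  obtain ⟨p, -, hp⟩ := zorn_le_nonempty₀ {I : Ideal A | (1 : B) ∉ S.boundariesMod I}
    (fun c hc hchain y hy ↦ ⟨sSup c, fun hmem ↦
      have ⟨_, hI, h1⟩ := exists_mem_boundariesMod_of_isChain hchain ⟨y, hy⟩ hmem
      hc hI h1, fun _ ↦ le_sSup⟩) ⊥ hbot
  exact ⟨p, hp⟩

lemma exists_of_maximal {p : Ideal A} (hp : Maximal (fun I ↦ (1 : B) ∉ S.boundariesMod I) p)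
    {x : A} (hx : x ∉ p) : ∃ u v, (1 : B) - S.d u - x • v ∈ p • (⊤ : Submodule A B) := by
  have h1 : (1 : B) ∈ S.boundariesMod (p ⊔ Ideal.span {x}) := by
    by_contra hcon
    exact hx (hp.le_of_ge hcon le_sup_left
      (Ideal.mem_sup_right (Ideal.mem_span_singleton_self x)))
  obtain ⟨u, hu⟩ := mem_boundariesMod.1 h1
  obtain ⟨v, hv⟩ := exists_sub_smul_mem_smul_top hu
  exact ⟨u, v, hv⟩

lemma isPrime_of_maximal {p : Ideal A}
    (hp : Maximal (fun I ↦ (1 : B) ∉ S.boundariesMod I) p) : p.IsPrime := by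
  refine ⟨?_, fun {x y} hxy ↦ ?_⟩
  · rintro rfl
    exact hp.prop (mem_boundariesMod.2 ⟨0, by simp⟩)
  · by_contra! hcon
    obtain ⟨u, v, huv⟩ := exists_of_maximal hp hcon.1
    obtain ⟨u', v', huv'⟩ := exists_of_maximal hp hcon.2
    refine hp.prop (mem_boundariesMod.2 ⟨u + u' - u * S.d u', ?_⟩)
    have key : (1 : B) - S.d (u + u' - u * S.d u') =
        (1 - S.d u - x • v) * (1 - S.d u') + (x • v) * (1 - S.d u' - y • v') +
          (x * y) • (v * v') := by
      rw [map_sub, map_add, S.d_mul, S.d_d]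
      simp only [sub_mul, mul_sub, mul_one, one_mul, mul_zero, add_zero, smul_mul_assoc,
        mul_smul_comm, smul_smul, mul_comm y x]
      abel
    rw [key]
    exact add_mem (add_mem (mul_mem_smul_top_right _ huv) (mul_mem_smul_top_left _ huv'))
      (Submodule.smul_mem_smul hxy trivial)

theorem exists_d_eq_one [Module.Free A B]
    (h : ∀ p : Ideal A, p.IsPrime → ∃ s ∉ p, algebraMap A B s ∈ S.boundariesMod p) :
    ∃ t, S.d t = 1 := by
  by_contra! hne
  obtain ⟨p, hp⟩ := exists_maximal_one_notMem_boundariesMod hne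
  have hprime := isPrime_of_maximal hp
  obtain ⟨s, hs, hs1⟩ := h p hprime
  obtain ⟨u, hu⟩ := mem_boundariesMod.1 hs1
  obtain ⟨v, w, hvw⟩ := exists_of_maximal hp hs
  have hdw : S.d w ∈ p • (⊤ : Submodule A B) := by
    apply mem_smul_top_of_smul_mem hs
    have hd := map_mem_smul_top S.d hvw
    rw [map_sub, map_sub, S.d_one, S.d_d, map_smul, sub_zero, zero_sub] at hd
    simpa using neg_mem hd
  refine hp.prop (mem_boundariesMod.2 ⟨v + S.σ w * u, ?_⟩)
  have key : (1 : B) - S.d (v + S.σ w * u) =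
      (1 - S.d v - s • w) + w * (algebraMap A B s - S.d u) + S.σ (S.d w) * u := by
    rw [map_add, S.d_mul, S.d_σ, S.σ_σ, mul_sub, ← Algebra.commutes, ← Algebra.smul_def, neg_mul]
    abel
  rw [key]
  exact add_mem (add_mem hvw (mul_mem_smul_top_left _ hu))
    (mul_mem_smul_top_right _ (map_mem_smul_top S.σ.toLinearMap hdw))

end Nilpotence

section Constructions

variable {A B : Type*} [CommRing A] [Ring B] [Algebra A B]

/-- The zero differential on an algebra concentrated in degree zero. -/
def zero (A B : Type*) [CommRing A] [Ring B] [Algebra A B] : SkewDifferential A B where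
  d := 0
  σ := AlgHom.id A B
  d_mul := by simp
  d_d := by simp
  d_σ := by simp
  σ_σ := by simp

/-- The entrywise differential on square matrices. -/
noncomputable def matrix (S : SkewDifferential A B) (κ : Type*) [Fintype κ] [DecidableEq κ] :
    SkewDifferential A (Matrix κ κ B) where
  d := S.d.mapMatrix
  σ := S.σ.mapMatrix
  d_mul m n := by
    ext i j
    simp [Matrix.mul_apply, S.d_mul, Finset.sum_add_distrib]
  d_d m := by ext; simp [S.d_d]
  d_σ m := by ext; simp [S.d_σ]
  σ_σ m := by ext; simp [S.σ_σ]

/-- If `s` plays the role of the sign operator and `c` of the differential of a complex `W`, both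
constant, then twisting `S` by `(s, c)` gives `S ⊗ End W`, where `d x = s S.d(x) + [c, x]`. -/
noncomputable def twist (S : SkewDifferential A B) (s c : B) (hs : s * s = 1)
    (hsc : s * c = -(c * s)) (hcc : c * c = 0) (ds : S.d s = 0) (dc : S.d c = 0)
    (σs : S.σ s = s) (σc : S.σ c = c) : SkewDifferential A B :=
  have hs' (x : B) : s * (s * x) = x := by rw [← mul_assoc, hs, one_mul]
  have hsc' (x : B) : s * (c * x) = -(c * (s * x)) := by rw [← mul_assoc, hsc, neg_mul, mul_assoc]
  have hcc' (x : B) : c * (c * x) = 0 := by rw [← mul_assoc, hcc, zero_mul]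
  { d := LinearMap.mulLeft A s ∘ₗ S.d + LinearMap.mulLeft A c -
      LinearMap.mulLeft A s ∘ₗ LinearMap.mulRight A (s * c) ∘ₗ S.σ.toLinearMap
    σ := AlgHom.ofLinearMap
      (LinearMap.mulLeft A s ∘ₗ LinearMap.mulRight A s ∘ₗ S.σ.toLinearMap)
      (by simp [hs]) (fun x y ↦ by simp [mul_assoc, hs'])
    d_mul := fun x y ↦ by
      simp only [LinearMap.sub_apply, LinearMap.add_apply, LinearMap.comp_apply,
        LinearMap.mulLeft_apply, LinearMap.mulRight_apply, AlgHom.toLinearMap_apply,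
        AlgHom.ofLinearMap_apply, S.d_mul, map_mul, mul_add, mul_sub, sub_mul, add_mul, mul_assoc,
        hs']
      abel
    d_d := fun x ↦ by
      simp only [LinearMap.sub_apply, LinearMap.add_apply, LinearMap.coe_comp,
        Function.comp_apply, LinearMap.mulLeft_apply, LinearMap.mulRight_apply,
        AlgHom.coe_toLinearMap, S.d_mul, S.d_d, S.d_σ, S.σ_σ, ds, dc, σs, σc, hs, hs', hsc, hsc',
        hcc, hcc', map_add, map_mul, mul_assoc, mul_neg, neg_mul, mul_zero,
        zero_mul, mul_one, add_zero, zero_add, neg_zero, neg_neg, sub_neg_eq_add]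
      abel
    d_σ := fun x ↦ by
      simp only [LinearMap.sub_apply, LinearMap.add_apply, LinearMap.coe_comp,
        Function.comp_apply, LinearMap.mulLeft_apply, LinearMap.mulRight_apply,
        AlgHom.coe_toLinearMap, AlgHom.ofLinearMap_apply, S.d_mul, S.d_σ, S.σ_σ, ds, σs, σc, hs,
        hs', hsc, hsc', map_add, map_mul, mul_assoc, mul_neg, neg_mul, mul_zero,
        zero_mul, mul_one, add_zero, zero_add, neg_neg, neg_add_rev, sub_neg_eq_add]
      abel
    σ_σ := fun x ↦ by simp [S.σ_σ, σs, mul_assoc, hs, hs'] }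

end Constructions

end SkewDifferential

/-! ### Complexes in matrix form and their endomorphism algebras -/

/-- The sign `(-1)ⁿ` as an element of the ring `A`. -/
def koszulSign (A : Type*) [Ring A] (n : ℤ) : A := (n.negOnePow : ℤ)

section KoszulSign

variable {A : Type*} [Ring A]

@[simp]
lemma koszulSign_zero : koszulSign A 0 = 1 := by simp [koszulSign]

lemma koszulSign_add (m n : ℤ) : koszulSign A (m + n) = koszulSign A m * koszulSign A n := by
  rw [koszulSign, Int.negOnePow_add, Units.val_mul, Int.cast_mul, koszulSign, koszulSign]

lemma koszulSign_succ (n : ℤ) : koszulSign A (n + 1) = -koszulSign A n := by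
  rw [koszulSign, Int.negOnePow_succ, Units.val_neg, Int.cast_neg, koszulSign]

@[simp]
lemma koszulSign_mul_self (n : ℤ) : koszulSign A n * koszulSign A n = 1 := by
  rw [koszulSign, ← Int.cast_mul, ← Units.val_mul, Int.units_mul_self, Units.val_one, Int.cast_one]

end KoszulSign

/-- A finite complex of free `A`-modules with differential `diff` of degree `1`, given in a
homogeneous basis indexed by `ι`. -/
structure MatrixComplex (A ι : Type*) [CommRing A] [Fintype ι] where
  deg : ι → ℤ
  diff : Matrix ι ι A
  deg_eq : ∀ i j, diff i j ≠ 0 → deg i = deg j + 1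
  diff_mul_diff : diff * diff = 0

namespace MatrixComplex

variable {A ι : Type*} [CommRing A] [Fintype ι] (V : MatrixComplex A ι)

section HomogeneousPart

variable {κ : Type*} [Fintype κ] (W : MatrixComplex A κ)

/-- The entries of `m` that raise degrees by exactly `n`. -/
def homogeneousPart (n : ℤ) (m : Matrix ι κ A) : Matrix ι κ A :=
  .of fun i j ↦ if V.deg i = W.deg j + n then m i j else 0

lemma homogeneousPart_add (n : ℤ) (m m' : Matrix ι κ A) :
    V.homogeneousPart W n (m + m') = V.homogeneousPart W n m + V.homogeneousPart W n m' := by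
  ext i j
  simp [homogeneousPart, ite_add_ite]

lemma homogeneousPart_sub (n : ℤ) (m m' : Matrix ι κ A) :
    V.homogeneousPart W n (m - m') = V.homogeneousPart W n m - V.homogeneousPart W n m' := by
  ext i j
  simp [homogeneousPart, ite_sub_ite]

lemma homogeneousPart_of_deg_eq {n : ℤ} {m : Matrix ι κ A}
    (hm : ∀ i j, m i j ≠ 0 → V.deg i = W.deg j + n) : V.homogeneousPart W n m = m := by
  ext i j
  simp only [homogeneousPart, Matrix.of_apply, ite_eq_left_iff]
  exact fun hij ↦ (not_not.1 (mt (hm i j) hij)).symm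

lemma homogeneousPart_zero_smul_one [DecidableEq ι] (x : A) :
    V.homogeneousPart V 0 (x • 1) = x • 1 := by
  ext i j
  by_cases h : i = j <;> simp [homogeneousPart, h]

lemma diff_mul_homogeneousPart (n : ℤ) (m : Matrix ι κ A) :
    V.diff * V.homogeneousPart W n m = V.homogeneousPart W (n + 1) (V.diff * m) := by
  ext i j
  have hterm (k) : V.diff i k * (if V.deg k = W.deg j + n then m k j else 0) =
      if V.deg i = W.deg j + (n + 1) then V.diff i k * m k j else 0 := by
    by_cases hk : V.diff i k = 0
    · simp [hk]
    · simp [V.deg_eq i k hk, ← add_assoc]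
  simp only [homogeneousPart, Matrix.mul_apply, Matrix.of_apply, hterm]
  split_ifs <;> simp

lemma homogeneousPart_mul_diff (n : ℤ) (m : Matrix ι κ A) :
    V.homogeneousPart W n m * W.diff = V.homogeneousPart W (n + 1) (m * W.diff) := by
  ext i j
  have hterm (k) : (if V.deg i = W.deg k + n then m i k else 0) * W.diff k j =
      if V.deg i = W.deg j + (n + 1) then m i k * W.diff k j else 0 := by
    by_cases hk : W.diff k j = 0
    · simp [hk]
    · simp [W.deg_eq k j hk, add_assoc, add_comm 1 n]
  simp only [homogeneousPart, Matrix.mul_apply, Matrix.of_apply, hterm]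
  split_ifs <;> simp

/-- The operator acting as `(-1)ⁿ` in degree `n`. -/
def sign [DecidableEq ι] : Matrix ι ι A := .diagonal fun i ↦ koszulSign A (V.deg i)

lemma sign_mul_sign [DecidableEq ι] : V.sign * V.sign = 1 := by
  simp [sign, Matrix.diagonal_mul_diagonal]

lemma sign_mul_homogeneousPart [DecidableEq ι] [DecidableEq κ] (n : ℤ) (m : Matrix ι κ A) :
    V.sign * V.homogeneousPart W n m = koszulSign A n • (V.homogeneousPart W n m * W.sign) := by
  ext i j
  simp only [sign, homogeneousPart, Matrix.diagonal_mul, Matrix.mul_diagonal, Matrix.of_apply,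
    Matrix.smul_apply, smul_eq_mul]
  split_ifs with h
  · rw [h, koszulSign_add]
    ring
  · simp

lemma homogeneousPart_sign_mul_mul_sign [DecidableEq ι] [DecidableEq κ] (n : ℤ)
    (m : Matrix ι κ A) : V.homogeneousPart W n (V.sign * m * W.sign) =
      koszulSign A n • V.homogeneousPart W n m := by
  ext i j
  simp only [sign, homogeneousPart, Matrix.diagonal_mul, Matrix.mul_diagonal, Matrix.of_apply,
    Matrix.smul_apply, smul_eq_mul]
  split_ifs with h
  · rw [h, koszulSign_add]
    linear_combination koszulSign A n * m i j * koszulSign_mul_self (A := A) (W.deg j)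
  · simp

lemma sign_mul_diff [DecidableEq ι] : V.sign * V.diff = -(V.diff * V.sign) := by
  have h := V.sign_mul_homogeneousPart V 1 V.diff
  rw [V.homogeneousPart_of_deg_eq V V.deg_eq, ← zero_add 1, koszulSign_succ] at h
  simpa using h

end HomogeneousPart

end MatrixComplex

namespace SkewDifferential

variable {A B κ : Type*} [CommRing A] [Ring B] [Algebra A B]

lemma map_algebraMap_map_d (S : SkewDifferential A B) (m : Matrix κ κ A) :
    (m.map (algebraMap A B)).map S.d = 0 := by
  ext i j
  simp [Algebra.algebraMap_eq_smul_one, S.d_one]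

lemma map_algebraMap_map_σ (S : SkewDifferential A B) (m : Matrix κ κ A) :
    (m.map (algebraMap A B)).map S.σ = m.map (algebraMap A B) := by
  ext i j
  simp

variable [Fintype κ] [DecidableEq κ]

/-- The differential graded algebra `B ⊗ End W` of square matrices over `B`. -/
noncomputable def tensorEnd (S : SkewDifferential A B) (W : MatrixComplex A κ) :
    SkewDifferential A (Matrix κ κ B) :=
  (S.matrix κ).twist (W.sign.map (algebraMap A B)) (W.diff.map (algebraMap A B))
    (by rw [← Matrix.map_mul, W.sign_mul_sign, Matrix.map_one _ (map_zero _) (map_one _)])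
    (by rw [← Matrix.map_mul, W.sign_mul_diff, Matrix.map_neg _ (map_neg _), Matrix.map_mul])
    (by rw [← Matrix.map_mul, W.diff_mul_diff, Matrix.map_zero _ (map_zero _)])
    (S.map_algebraMap_map_d _) (S.map_algebraMap_map_d _)
    (S.map_algebraMap_map_σ _) (S.map_algebraMap_map_σ _)

lemma tensorEnd_d (S : SkewDifferential A B) (W : MatrixComplex A κ) (m : Matrix κ κ B) :
    (S.tensorEnd W).d m = W.sign.map (algebraMap A B) * m.map S.d +
      W.diff.map (algebraMap A B) * m -
      W.sign.map (algebraMap A B) * (m.map S.σ * (W.sign.map (algebraMap A B) *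
        W.diff.map (algebraMap A B))) :=
  rfl

section TensorAlgebra

variable (S : SkewDifferential A B) (ε : B →ₗ[A] A)

/-- The sign automorphism of the tensor algebra on the shift of `B`. -/
noncomputable def tensorAlgebraσ : TensorAlgebra A B →ₐ[A] TensorAlgebra A B :=
  TensorAlgebra.lift A (-(TensorAlgebra.ι A ∘ₗ S.σ.toLinearMap))

@[simp]
lemma tensorAlgebraσ_ι (e : B) :
    S.tensorAlgebraσ (TensorAlgebra.ι A e) = -TensorAlgebra.ι A (S.σ e) := by
  simp [tensorAlgebraσ]

/-- A skew derivation `d` is an algebra homomorphism `x ↦ !![σ x, d x; 0, x]`; this is the one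
with `d e = ε e + S.d e` on generators. -/
noncomputable def tensorAlgebraAux :
    TensorAlgebra A B →ₐ[A] Matrix (Fin 2) (Fin 2) (TensorAlgebra A B) :=
  TensorAlgebra.lift A
    { toFun e := !![-TensorAlgebra.ι A (S.σ e),
        algebraMap A _ (ε e) + TensorAlgebra.ι A (S.d e); 0, TensorAlgebra.ι A e]
      map_add' x y := by ext i j; fin_cases i <;> fin_cases j <;> simp <;> abel
      map_smul' r x := by
        ext i j; fin_cases i <;> fin_cases j <;> simp [Algebra.algebraMap_eq_smul_one, mul_smul] }

lemma tensorAlgebraAux_apply (x : TensorAlgebra A B) :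
    S.tensorAlgebraAux ε x = !![S.tensorAlgebraσ x, S.tensorAlgebraAux ε x 0 1; 0, x] := by
  induction x using TensorAlgebra.induction with
  | algebraMap r =>
    ext i j; fin_cases i <;> fin_cases j <;> simp [Matrix.algebraMap_matrix_apply]
  | ι e => simp [tensorAlgebraAux]
  | mul x y hx hy =>
    rw [map_mul, hx, hy]
    simp
  | add x y hx hy =>
    rw [map_add, hx, hy]
    simp

/-- The differential of the tensor algebra on the shift of `B`, extending `ε + S.d`. -/
noncomputable def tensorAlgebrad : TensorAlgebra A B →ₗ[A] TensorAlgebra A B where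
  toFun x := S.tensorAlgebraAux ε x 0 1
  map_add' := by simp
  map_smul' := by simp

@[simp]
lemma tensorAlgebrad_ι (e : B) :
    S.tensorAlgebrad ε (TensorAlgebra.ι A e) =
      algebraMap A _ (ε e) + TensorAlgebra.ι A (S.d e) := by
  simp [tensorAlgebrad, tensorAlgebraAux]

@[simp]
lemma tensorAlgebrad_algebraMap (r : A) : S.tensorAlgebrad ε (algebraMap A _ r) = 0 := by
  simp [tensorAlgebrad, Matrix.algebraMap_matrix_apply]

@[simp]
lemma tensorAlgebrad_one : S.tensorAlgebrad ε 1 = 0 := by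
  rw [← map_one (algebraMap A _), tensorAlgebrad_algebraMap]

lemma tensorAlgebrad_mul (x y : TensorAlgebra A B) :
    S.tensorAlgebrad ε (x * y) =
      S.tensorAlgebrad ε x * y + S.tensorAlgebraσ x * S.tensorAlgebrad ε y := by
  simp only [tensorAlgebrad, LinearMap.coe_mk, AddHom.coe_mk, map_mul]
  rw [S.tensorAlgebraAux_apply ε x, S.tensorAlgebraAux_apply ε y]
  simp [add_comm]

/-- The tensor algebra on the shift of `B`, with differential extending `ε + S.d`. It makes the
class of `ε : B → A` a boundary: it models the colimit of the iterated cofibres of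
`ε`. -/
noncomputable def tensorAlgebra (hd : ∀ e, ε (S.d e) = 0) (hσ : ∀ e, ε (S.σ e) = ε e) :
    SkewDifferential A (TensorAlgebra A B) :=
  have σ_σ (x : TensorAlgebra A B) : S.tensorAlgebraσ (S.tensorAlgebraσ x) = x := by
    induction x using TensorAlgebra.induction with
    | algebraMap r => simp
    | ι e => simp [S.σ_σ]
    | mul x y hx hy => simp [hx, hy]
    | add x y hx hy => simp [hx, hy]
  have d_σ (x : TensorAlgebra A B) :
      S.tensorAlgebrad ε (S.tensorAlgebraσ x) = -S.tensorAlgebraσ (S.tensorAlgebrad ε x) := by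
    induction x using TensorAlgebra.induction with
    | algebraMap r => simp
    | ι e => simp [hσ, S.d_σ, add_comm]
    | mul x y hx hy => simp [tensorAlgebrad_mul, hx, hy, σ_σ, add_comm]
    | add x y hx hy => simp [hx, hy, add_comm]
  { d := S.tensorAlgebrad ε
    σ := S.tensorAlgebraσ
    d_mul := S.tensorAlgebrad_mul ε
    d_σ
    σ_σ
    d_d := fun x ↦ by
      induction x using TensorAlgebra.induction with
      | algebraMap r => simp
      | ι e => simp [hd, S.d_d]
      | mul x y hx hy => simp [tensorAlgebrad_mul, hx, hy, d_σ]
      | add x y hx hy => simp [hx, hy] }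

end TensorAlgebra

end SkewDifferential

namespace MatrixComplex

variable {A ι : Type*} [CommRing A] [Fintype ι] [DecidableEq ι] (V : MatrixComplex A ι)

/-- The differential graded algebra `End V`. -/
noncomputable def endAlgebra : SkewDifferential A (Matrix ι ι A) :=
  (SkewDifferential.zero A A).tensorEnd V

lemma endAlgebra_d (m : Matrix ι ι A) :
    V.endAlgebra.d m = V.diff * m - V.sign * (m * (V.sign * V.diff)) := by
  have hmap (m : Matrix ι ι A) : m.map (SkewDifferential.zero A A).d = 0 := rfl
  have hid (m : Matrix ι ι A) : m.map (SkewDifferential.zero A A).σ = m := rfl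
  have halg (m : Matrix ι ι A) : m.map (algebraMap A A) = m := rfl
  rw [endAlgebra, SkewDifferential.tensorEnd_d, hmap, hid, halg, halg, mul_zero, zero_add]

lemma endAlgebra_σ (m : Matrix ι ι A) : V.endAlgebra.σ m = V.sign * (m * V.sign) := rfl

/-- The supertrace of an endomorphism of `V`. -/
noncomputable def supertrace : Matrix ι ι A →ₗ[A] A :=
  Matrix.traceLinearMap ι A A ∘ₗ LinearMap.mulLeft A V.sign

lemma supertrace_apply (m : Matrix ι ι A) : V.supertrace m = (V.sign * m).trace := rfl

lemma supertrace_d (m : Matrix ι ι A) : V.supertrace (V.endAlgebra.d m) = 0 := by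
  rw [endAlgebra_d, supertrace_apply, mul_sub, ← mul_assoc V.sign V.sign, sign_mul_sign, one_mul,
    Matrix.trace_sub, ← mul_assoc V.sign, Matrix.trace_mul_comm, sub_self]

lemma supertrace_σ (m : Matrix ι ι A) : V.supertrace (V.endAlgebra.σ m) = V.supertrace m := by
  rw [endAlgebra_σ, supertrace_apply, ← mul_assoc, sign_mul_sign, one_mul, Matrix.trace_mul_comm,
    supertrace_apply]

/-- The tensor algebra on the shift of `End V`. -/
noncomputable def endTensorAlgebra : SkewDifferential A (TensorAlgebra A (Matrix ι ι A)) :=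
  V.endAlgebra.tensorAlgebra V.supertrace V.supertrace_d V.supertrace_σ

end MatrixComplex

section LinearAlgebra

open Matrix

lemma exists_contraction_of_range_eq_ker {K M : Type*} [Field K] [AddCommGroup M] [Module K M]
    (f : M →ₗ[K] M) (hf : f.range = f.ker) : ∃ h : M →ₗ[K] M, f ∘ₗ h + h ∘ₗ f = .id := by
  obtain ⟨g₀, hg₀⟩ := f.rangeRestrict.exists_rightInverse_of_surjective f.range_rangeRestrict
  obtain ⟨g, hg⟩ := LinearMap.exists_extend g₀
  have hfg (x) (hx : x ∈ f.range) : f (g x) = x := by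
    have h := congr(($hg₀ ⟨x, hx⟩ : M))
    rwa [← hg] at h
  have hff (x) : f (f x) = 0 := LinearMap.mem_ker.1 (hf ▸ f.mem_range_self x)
  refine ⟨g - g ∘ₗ g ∘ₗ f, LinearMap.ext fun x ↦ ?_⟩
  have hx : x - g (f x) ∈ f.range := by
    rw [hf, LinearMap.mem_ker, map_sub, hfg _ (f.mem_range_self x), sub_self]
  have h := hfg _ hx
  rw [map_sub] at h
  simp [hff, h]

variable {ι : Type*} [Fintype ι] [DecidableEq ι]

lemma exists_contraction_or_cycle_cocycle {K : Type*} [Field K] {d : Matrix ι ι K}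
    (hd : d * d = 0) : (∃ h, d * h + h * d = 1) ∨
      ∃ z ζ : ι → K, d *ᵥ z = 0 ∧ ζ ᵥ* d = 0 ∧ ζ ⬝ᵥ z ≠ 0 := by
  have hle : d.toLin'.range ≤ d.toLin'.ker := by
    rintro _ ⟨x, rfl⟩
    simp [hd]
  rcases hle.eq_or_lt with heq | hlt
  · obtain ⟨h, hh⟩ := exists_contraction_of_range_eq_ker d.toLin' heq
    refine .inl ⟨LinearMap.toMatrix' h, ?_⟩
    have h1 := congr(LinearMap.toMatrix' $hh)
    simpa [LinearMap.toMatrix'_comp] using h1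
  · obtain ⟨z, hz, hz'⟩ := SetLike.exists_of_lt hlt
    obtain ⟨f, hfz, hf⟩ := Submodule.exists_le_ker_of_notMem hz'
    have hζ (w) : (dotProductEquiv K ι).symm f ⬝ᵥ w = f w :=
      congr($((dotProductEquiv K ι).apply_symm_apply f) w)
    refine .inr ⟨z, (dotProductEquiv K ι).symm f, hz, ?_, by rwa [hζ]⟩
    refine dotProduct_eq_zero _ fun w ↦ ?_
    rw [← dotProduct_mulVec, hζ]
    exact hf ⟨w, rfl⟩

variable {A : Type*} [CommRing A] {p : Ideal A} [p.IsPrime]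

lemma exists_notMem_residueField_lift {τ : Type*} [Finite τ] (f : τ → p.ResidueField) :
    ∃ s ∉ p, ∃ F : τ → A, ∀ i, algebraMap A p.ResidueField (F i) = algebraMap A _ s * f i := by
  obtain ⟨⟨b, hb⟩, hbf⟩ := IsLocalization.exist_integer_multiples_of_finite
    (nonZeroDivisors (A ⧸ p)) f
  obtain ⟨s, rfl⟩ := Ideal.Quotient.mk_surjective b
  choose F' hF' using hbf
  choose F hF using fun i ↦ Ideal.Quotient.mk_surjective (F' i)
  refine ⟨s, fun hs ↦ nonZeroDivisors.ne_zero hb (Ideal.Quotient.eq_zero_iff_mem.2 hs), F,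
    fun i ↦ ?_⟩
  rw [IsScalarTower.algebraMap_apply A (A ⧸ p) p.ResidueField (F i),
    IsScalarTower.algebraMap_apply A (A ⧸ p) p.ResidueField s, Ideal.Quotient.algebraMap_eq, hF,
    hF', Algebra.smul_def]

lemma exists_contraction_det_sq {d h : Matrix ι ι A} (hd : d * d = 0) :
    ∃ h', d * h' + h' * d = (d * h + h * d).det ^ 2 • (1 : Matrix ι ι A) := by
  set u := d * h + h * d with hu
  have hud : u * d = d * u := by
    rw [hu, add_mul, mul_add, mul_assoc h, hd, ← mul_assoc d d, hd, ← mul_assoc]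
    simp
  have hadj : u.det • (u.adjugate * d) = u.det • (d * u.adjugate) := by
    calc u.det • (u.adjugate * d) = u.adjugate * (d * u) * u.adjugate := by
          rw [mul_assoc, mul_assoc, mul_adjugate]
          simp
      _ = u.det • (d * u.adjugate) := by
          rw [← hud, ← mul_assoc, adjugate_mul]
          simp
  refine ⟨u.det • (u.adjugate * h), ?_⟩
  calc d * u.det • (u.adjugate * h) + u.det • (u.adjugate * h) * d
      = u.det • (d * u.adjugate) * h + u.det • (u.adjugate * (h * d)) := by
        simp [mul_assoc]
    _ = u.det • (u.adjugate * u) := by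
        rw [← hadj, hu, mul_add, smul_add, smul_mul_assoc, mul_assoc]
    _ = u.det ^ 2 • (1 : Matrix ι ι A) := by
        rw [adjugate_mul, smul_smul, sq]

lemma exists_cycle_cocycle {d : Matrix ι ι A} (hd : d * d = 0)
    (hp : ∀ x h, d * h + h * d = x • (1 : Matrix ι ι A) → x ∈ p) :
    ∃ z ζ : ι → A, (∀ i, (d *ᵥ z) i ∈ p) ∧ (∀ i, (ζ ᵥ* d) i ∈ p) ∧ ζ ⬝ᵥ z ∉ p := by
  let φ := algebraMap A p.ResidueField
  have hφ (x) : φ x = 0 ↔ x ∈ p := Ideal.algebraMap_residueField_eq_zero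
  have hd' : d.map φ * d.map φ = 0 := by rw [← Matrix.map_mul, hd, Matrix.map_zero _ φ.map_zero]
  rcases exists_contraction_or_cycle_cocycle hd' with ⟨h, hh⟩ | ⟨z, ζ, hz, hζ, hζz⟩
  · obtain ⟨s, hs, H, hH⟩ := exists_notMem_residueField_lift fun i : ι × ι ↦ h i.1 i.2
    let H' : Matrix ι ι A := .of fun i j ↦ H (i, j)
    have hH' : H'.map φ = φ s • h := by ext; simp [H', hH, φ]
    obtain ⟨h', hh'⟩ := exists_contraction_det_sq (h := H') hd
    refine absurd (hp _ _ hh') ?_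
    rw [← hφ, map_pow, RingHom.map_det, map_add, map_mul, map_mul, RingHom.mapMatrix_apply,
      RingHom.mapMatrix_apply, hH']
    have h1 : d.map φ * φ s • h + φ s • h * d.map φ = φ s • (1 : Matrix ι ι p.ResidueField) := by
      rw [← hh]; simp
    rw [h1, det_smul, det_one, mul_one]
    exact pow_ne_zero _ (pow_ne_zero _ (mt (hφ s).1 hs))
  · obtain ⟨s, hs, Z, hZ⟩ := exists_notMem_residueField_lift z
    obtain ⟨t, ht, Y, hY⟩ := exists_notMem_residueField_lift ζ
    have hZ' : φ ∘ Z = φ s • z := by ext; simp [hZ, φ]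
    have hY' : φ ∘ Y = φ t • ζ := by ext; simp [hY, φ]
    refine ⟨Z, Y, fun i ↦ ?_, fun i ↦ ?_, ?_⟩
    · rw [← hφ, RingHom.map_mulVec, hZ', mulVec_smul, hz]
      simp
    · rw [← hφ, RingHom.map_vecMul, hY', smul_vecMul, hζ]
      simp
    · rw [← hφ, RingHom.map_dotProduct, hZ', hY', smul_dotProduct, dotProduct_smul]
      simp [hζz, hφ, hs, ht]

end LinearAlgebra

namespace SkewDifferential

variable {A B κ : Type*} [CommRing A] [Ring B] [Algebra A B] [Fintype κ] [DecidableEq κ]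
  (S : SkewDifferential A B) (W : MatrixComplex A κ)

lemma tensorEnd_d_of_contraction {h : Matrix κ κ A} {x : A}
    (hx : W.diff * h + h * W.diff = x • (1 : Matrix κ κ A)) :
    (S.tensorEnd W).d ((W.homogeneousPart W (-1) h).map (algebraMap A B)) =
      algebraMap A (Matrix κ κ B) x := by
  set g := W.homogeneousPart W (-1) h with hg
  have hpart : W.diff * g + g * W.diff = x • (1 : Matrix κ κ A) := by
    rw [hg, W.diff_mul_homogeneousPart, W.homogeneousPart_mul_diff, ← W.homogeneousPart_add, hx]
    exact W.homogeneousPart_zero_smul_one x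
  have hsign : W.sign * (g * (W.sign * W.diff)) = -(g * W.diff) := by
    have h1 : koszulSign A (-1) = -1 := by simp [koszulSign]
    rw [← mul_assoc, W.sign_mul_homogeneousPart, h1, neg_one_smul, neg_mul, mul_assoc,
      ← mul_assoc W.sign, W.sign_mul_sign, one_mul]
  rw [tensorEnd_d, S.map_algebraMap_map_d, S.map_algebraMap_map_σ, mul_zero, zero_add,
    ← Matrix.map_mul, ← Matrix.map_mul, ← Matrix.map_mul, ← Matrix.map_mul, hsign,
    ← Matrix.map_sub _ (map_sub _), sub_neg_eq_add, hpart]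
  ext i j
  by_cases hij : i = j <;> simp [Matrix.algebraMap_matrix_apply, hij]

lemma tensorEnd_d_scalar_mul_sign {u : B} (hu : S.σ u = -u) :
    (S.tensorEnd W).d (Matrix.scalar κ u * W.sign.map (algebraMap A B)) =
      Matrix.scalar κ (S.d u) := by
  have hcomm (m : Matrix κ κ A) (x : B) (n : Matrix κ κ B) :
      m.map (algebraMap A B) * (Matrix.scalar κ x * n) =
        Matrix.scalar κ x * (m.map (algebraMap A B) * n) := by
    rw [← mul_assoc, ← mul_assoc]
    congr 1
    ext i j
    simp [Algebra.commutes]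
  have hd : (Matrix.scalar κ u * W.sign.map (algebraMap A B)).map S.d =
      Matrix.scalar κ (S.d u) * W.sign.map (algebraMap A B) := by
    ext i j
    simp [Algebra.algebraMap_eq_smul_one]
  have hσ : (Matrix.scalar κ u * W.sign.map (algebraMap A B)).map S.σ =
      Matrix.scalar κ (-u) * W.sign.map (algebraMap A B) := by
    ext i j
    simp [hu]
  have hsign : W.sign.map (algebraMap A B) * W.sign.map (algebraMap A B) = 1 := by
    rw [← Matrix.map_mul, W.sign_mul_sign, Matrix.map_one _ (map_zero _) (map_one _)]
  have hdiff : W.sign.map (algebraMap A B) * W.diff.map (algebraMap A B) =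
      -(W.diff.map (algebraMap A B) * W.sign.map (algebraMap A B)) := by
    rw [← Matrix.map_mul, W.sign_mul_diff, Matrix.map_neg _ (map_neg _), Matrix.map_mul]
  rw [tensorEnd_d, hd, hσ, hcomm, hcomm, mul_assoc, hcomm, hsign, mul_one,
    ← mul_assoc (W.sign.map _) (W.sign.map _), hsign, one_mul, hdiff, map_neg,
    neg_mul, sub_neg_eq_add, mul_neg, add_assoc, add_neg_cancel, add_zero]

end SkewDifferential

namespace MatrixComplex

section Supertrace

variable {A ι κ : Type*} [CommRing A] [Fintype ι] [DecidableEq ι] [Fintype κ] [DecidableEq κ]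
  (V : MatrixComplex A ι) (W : MatrixComplex A κ)

open Matrix

lemma exists_even_supertrace_notMem {p : Ideal A} [p.IsPrime]
    (hp : ∀ x h, V.diff * h + h * V.diff = x • (1 : Matrix ι ι A) → x ∈ p) :
    ∃ e, V.endAlgebra.σ e = e ∧ (∀ i j, V.endAlgebra.d e i j ∈ p) ∧ V.supertrace e ∉ p := by
  obtain ⟨z, ζ, hz, hζ, hζz⟩ := exists_cycle_cocycle V.diff_mul_diff hp
  set m := vecMulVec z ζ with hm
  let e := V.homogeneousPart V 0 (V.sign * m)
  have hσ : V.sign * (e * V.sign) = e := by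
    rw [← mul_assoc, V.sign_mul_homogeneousPart, koszulSign_zero, one_smul, mul_assoc,
      V.sign_mul_sign, mul_one]
  have hd : V.endAlgebra.d e = V.homogeneousPart V 1 (-(V.sign * (V.diff * m + m * V.diff))) := by
    rw [endAlgebra_d, ← mul_assoc e, ← mul_assoc V.sign, hσ, V.diff_mul_homogeneousPart,
      V.homogeneousPart_mul_diff, ← V.homogeneousPart_sub, zero_add, mul_add, ← mul_assoc V.diff,
      ← neg_neg (V.diff * V.sign), ← V.sign_mul_diff, neg_mul, mul_assoc, mul_assoc, neg_add,
      sub_eq_add_neg]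
  have htrace : V.supertrace e = ζ ⬝ᵥ z := by
    have hdiag (i) : (V.sign * e) i i = (V.sign * (V.sign * m)) i i := by
      simp [e, sign, homogeneousPart]
    calc V.supertrace e = (V.sign * (V.sign * m)).trace := Finset.sum_congr rfl fun i _ ↦ hdiag i
      _ = ζ ⬝ᵥ z := by
        rw [← mul_assoc, V.sign_mul_sign, one_mul, trace_vecMulVec, dotProduct_comm]
  refine ⟨e, hσ, fun i j ↦ ?_, by rwa [htrace]⟩
  rw [hd, hm, mul_vecMulVec, vecMulVec_mul]
  simp only [homogeneousPart, of_apply]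
  split_ifs
  · simp only [sign, Matrix.neg_apply, diagonal_mul, Matrix.add_apply, vecMulVec_apply]
    exact neg_mem (p.mul_mem_left _ (add_mem (p.mul_mem_right _ (hz i)) (p.mul_mem_left _ (hζ j))))
  · exact zero_mem _

theorem exists_tensorEnd_d_eq_one
    (hVW : ∀ x h, V.diff * h + h * V.diff = x • (1 : Matrix ι ι A) →
      ∃ m g, W.diff * g + g * W.diff = (x ^ m : A) • (1 : Matrix κ κ A)) :
    ∃ t, (V.endTensorAlgebra.tensorEnd W).d t = 1 := by
  apply SkewDifferential.exists_d_eq_one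
  intro p hp
  by_cases hx : ∃ x h, V.diff * h + h * V.diff = x • (1 : Matrix ι ι A) ∧ x ∉ p
  · obtain ⟨x, h, hx, hxp⟩ := hx
    obtain ⟨m, g, hg⟩ := hVW x h hx
    refine ⟨x ^ m, fun hm ↦ hxp (hp.mem_of_pow_mem _ hm), SkewDifferential.mem_boundariesMod.2
      ⟨(W.homogeneousPart W (-1) g).map (algebraMap A _), ?_⟩⟩
    rw [SkewDifferential.tensorEnd_d_of_contraction _ _ hg, sub_self]
    exact zero_mem _
  · push Not at hx
    obtain ⟨e, hσ, hd, he⟩ := V.exists_even_supertrace_notMem hx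
    let T := V.endTensorAlgebra
    let u := TensorAlgebra.ι A e
    have hu : T.σ u = -u := (V.endAlgebra.tensorAlgebraσ_ι e).trans (by rw [hσ])
    have hdu : T.d u = algebraMap A _ (V.supertrace e) + TensorAlgebra.ι A (V.endAlgebra.d e) :=
      V.endAlgebra.tensorAlgebrad_ι _ e
    have hde : V.endAlgebra.d e ∈ p • (⊤ : Submodule A (Matrix ι ι A)) := by
      rw [matrix_eq_sum_single (V.endAlgebra.d e)]
      refine sum_mem fun i _ ↦ sum_mem fun j _ ↦ ?_
      rw [← mul_one (V.endAlgebra.d e i j), ← smul_eq_mul, ← smul_single]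
      exact Submodule.smul_mem_smul (hd i j) trivial
    refine ⟨V.supertrace e, he, SkewDifferential.mem_boundariesMod.2
      ⟨scalar κ u * W.sign.map (algebraMap A _), ?_⟩⟩
    rw [SkewDifferential.tensorEnd_d_scalar_mul_sign _ _ hu, hdu, map_add]
    have hscalar : scalar κ (algebraMap A (TensorAlgebra A (Matrix ι ι A)) (V.supertrace e)) =
        algebraMap A _ (V.supertrace e) := rfl
    rw [hscalar, sub_add_cancel_left]
    exact neg_mem (map_mem_smul_top
      ((scalarAlgHom κ A).toLinearMap ∘ₗ TensorAlgebra.ι A) hde)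

end Supertrace

section TensorEnd

variable {A ι κ : Type*} [CommRing A] [Fintype ι] [Fintype κ]

lemma diff_self (V : MatrixComplex A ι) (i : ι) : V.diff i i = 0 := by
  by_contra h
  simpa using V.deg_eq i i h

open scoped Kronecker in
/-- The tensor product of two complexes. -/
def tensor [DecidableEq ι] [DecidableEq κ] (V : MatrixComplex A ι) (W : MatrixComplex A κ) :
    MatrixComplex A (ι × κ) where
  deg i := V.deg i.1 + W.deg i.2
  diff := V.diff ⊗ₖ 1 + V.sign ⊗ₖ W.diff
  deg_eq i j h := by
    by_cases hdiff : V.diff i.1 j.1 * (1 : Matrix κ κ A) i.2 j.2 = 0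
    · replace h : V.sign i.1 j.1 * W.diff i.2 j.2 ≠ 0 := by simpa [hdiff] using h
      have h1 : i.1 = j.1 := by
        by_contra hij
        simp [sign, hij] at h
      rw [h1, W.deg_eq _ _ (right_ne_zero_of_mul h), add_assoc]
    · have h2 : i.2 = j.2 := by
        by_contra hij
        simp [hij] at hdiff
      rw [h2, V.deg_eq _ _ (left_ne_zero_of_mul hdiff)]
      ring
  diff_mul_diff := by
    simp only [mul_add, add_mul, ← Matrix.mul_kronecker_mul, diff_mul_diff, sign_mul_diff,
      Matrix.zero_kronecker, Matrix.kronecker_zero, mul_one, one_mul]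
    ext
    simp

/-- The subquotient complex on a set of basis vectors that is convex for the relation
`V.diff i j ≠ 0`. -/
def restrict (V : MatrixComplex A ι) (p : ι → Prop) [Fintype (Subtype p)]
    (hp : ∀ i j k, p i → p k → V.diff i j ≠ 0 → V.diff j k ≠ 0 → p j) :
    MatrixComplex A (Subtype p) where
  deg i := V.deg i
  diff := V.diff.submatrix (↑) (↑)
  deg_eq i j := V.deg_eq i j
  diff_mul_diff := by
    ext i k
    have h := congr($V.diff_mul_diff i k)
    rw [Matrix.mul_apply, Matrix.zero_apply] at h
    rw [Matrix.mul_apply, Matrix.zero_apply, ← h]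
    refine Fintype.sum_of_injective _ Subtype.val_injective _ _ (fun j hj ↦ ?_) fun j ↦ rfl
    by_contra hij
    exact hj ⟨⟨j, hp i j k i.2 k.2 (left_ne_zero_of_mul hij) (right_ne_zero_of_mul hij)⟩, rfl⟩

end TensorEnd

end MatrixComplex

namespace SkewDifferential

variable {A B α : Type*} [CommRing A] [Ring B] [Algebra A B]

/-- The basis `b` consists of homogeneous elements, of degrees given by `deg`. -/
structure IsHomogeneousBasis (S : SkewDifferential A B) (b : Module.Basis α A B)
    (deg : α → ℤ) : Prop where
  deg_eq : ∀ a a', b.repr (S.d (b a)) a' ≠ 0 → deg a' = deg a + 1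
  σ_apply : ∀ a, S.σ (b a) = koszulSign A (deg a) • b a

end SkewDifferential

section WordBasis

variable {A B α : Type*} [CommRing A] [Ring B] [Algebra A B] (b : Module.Basis α A B)

/-- The basis of the tensor algebra consisting of the products of basis vectors. -/
noncomputable def wordBasis : Module.Basis (List α) A (TensorAlgebra A B) :=
  b.tensorAlgebra.reindex FreeMonoid.toList

lemma wordBasis_apply (w : List α) :
    wordBasis b w = (w.map fun a ↦ TensorAlgebra.ι A (b a)).prod := by
  have h : FreeAlgebra.basisFreeMonoid A α (FreeMonoid.ofList w) =
      (w.map (FreeAlgebra.ι A)).prod := by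
    simp [FreeAlgebra.basisFreeMonoid, FreeAlgebra.equivMonoidAlgebraFreeMonoid,
      FreeMonoid.lift_apply]
  calc wordBasis b w = (TensorAlgebra.equivFreeAlgebra b).symm
        (FreeAlgebra.basisFreeMonoid A α (FreeMonoid.ofList w)) := by
        simp [wordBasis, Module.Basis.tensorAlgebra]
    _ = _ := by
        rw [h, map_list_prod, List.map_map]
        congr 2
        ext a
        simp

@[simp]
lemma wordBasis_nil : wordBasis b [] = 1 := by simp [wordBasis_apply]

lemma wordBasis_cons (a : α) (w : List α) :
    wordBasis b (a :: w) = TensorAlgebra.ι A (b a) * wordBasis b w := by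
  simp [wordBasis_apply]

lemma wordBasis_repr_ι_mul_nil (e : B) (x : TensorAlgebra A B) :
    (wordBasis b).repr (TensorAlgebra.ι A e * x) [] = 0 := by
  have h : ((LinearMap.mul A _).compr₂ ((wordBasis b).coord [])) ∘ₗ TensorAlgebra.ι A = 0 :=
    b.ext fun a ↦ (wordBasis b).ext fun w ↦ by simp [← wordBasis_cons]
  exact congr($h e x)

lemma wordBasis_repr_ι_mul_cons (e : B) (x : TensorAlgebra A B) (a : α) (w : List α) :
    (wordBasis b).repr (TensorAlgebra.ι A e * x) (a :: w) =
      b.repr e a * (wordBasis b).repr x w := by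
  have h : ((LinearMap.mul A _).compr₂ ((wordBasis b).coord (a :: w))) ∘ₗ TensorAlgebra.ι A =
      ((LinearMap.mul A A).compl₁₂ (b.coord a) ((wordBasis b).coord w)) :=
    b.ext fun a' ↦ (wordBasis b).ext fun w' ↦ by
      by_cases ha : a' = a <;> by_cases hw : w' = w <;>
        simp [← wordBasis_cons, ha, hw]
  exact congr($h e x)

end WordBasis

namespace SkewDifferential.IsHomogeneousBasis

section WordDegree

variable {A B α : Type*} [CommRing A] [Ring B] [Algebra A B] {S : SkewDifferential A B}
  {b : Module.Basis α A B} {deg : α → ℤ} (hb : S.IsHomogeneousBasis b deg)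
  {ε : B →ₗ[A] A}

include hb

lemma σ_wordBasis (w : List α) : S.tensorAlgebraσ (wordBasis b w) =
    koszulSign A (w.map fun a ↦ deg a - 1).sum • wordBasis b w := by
  induction w with
  | nil => simp
  | cons a w ih =>
    have h : koszulSign A (deg a) = -koszulSign A (deg a - 1) := by
      rw [← koszulSign_succ, sub_add_cancel]
    rw [wordBasis_cons, map_mul, ih, tensorAlgebraσ_ι, hb.σ_apply, h, List.map_cons,
      List.sum_cons, koszulSign_add]
    rw [neg_smul, map_neg, neg_neg, map_smul, smul_mul_smul_comm]

lemma d_wordBasis_cons (a : α) (w : List α) : S.tensorAlgebrad ε (wordBasis b (a :: w)) =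
    ε (b a) • wordBasis b w + TensorAlgebra.ι A (S.d (b a)) * wordBasis b w -
      koszulSign A (deg a) • (TensorAlgebra.ι A (b a) * S.tensorAlgebrad ε (wordBasis b w)) := by
  rw [wordBasis_cons, tensorAlgebrad_mul, tensorAlgebrad_ι, tensorAlgebraσ_ι, hb.σ_apply, add_mul,
    Algebra.algebraMap_eq_smul_one]
  simp [sub_eq_add_neg]

lemma repr_d_wordBasis_cons_nil (a : α) (w : List α) :
    (wordBasis b).repr (S.tensorAlgebrad ε (wordBasis b (a :: w))) [] =
      if w = [] then ε (b a) else 0 := by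
  simp [hb.d_wordBasis_cons, wordBasis_repr_ι_mul_nil, Finsupp.single_apply]

lemma repr_d_wordBasis_cons_cons [DecidableEq α] (a a' : α) (w w' : List α) :
    (wordBasis b).repr (S.tensorAlgebrad ε (wordBasis b (a :: w))) (a' :: w') =
      (if w = a' :: w' then ε (b a) else 0) +
        (if w = w' then b.repr (S.d (b a)) a' else 0) -
        if a = a' then koszulSign A (deg a) *
          (wordBasis b).repr (S.tensorAlgebrad ε (wordBasis b w)) w' else 0 := by
  simp [hb.d_wordBasis_cons, wordBasis_repr_ι_mul_cons, Finsupp.single_apply]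

lemma cases_of_repr_d_wordBasis_ne_zero {a a' : α} {w w' : List α}
    (h : (wordBasis b).repr (S.tensorAlgebrad ε (wordBasis b (a :: w))) (a' :: w') ≠ 0) :
    (ε (b a) ≠ 0 ∧ w = a' :: w') ∨ (b.repr (S.d (b a)) a' ≠ 0 ∧ w = w') ∨
      (a = a' ∧ (wordBasis b).repr (S.tensorAlgebrad ε (wordBasis b w)) w' ≠ 0) := by
  classical
  rw [hb.repr_d_wordBasis_cons_cons] at h
  grind

lemma length_le_of_repr_d_wordBasis_ne_zero {w w' : List α}
    (h : (wordBasis b).repr (S.tensorAlgebrad ε (wordBasis b w)) w' ≠ 0) :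
    w'.length ≤ w.length := by
  induction w generalizing w' with
  | nil => simp at h
  | cons a w ih =>
    cases w' with
    | nil => simp
    | cons a' w' =>
      rcases hb.cases_of_repr_d_wordBasis_ne_zero h with ⟨-, rfl⟩ | ⟨-, rfl⟩ | ⟨-, h⟩
      · simp
      · simp
      · simpa using ih h

lemma sum_deg_eq_of_repr_d_wordBasis_ne_zero (hε : ∀ a, ε (b a) ≠ 0 → deg a = 0) {w w' : List α}
    (h : (wordBasis b).repr (S.tensorAlgebrad ε (wordBasis b w)) w' ≠ 0) :
    (w'.map fun a ↦ deg a - 1).sum = (w.map fun a ↦ deg a - 1).sum + 1 := by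
  induction w generalizing w' with
  | nil => simp at h
  | cons a w ih =>
    cases w' with
    | nil =>
      classical
      rw [hb.repr_d_wordBasis_cons_nil, ite_ne_right_iff] at h
      simp [h.1, hε a h.2]
    | cons a' w' =>
      rcases hb.cases_of_repr_d_wordBasis_ne_zero h with ⟨ha, rfl⟩ | ⟨ha, rfl⟩ | ⟨rfl, h'⟩
      · simp [hε a ha]
      · simp only [hb.deg_eq a a' ha, List.map_cons, List.sum_cons]
        ring
      · simp [ih h', add_assoc]

theorem tensorAlgebra (hε : ∀ a, ε (b a) ≠ 0 → deg a = 0) (hd hσ) :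
    (S.tensorAlgebra ε hd hσ).IsHomogeneousBasis (wordBasis b)
      fun w ↦ (w.map fun a ↦ deg a - 1).sum where
  σ_apply := hb.σ_wordBasis
  deg_eq _ _ := hb.sum_deg_eq_of_repr_d_wordBasis_ne_zero hε

end WordDegree

section Coordinates

open scoped Kronecker
open MatrixComplex

variable {A B α : Type*} [CommRing A] [Ring B] [Algebra A B] {S : SkewDifferential A B}
  {b : Module.Basis α A B} {deg : α → ℤ} {s : Finset α}

lemma sum_repr_mul_repr {x : B} (hx : ∀ a, b.repr x a ≠ 0 → a ∈ s) (f : B →ₗ[A] B) (a' : α) :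
    ∑ a ∈ s.attach, b.repr (f (b a)) a' * b.repr x a = b.repr (f x) a' := by
  have hsupp : (b.repr x).support ⊆ s := fun a ha ↦ hx a (by simpa using ha)
  conv_rhs => rw [← b.linearCombination_repr x, Finsupp.linearCombination_apply,
    Finsupp.sum_of_support_subset _ hsupp _ (by simp)]
  rw [Finset.sum_attach s fun a ↦ b.repr (f (b a)) a' * b.repr x a]
  simp [mul_comm]

/-- The complex spanned by a finite set of homogeneous basis vectors whose span is stable under
the differential. -/
noncomputable def spanComplex (hb : S.IsHomogeneousBasis b deg) (s : Finset α)
    (hs : ∀ a ∈ s, ∀ a', b.repr (S.d (b a)) a' ≠ 0 → a' ∈ s) : MatrixComplex A s where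
  deg a := deg a
  diff := .of fun a' a ↦ b.repr (S.d (b a)) a'
  deg_eq a' a := hb.deg_eq a a'
  diff_mul_diff := by
    ext a' a
    simp [Matrix.mul_apply, sum_repr_mul_repr (hs a a.2), S.d_d]

/-- The coordinates in the basis vectors belonging to `s` of the entries of `m`. -/
noncomputable def coordMatrix {κ : Type*} (b : Module.Basis α A B) (s : Finset α)
    (m : Matrix κ κ B) : Matrix (κ × s) κ A :=
  .of fun i j ↦ b.repr (m i.1 j) i.2

variable {κ : Type*} {hb : S.IsHomogeneousBasis b deg}
  {hs : ∀ a ∈ s, ∀ a', b.repr (S.d (b a)) a' ≠ 0 → a' ∈ s}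

lemma coordMatrix_add (m m' : Matrix κ κ B) :
    coordMatrix b s (m + m') = coordMatrix b s m + coordMatrix b s m' := by
  ext
  simp [coordMatrix]

lemma coordMatrix_sub (m m' : Matrix κ κ B) :
    coordMatrix b s (m - m') = coordMatrix b s m - coordMatrix b s m' := by
  ext
  simp [coordMatrix]

variable [Fintype κ]

lemma coordMatrix_algebraMap_mul [DecidableEq α] (c : Matrix κ κ A) (m : Matrix κ κ B) :
    coordMatrix b s (c.map (algebraMap A B) * m) =
      (c ⊗ₖ (1 : Matrix s s A)) * coordMatrix b s m := by
  ext
  simp [coordMatrix, Matrix.mul_apply, Fintype.sum_prod_type, Matrix.one_apply,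
    ← Algebra.smul_def, Finsupp.finsetSum_apply]

lemma coordMatrix_mul_algebraMap (c : Matrix κ κ A) (m : Matrix κ κ B) :
    coordMatrix b s (m * c.map (algebraMap A B)) = coordMatrix b s m * c := by
  ext
  simp [coordMatrix, Matrix.mul_apply, ← Algebra.commutes, ← Algebra.smul_def,
    Finsupp.finsetSum_apply, mul_comm]

variable [DecidableEq κ]

lemma coordMatrix_map_d {m : Matrix κ κ B} (hm : ∀ i j a, b.repr (m i j) a ≠ 0 → a ∈ s) :
    coordMatrix b s (m.map S.d) =
      ((1 : Matrix κ κ A) ⊗ₖ (hb.spanComplex s hs).diff) * coordMatrix b s m := by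
  ext ⟨i, a'⟩ j
  simp [coordMatrix, spanComplex, Matrix.mul_apply, Fintype.sum_prod_type, Matrix.one_apply,
    sum_repr_mul_repr (hm i j)]

variable [DecidableEq α]

lemma coordMatrix_map_σ {m : Matrix κ κ B} (hm : ∀ i j a, b.repr (m i j) a ≠ 0 → a ∈ s) :
    coordMatrix b s (m.map S.σ) =
      ((1 : Matrix κ κ A) ⊗ₖ (hb.spanComplex s hs).sign) * coordMatrix b s m := by
  ext ⟨i, a'⟩ j
  have h := sum_repr_mul_repr (hm i j) S.σ.toLinearMap a'
  simp only [AlgHom.toLinearMap_apply, hb.σ_apply] at h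
  simp only [coordMatrix, spanComplex, sign, Matrix.map_apply, Matrix.of_apply, Matrix.mul_apply,
    Matrix.kroneckerMap_apply, Matrix.one_apply, Fintype.sum_prod_type, ← h, ite_mul, one_mul,
    zero_mul, Finset.sum_ite_irrel, Finset.sum_const_zero, Finset.sum_ite_eq, Finset.mem_univ,
    ↓reduceIte]
  simp [Matrix.diagonal_apply, Finsupp.single_apply]

lemma coordMatrix_tensorEnd_d (W : MatrixComplex A κ) {m : Matrix κ κ B}
    (hm : ∀ i j a, b.repr (m i j) a ≠ 0 → a ∈ s) :
    coordMatrix b s ((S.tensorEnd W).d m) =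
      (W.tensor (hb.spanComplex s hs)).diff * coordMatrix b s m -
        (W.tensor (hb.spanComplex s hs)).sign * coordMatrix b s m * (W.sign * W.diff) := by
  have hsign : (W.tensor (hb.spanComplex s hs)).sign =
      W.sign ⊗ₖ (hb.spanComplex s hs).sign := by
    simp [sign, tensor, Matrix.diagonal_kronecker_diagonal,
      koszulSign_add]
  have hdiff : (W.tensor (hb.spanComplex s hs)).diff =
      W.diff ⊗ₖ 1 + W.sign ⊗ₖ (hb.spanComplex s hs).diff := rfl
  rw [tensorEnd_d, coordMatrix_sub, coordMatrix_add, ← Matrix.map_mul, ← mul_assoc,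
    coordMatrix_mul_algebraMap]
  simp only [coordMatrix_algebraMap_mul, coordMatrix_map_d (hb := hb) (hs := hs) hm,
    coordMatrix_map_σ (hb := hb) (hs := hs) hm, ← Matrix.mul_assoc (_ ⊗ₖ _),
    ← Matrix.mul_kronecker_mul, one_mul, mul_one]
  rw [hdiff, hsign, Matrix.add_mul, add_comm (W.diff ⊗ₖ 1 * _)]

/-- If `1` is a boundary in `B ⊗ End W`, then the inclusion of `W` into `W ⊗ B` is
null-homotopic. -/
theorem exists_homotopy_of_tensorEnd_d_eq_one (W : MatrixComplex A κ) {t : Matrix κ κ B}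
    (ht : (S.tensorEnd W).d t = 1) (hts : ∀ i j a, b.repr (t i j) a ≠ 0 → a ∈ s) {a₀ : α}
    (h₀ : b a₀ = 1) (hdeg : deg a₀ = 0) :
    ∃ g : Matrix (κ × s) κ A,
      (∀ i j, g i j ≠ 0 → (W.tensor (hb.spanComplex s hs)).deg i = W.deg j + -1) ∧
        (W.tensor (hb.spanComplex s hs)).diff * g + g * W.diff =
          .of fun i j ↦ if i.1 = j ∧ i.2 = a₀ then 1 else 0 := by
  let P := W.tensor (hb.spanComplex s hs)
  have hone : coordMatrix b s (1 : Matrix κ κ B) =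
      .of fun i j ↦ if i.1 = j ∧ i.2 = a₀ then 1 else 0 := by
    ext i j
    by_cases hij : i.1 = j
    · simp [coordMatrix, hij, Matrix.one_apply, ← h₀, Finsupp.single_apply, eq_comm]
    · simp [coordMatrix, hij, Matrix.one_apply]
  have hbdry := coordMatrix_tensorEnd_d (hb := hb) (hs := hs) W hts
  rw [ht, hone, ← Matrix.mul_assoc] at hbdry
  have hkoszul : koszulSign A (-1) = -1 := by simp [koszulSign]
  refine ⟨P.homogeneousPart W (-1) (coordMatrix b s t),
    fun i j h ↦ (ite_ne_right_iff.1 h).1, ?_⟩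
  have hpart := congr(P.homogeneousPart W (-1 + 1) $hbdry)
  rw [homogeneousPart_sub, ← diff_mul_homogeneousPart, ← homogeneousPart_mul_diff,
    homogeneousPart_sign_mul_mul_sign, hkoszul, neg_one_smul, Matrix.neg_mul, sub_neg_eq_add,
    homogeneousPart_of_deg_eq] at hpart
  · exact hpart.symm
  · intro i j hij
    obtain ⟨rfl, hi⟩ : i.1 = j ∧ i.2 = a₀ := (ite_ne_right_iff.1 hij).1
    simp [P, tensor, spanComplex, hi, hdeg]

end Coordinates

end SkewDifferential.IsHomogeneousBasis

namespace MatrixComplex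

open Matrix SkewDifferential.IsHomogeneousBasis

section StdBasis

variable {A ι : Type*} [CommRing A] [Fintype ι]

lemma stdBasis_repr (m : Matrix ι ι A) (a : ι × ι) : (stdBasis A ι ι).repr m a = m a.1 a.2 := by
  classical
  have h : (stdBasis A ι ι).coord a = entryLinearMap A A a.1 a.2 :=
    (stdBasis A ι ι).ext fun a' ↦ by
      obtain ⟨i, j⟩ := a
      obtain ⟨i', j'⟩ := a'
      rw [Module.Basis.coord_apply, Module.Basis.repr_self, stdBasis_eq_single,
        Finsupp.single_apply, entryLinearMap_apply, single_apply]
      simp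
  exact congr($h m)

variable [DecidableEq ι] (V : MatrixComplex A ι)

lemma stdBasis_repr_endAlgebra_d (a a' : ι × ι) :
    (stdBasis A ι ι).repr (V.endAlgebra.d (stdBasis A ι ι a)) a' =
      (if a.2 = a'.2 then V.diff a'.1 a.1 else 0) -
        if a.1 = a'.1 then koszulSign A (V.deg a.1) * (koszulSign A (V.deg a.2) * V.diff a.2 a'.2)
          else 0 := by
  obtain ⟨i, j⟩ := a
  obtain ⟨i', j'⟩ := a'
  rw [stdBasis_repr, stdBasis_eq_single, endAlgebra_d, sign, Matrix.sub_apply, diagonal_mul]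
  congr 1
  · by_cases h : j = j'
    · simp [h]
    · simp [h, mul_single_apply_of_ne _ _ _ _ _ (Ne.symm h)]
  · by_cases h : i = i'
    · simp [h, diagonal_mul]
    · simp [h, single_mul_apply_of_ne _ _ _ _ _ (Ne.symm h)]

lemma isHomogeneousBasis_stdBasis :
    V.endAlgebra.IsHomogeneousBasis (stdBasis A ι ι) fun a ↦ V.deg a.1 - V.deg a.2 where
  deg_eq a a' h := by
    rw [stdBasis_repr_endAlgebra_d] at h
    by_cases h1 : a.2 = a'.2 ∧ V.diff a'.1 a.1 ≠ 0
    · rw [V.deg_eq _ _ h1.2, h1.1]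
      ring
    · have h2 : a.1 = a'.1 ∧ V.diff a.2 a'.2 ≠ 0 := by
        contrapose! h
        grind
      rw [V.deg_eq _ _ h2.2, h2.1]
      ring
  σ_apply a := by
    obtain ⟨i, j⟩ := a
    have hsign : koszulSign A (V.deg i - V.deg j) * koszulSign A (V.deg j) =
        koszulSign A (V.deg i) := by
      rw [← koszulSign_add, sub_add_cancel]
    ext i' j'
    rw [stdBasis_eq_single, endAlgebra_σ, sign, diagonal_mul, mul_diagonal, single_apply,
      Matrix.smul_apply, single_apply]
    split_ifs with h
    · obtain ⟨rfl, rfl⟩ := h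
      rw [← hsign]
      linear_combination koszulSign A (V.deg i - V.deg j) * koszulSign_mul_self (A := A) (V.deg j)
    · simp

lemma deg_eq_of_supertrace_stdBasis_ne_zero (a : ι × ι)
    (ha : V.supertrace (stdBasis A ι ι a) ≠ 0) : V.deg a.1 - V.deg a.2 = 0 := by
  obtain ⟨i, j⟩ := a
  by_cases hij : j = i
  · simp [hij]
  · simp [stdBasis_eq_single, supertrace_apply, sign, trace_mul_single, hij] at ha

end StdBasis

section Words

variable {A ι κ : Type*} [CommRing A] [Fintype ι] [DecidableEq ι] [Fintype κ] [DecidableEq κ]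
  (V : MatrixComplex A ι) (W : MatrixComplex A κ)

/-- The words of length at most `n`, as a finite set. -/
noncomputable def words (α : Type*) [Finite α] (n : ℕ) : Finset (List α) :=
  (List.finite_length_le α n).toFinset

lemma mem_words {α : Type*} [Finite α] {n : ℕ} {w : List α} : w ∈ words α n ↔ w.length ≤ n := by
  simp [words]

/-- The part of `V.endTensorAlgebra` spanned by the words of length at most `n`. -/
noncomputable def wordComplex (n : ℕ) : MatrixComplex A (words (ι × ι) n) :=
  (V.isHomogeneousBasis_stdBasis.tensorAlgebra V.deg_eq_of_supertrace_stdBasis_ne_zero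
    V.supertrace_d V.supertrace_σ).spanComplex (words (ι × ι) n) fun _ hw _ hw' ↦
      mem_words.2 ((V.isHomogeneousBasis_stdBasis.length_le_of_repr_d_wordBasis_ne_zero hw').trans
        (mem_words.1 hw))

theorem exists_homotopy_wordComplex
    (hVW : ∀ x h, V.diff * h + h * V.diff = x • (1 : Matrix ι ι A) →
      ∃ m g, W.diff * g + g * W.diff = (x ^ m : A) • (1 : Matrix κ κ A)) :
    ∃ (n : ℕ) (g : Matrix (κ × words (ι × ι) n) κ A),
      (∀ i j, g i j ≠ 0 → (W.tensor (V.wordComplex n)).deg i = W.deg j + -1) ∧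
        (W.tensor (V.wordComplex n)).diff * g + g * W.diff =
          .of fun i j ↦ if i.1 = j ∧ i.2.1 = [] then 1 else 0 := by
  obtain ⟨t, ht⟩ := V.exists_tensorEnd_d_eq_one W hVW
  let c := wordBasis (stdBasis A ι ι)
  obtain ⟨n, hn⟩ := ((Set.finite_iUnion fun i ↦ Set.finite_iUnion fun j ↦
    Finset.finite_toSet (c.repr (t i j)).support).image List.length).bddAbove
  refine ⟨n, exists_homotopy_of_tensorEnd_d_eq_one W ht (fun i j w hw ↦ ?_)
    (wordBasis_nil _) List.sum_nil⟩
  refine mem_words.2 (hn ⟨w, ?_, rfl⟩)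
  simp only [Set.mem_iUnion]
  exact ⟨i, j, by simpa using hw⟩

end Words

/-! ### The tower of a complex in the derived category -/

section ToComplex

variable {A : Type u} [CommRing A] {ι κ μ : Type} [Fintype ι] [Fintype κ] [Fintype μ]
  (V : MatrixComplex A ι) (W : MatrixComplex A κ) (U : MatrixComplex A μ)

/-- The matrix `m` acts with degree `n` from `V` to `W`. -/
def IsHomogeneous (n : ℤ) (m : Matrix κ ι A) : Prop := ∀ i j, m i j ≠ 0 → W.deg i = V.deg j + n

/-- The component of `m` from degree `k` of `V` to degree `l` of `W`. -/
def component (m : Matrix κ ι A) (k l : ℤ) :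
    ModuleCat.of A ({j // V.deg j = k} → A) ⟶ ModuleCat.of A ({i // W.deg i = l} → A) :=
  ModuleCat.ofHom (m.submatrix Subtype.val Subtype.val).mulVecLin

variable {V W U}

lemma component_comp {n k l : ℤ} {m : Matrix κ ι A} (hm : IsHomogeneous V W n m)
    (m' : Matrix μ κ A) (hl : l = k + n) (l' : ℤ) :
    V.component W m k l ≫ W.component U m' l l' = V.component U (m' * m) k l' := by
  refine ModuleCat.hom_ext ?_
  change (m'.submatrix _ _).mulVecLin ∘ₗ (m.submatrix _ _).mulVecLin = mulVecLin _
  rw [← mulVecLin_mul]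
  congr 1
  ext ⟨i, hi⟩ ⟨j, hj⟩
  refine Fintype.sum_of_injective _ Subtype.val_injective _ _ (fun i' hi' ↦ ?_) fun _ ↦ rfl
  by_contra h
  exact hi' ⟨⟨i', by rw [hm i' j (right_ne_zero_of_mul h), hj, hl]⟩, rfl⟩

lemma component_eq_zero {n k l : ℤ} {m : Matrix κ ι A} (hm : IsHomogeneous V W n m)
    (hl : l ≠ k + n) : V.component W m k l = 0 := by
  have h : m.submatrix (Subtype.val : {i // W.deg i = l} → κ)
      (Subtype.val : {j // V.deg j = k} → ι) = 0 := by
    ext ⟨i, hi⟩ ⟨j, hj⟩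
    by_contra h
    exact hl (by rw [← hi, ← hj, hm i j h])
  refine ModuleCat.hom_ext ?_
  simp [component, h]

lemma component_one [DecidableEq ι] (k : ℤ) : V.component V 1 k k = 𝟙 _ := by
  refine ModuleCat.hom_ext ?_
  simp [component, submatrix_one _ Subtype.val_injective]

lemma component_add (m m' : Matrix κ ι A) (k l : ℤ) :
    V.component W (m + m') k l = V.component W m k l + V.component W m' k l := by
  refine ModuleCat.hom_ext ?_
  simp [component, submatrix_add, mulVecLin_add]

lemma component_zero (k l : ℤ) : V.component W 0 k l = 0 := by
  refine ModuleCat.hom_ext ?_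
  simp [component]

lemma component_units_smul (v : ℤˣ) (m : Matrix κ ι A) (k l : ℤ) :
    V.component W (v • m) k l = v • V.component W m k l := by
  obtain rfl | rfl := Int.units_eq_one_or v
  · simp
  · rw [Units.neg_smul, one_smul, Units.neg_smul, one_smul, eq_neg_iff_add_eq_zero,
      ← component_add, neg_add_cancel, component_zero]

/-- The cochain complex of `A`-modules associated with a complex in matrix form. -/
def toComplex (V : MatrixComplex A ι) : CochainComplex (ModuleCat.{u} A) ℤ where
  X k := ModuleCat.of A ({i // V.deg i = k} → A)
  d := V.component V V.diff
  shape _ _ hkl := component_eq_zero V.deg_eq (Ne.symm hkl)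
  d_comp_d' k l _ hkl _ := by
    rw [component_comp V.deg_eq _ hkl.symm, V.diff_mul_diff, component_zero]

/-- The morphism of cochain complexes given by a matrix of degree `0`. -/
def homMk (m : Matrix κ ι A) (hm : IsHomogeneous V W 0 m) (hd : W.diff * m = m * V.diff) :
    V.toComplex ⟶ W.toComplex where
  f k := V.component W m k k
  comm' k l hkl := by
    change V.component W m k k ≫ W.component W W.diff k l =
      V.component V V.diff k l ≫ V.component W m l l
    rw [component_comp hm _ (add_zero k).symm, component_comp V.deg_eq _ hkl.symm, hd]

/-- The homotopy given by a matrix of degree `-1`. -/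
def homotopyMk {m : Matrix κ ι A} (hm : IsHomogeneous V W 0 m) (hd : W.diff * m = m * V.diff)
    (g : Matrix κ ι A) (hg : IsHomogeneous V W (-1) g) (hgm : W.diff * g + g * V.diff = m) :
    Homotopy (homMk m hm hd) 0 where
  hom := V.component W g
  zero k l hkl := component_eq_zero hg fun h ↦ hkl (by simp [h])
  comm k := by
    have hnext : (ComplexShape.up ℤ).Rel k (k + 1) := rfl
    have hprev : (ComplexShape.up ℤ).Rel (k - 1) k := sub_add_cancel k 1
    rw [dNext_eq (C := V.toComplex) (D := W.toComplex) (V.component W g) hnext,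
      prevD_eq (C := V.toComplex) (D := W.toComplex) (V.component W g) hprev]
    change V.component W m k k = V.component V V.diff k (k + 1) ≫ V.component W g (k + 1) k +
      V.component W g k (k - 1) ≫ W.component W W.diff (k - 1) k + 0
    rw [component_comp V.deg_eq _ rfl, component_comp hg _ (sub_eq_add_neg k 1), ← hgm, add_zero,
      component_add, add_comm]

end ToComplex

section Shift

variable {A : Type u} [CommRing A] {ι κ : Type} [Fintype ι] [DecidableEq ι] [Fintype κ]
  {V : MatrixComplex A ι} {W : MatrixComplex A κ}

/-- The isomorphism of graded pieces given by an invertible matrix of degree `n`. -/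
def componentIso [DecidableEq κ] {n : ℤ} {m : Matrix ι κ A} {m' : Matrix κ ι A}
    (hm : IsHomogeneous W V n m) (hm' : IsHomogeneous V W (-n) m')
    (hm'm : m' * m = 1) (hmm' : m * m' = 1) (k : ℤ) :
    ModuleCat.of A ({j // W.deg j = k} → A) ≅ ModuleCat.of A ({i // V.deg i = k + n} → A) where
  hom := W.component V m k (k + n)
  inv := V.component W m' (k + n) k
  hom_inv_id := by rw [component_comp hm _ rfl, hm'm, component_one]
  inv_hom_id := by
    rw [component_comp hm' _ (add_neg_cancel_right k n).symm, hmm', component_one]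

variable (A)

/-- The matrix of a bijection between bases, multiplied by the sign `v`. -/
def reindexMatrix (e : κ ≃ ι) (v : ℤˣ) : Matrix ι κ A := v • (1 : Matrix ι ι A).submatrix id e

variable {A}

omit [Fintype ι] in
lemma reindexMatrix_mul_reindexMatrix_symm [DecidableEq κ] (e : κ ≃ ι) (v : ℤˣ) :
    reindexMatrix A e v * reindexMatrix A e.symm v = 1 := by
  rw [reindexMatrix, reindexMatrix, Matrix.smul_mul, Matrix.mul_smul, smul_smul,
    Int.units_mul_self, one_smul]
  ext i j
  rw [Matrix.mul_apply, Fintype.sum_eq_single (e.symm i) fun k hk ↦ ?_]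
  · simp [one_apply]
  · rw [submatrix_apply, one_apply_ne fun hik ↦ hk ?_, zero_mul]
    exact e.eq_symm_apply.2 hik.symm

lemma isHomogeneous_reindexMatrix {e : κ ≃ ι} {n : ℤ} (hdeg : ∀ i, V.deg (e i) = W.deg i + n)
    (v : ℤˣ) : IsHomogeneous W V n (reindexMatrix A e v) := fun i j h ↦ by
  rw [← hdeg, show i = e j from of_not_not fun hij ↦ h (by simp [reindexMatrix, hij])]

lemma diff_mul_reindexMatrix {e : κ ≃ ι} {u v v' : ℤˣ}
    (hdiff : ∀ i j, W.diff i j = u • V.diff (e i) (e j)) {w : ℤˣ} (hv : w * v = v' * u) :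
    w • (V.diff * reindexMatrix A e v) = reindexMatrix A e v' * W.diff := by
  have hW : W.diff = u • V.diff.submatrix e e := by
    ext i j
    exact hdiff i j
  have hV : V.diff * (1 : Matrix ι ι A).submatrix id e = V.diff.submatrix id e :=
    (submatrix_mul_equiv V.diff 1 id (Equiv.refl ι) e).trans (by rw [Matrix.mul_one])
  rw [reindexMatrix, reindexMatrix, hW, Matrix.mul_smul, Matrix.smul_mul, Matrix.mul_smul,
    submatrix_mul_equiv, Matrix.one_mul, smul_smul, smul_smul,
    hV, hv]

/-- A reindexing that shifts degrees by `n` and multiplies the differential by the sign `u`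
induces an isomorphism with the shifted complex. -/
noncomputable def isoShift (e : κ ≃ ι) {n : ℤ} (hdeg : ∀ i, V.deg (e i) = W.deg i + n) (u : ℤˣ)
    (hdiff : ∀ i j, W.diff i j = u • V.diff (e i) (e j)) :
    W.toComplex ≅ V.toComplex⟦n⟧ := by
  classical
  refine HomologicalComplex.Hom.isoOfComponents
    (fun k ↦ componentIso (isHomogeneous_reindexMatrix hdeg ((u * n.negOnePow) ^ k))
      (isHomogeneous_reindexMatrix (e := e.symm) (fun i ↦ ?_) ((u * n.negOnePow) ^ k))
      (reindexMatrix_mul_reindexMatrix_symm e.symm _) (reindexMatrix_mul_reindexMatrix_symm e _) k)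
    fun k l hkl ↦ ?_
  · rw [← e.apply_symm_apply i, hdeg, e.symm_apply_apply, add_neg_cancel_right]
  · change W.component V _ k (k + n) ≫ (n.negOnePow • V.component V V.diff (k + n) (l + n)) =
      W.component W W.diff k l ≫ W.component V _ l (l + n)
    rw [← component_units_smul,
      component_comp (isHomogeneous_reindexMatrix hdeg _) _ rfl,
      component_comp W.deg_eq _ hkl.symm, Matrix.smul_mul,
      diff_mul_reindexMatrix hdiff]
    rw [← show k + 1 = l from hkl, _root_.zpow_add_one, mul_assoc, mul_right_comm u,
      Int.units_mul_self, one_mul, mul_comm]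

end Shift

section Restrict

variable (A : Type u) [CommRing A] {ι : Type} [Fintype ι] [DecidableEq ι] (p : ι → Prop)

/-- The inclusion of the span of the basis vectors satisfying `p`. -/
def inclMatrix : Matrix ι (Subtype p) A := (1 : Matrix ι ι A).submatrix id Subtype.val

/-- The projection to the span of the basis vectors satisfying `p`. -/
def projMatrix : Matrix (Subtype p) ι A := (1 : Matrix ι ι A).submatrix Subtype.val id

variable {A}

lemma projMatrix_mul (m : Matrix ι ι A) : projMatrix A p * m = m.submatrix Subtype.val id := by
  rw [projMatrix, ← submatrix_id_id m, ← submatrix_mul _ _ _ _ _ Function.bijective_id, one_mul]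
  rfl

lemma projMatrix_mul_mul_inclMatrix (m : Matrix ι ι A) (q : ι → Prop) :
    projMatrix A p * m * inclMatrix A q = m.submatrix Subtype.val Subtype.val := by
  rw [projMatrix_mul, inclMatrix, ← submatrix_mul _ _ _ _ _ Function.bijective_id, mul_one]

lemma projMatrix_mul_inclMatrix : projMatrix A p * inclMatrix A p = 1 := by
  rw [← Matrix.mul_one (projMatrix A p), projMatrix_mul_mul_inclMatrix,
    submatrix_one _ Subtype.val_injective]

lemma projMatrix_not_mul_inclMatrix : projMatrix A (¬p ·) * inclMatrix A p = 0 := by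
  rw [← Matrix.mul_one (projMatrix A _), projMatrix_mul_mul_inclMatrix]
  ext i j
  exact one_apply_ne fun hij ↦ i.2 (hij ▸ j.2)

lemma inclMatrix_mul_projMatrix_add [DecidablePred p] :
    inclMatrix A p * projMatrix A p + inclMatrix A (¬p ·) * projMatrix A (¬p ·) = 1 := by
  ext i j
  rw [← Matrix.mul_one (1 : Matrix ι ι A), Matrix.mul_apply]
  exact Fintype.sum_subtype_add_sum_subtype p
    fun k ↦ (1 : Matrix ι ι A) i k * (1 : Matrix ι ι A) k j

variable {p} {V : MatrixComplex A ι}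

lemma projMatrix_not_mul_diff_mul_inclMatrix (hp : ∀ i j, p j → V.diff i j ≠ 0 → p i) :
    projMatrix A (¬p ·) * V.diff * inclMatrix A p = 0 := by
  rw [projMatrix_mul_mul_inclMatrix]
  ext i j
  by_contra h
  exact i.2 (hp i j j.2 h)

variable [DecidablePred p]

lemma isHomogeneous_inclMatrix (hp : ∀ i j k, p i → p k → V.diff i j ≠ 0 → V.diff j k ≠ 0 → p j) :
    IsHomogeneous (V.restrict p hp) V 0 (inclMatrix A p) := fun i j h ↦ by
  rw [of_not_not fun hij : ¬i = j.1 ↦ h (one_apply_ne hij), add_zero]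
  rfl

lemma isHomogeneous_projMatrix (hp : ∀ i j k, p i → p k → V.diff i j ≠ 0 → V.diff j k ≠ 0 → p j) :
    IsHomogeneous V (V.restrict p hp) 0 (projMatrix A p) := fun i j h ↦ by
  rw [← of_not_not fun hij : ¬i.1 = j ↦ h (one_apply_ne hij), add_zero]
  rfl

variable (hp : ∀ i j, p j → V.diff i j ≠ 0 → p i)

/-- The subcomplex spanned by the basis vectors satisfying `p`. -/
abbrev sub : MatrixComplex A (Subtype p) := V.restrict p fun _ j k _ hk _ hjk ↦ hp j k hk hjk

/-- The quotient by the subcomplex spanned by the basis vectors satisfying `p`. -/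
abbrev quotient : MatrixComplex A {i // ¬p i} :=
  V.restrict (¬p ·) fun i j _ hi _ hij _ hj ↦ hi (hp i j hj hij)

lemma diff_mul_inclMatrix : V.diff * inclMatrix A p = inclMatrix A p * (sub hp).diff := by
  have hd : (sub hp).diff = projMatrix A p * (V.diff * inclMatrix A p) := by
    rw [← Matrix.mul_assoc, projMatrix_mul_mul_inclMatrix]
    rfl
  rw [hd, ← Matrix.mul_assoc, eq_sub_of_add_eq (inclMatrix_mul_projMatrix_add (A := A) p),
    Matrix.sub_mul, Matrix.one_mul, Matrix.mul_assoc, ← Matrix.mul_assoc (projMatrix A _),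
    projMatrix_not_mul_diff_mul_inclMatrix hp, Matrix.mul_zero, sub_zero]

lemma diff_mul_projMatrix :
    (quotient hp).diff * projMatrix A (¬p ·) = projMatrix A (¬p ·) * V.diff := by
  have hd : (quotient hp).diff = projMatrix A (¬p ·) * V.diff * inclMatrix A (¬p ·) :=
    (projMatrix_mul_mul_inclMatrix _ _ _).symm
  rw [hd, Matrix.mul_assoc, eq_sub_of_add_eq' (inclMatrix_mul_projMatrix_add (A := A) p),
    Matrix.mul_sub, Matrix.mul_one, ← Matrix.mul_assoc, projMatrix_not_mul_diff_mul_inclMatrix hp,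
    Matrix.zero_mul, sub_zero]

/-- The short exact sequence associated with a set of basis vectors spanning a subcomplex. -/
def restrictShortComplex : ShortComplex (CochainComplex (ModuleCat.{u} A) ℤ) where
  X₁ := (sub hp).toComplex
  X₂ := V.toComplex
  X₃ := (quotient hp).toComplex
  f := homMk (inclMatrix A p) (isHomogeneous_inclMatrix _) (diff_mul_inclMatrix hp)
  g := homMk (projMatrix A (¬p ·)) (isHomogeneous_projMatrix _) (diff_mul_projMatrix hp)
  zero := by
    ext1 k
    change (sub hp).component V _ k k ≫ V.component (quotient hp) _ k k = 0
    rw [component_comp (isHomogeneous_inclMatrix _) _ (add_zero k).symm,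
      projMatrix_not_mul_inclMatrix, component_zero]

lemma restrictShortComplex_shortExact : (restrictShortComplex hp).ShortExact := by
  refine HomologicalComplex.shortExact_of_degreewise_shortExact _ fun k ↦
    ShortComplex.Splitting.shortExact
      { r := V.component (sub hp) (projMatrix A p) k k
        s := (quotient hp).component V (inclMatrix A (¬p ·)) k k
        f_r := (component_comp (isHomogeneous_inclMatrix _) _ (add_zero k).symm k).trans ?_
        s_g := (component_comp (isHomogeneous_inclMatrix _) _ (add_zero k).symm k).trans ?_
        id := (congrArg₂ (· + ·)
          (component_comp (isHomogeneous_projMatrix _) _ (add_zero k).symm k)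
          (component_comp (isHomogeneous_projMatrix _) _ (add_zero k).symm k)).trans ?_ }
  · rw [projMatrix_mul_inclMatrix, component_one]
    rfl
  · rw [projMatrix_mul_inclMatrix, component_one]
    rfl
  · refine (component_add _ _ k k).symm.trans ?_
    rw [inclMatrix_mul_projMatrix_add, component_one]
    rfl

end Restrict

end MatrixComplex

namespace IsThickSubcategory

variable {T : Type*} [Category T] [HasZeroObject T] [Preadditive T] [HasShift T ℤ]
  [∀ n : ℤ, (shiftFunctor T n).Additive] [Pretriangulated T] {D : Set T}
  (hD : IsThickSubcategory D)

include hD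

lemma mem_of_isZero {X : T} (hX : IsZero X) : X ∈ D :=
  hD.mem_of_iso ((isZero_zero T).iso hX) hD.zero_mem

lemma mem_iff_of_iso {X Y : T} (e : X ≅ Y) : X ∈ D ↔ Y ∈ D :=
  ⟨hD.mem_of_iso e, hD.mem_of_iso e.symm⟩

lemma shift_mem_iff (X : T) (n : ℤ) : X⟦n⟧ ∈ D ↔ X ∈ D :=
  ⟨fun h ↦ hD.mem_of_iso (shiftShiftNeg X n) (hD.shift_mem _ (-n) h), hD.shift_mem X n⟩

lemma ext₁ {S : Triangle T} (hS : S ∈ distTriang T) (h₂ : S.obj₂ ∈ D) (h₃ : S.obj₃ ∈ D) :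
    S.obj₁ ∈ D :=
  hD.ext₂ _ (inv_rot_of_distTriang _ hS) (hD.shift_mem _ (-1) h₃) h₂

lemma ext₃ {S : Triangle T} (hS : S ∈ distTriang T) (h₁ : S.obj₁ ∈ D) (h₂ : S.obj₂ ∈ D) :
    S.obj₃ ∈ D :=
  hD.ext₂ _ (rot_of_distTriang _ hS) h₂ (hD.shift_mem _ 1 h₁)

lemma obj₁_mem_of_mor₁_eq_zero {S : Triangle T} (hS : S ∈ distTriang T) (h₁ : S.mor₁ = 0)
    (h₃ : S.obj₃ ∈ D) : S.obj₁ ∈ D := by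
  obtain ⟨s, hs⟩ := Triangle.coyoneda_exact₁ S hS (𝟙 _) (by simp [h₁])
  exact (hD.shift_mem_iff S.obj₁ 1).1 (hD.retract_mem _ _ s S.mor₃ hs.symm h₃)

end IsThickSubcategory

namespace MatrixComplex

section ToDerived

variable {A : Type u} [CommRing A] [HasDerivedCategory.{w} (ModuleCat.{u} A)]

/-- The object of the derived category given by a complex in matrix form. -/
noncomputable def toDerived {ι : Type} [Fintype ι] (V : MatrixComplex A ι) :
    DerivedCategory (ModuleCat.{u} A) :=
  DerivedCategory.Q.obj V.toComplex

variable {D : Set (DerivedCategory (ModuleCat.{u} A))} (hD : IsThickSubcategory D)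
  {ι κ : Type} [Fintype ι] [Fintype κ] {V : MatrixComplex A ι} {W : MatrixComplex A κ}

include hD

lemma toDerived_mem_iff_of_equiv (e : κ ≃ ι) {n : ℤ} (hdeg : ∀ i, V.deg (e i) = W.deg i + n)
    (u : ℤˣ) (hdiff : ∀ i j, W.diff i j = u • V.diff (e i) (e j)) :
    W.toDerived ∈ D ↔ V.toDerived ∈ D := by
  classical
  rw [← hD.shift_mem_iff V.toDerived n]
  exact hD.mem_iff_of_iso (DerivedCategory.Q.mapIso (isoShift e hdeg u hdiff) ≪≫
    (DerivedCategory.Q.commShiftIso n).app V.toComplex)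

lemma toDerived_mem_of_isEmpty [IsEmpty ι] : V.toDerived ∈ D := by
  refine hD.mem_of_isZero (DerivedCategory.Q.map_isZero ?_)
  rw [IsZero.iff_id_eq_zero]
  ext1 k
  exact (ModuleCat.isZero_of_subsingleton (ModuleCat.of A ({i // V.deg i = k} → A))).eq_of_src _ _

variable {p : ι → Prop} [DecidablePred p] (hp : ∀ i j, p j → V.diff i j ≠ 0 → p i)

lemma toDerived_mem_of_sub_of_quotient (hsub : (sub hp).toDerived ∈ D)
    (hquot : (quotient hp).toDerived ∈ D) : V.toDerived ∈ D := by
  classical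
  exact hD.ext₂ _ (DerivedCategory.triangleOfSES_distinguished (restrictShortComplex_shortExact hp))
    hsub hquot

lemma toDerived_sub_mem_of_homotopy [DecidableEq ι] {g : Matrix ι (Subtype p) A}
    (hg : IsHomogeneous (sub hp) V (-1) g)
    (hgp : V.diff * g + g * (sub hp).diff = inclMatrix A p)
    (hquot : (quotient hp).toDerived ∈ D) : (sub hp).toDerived ∈ D := by
  refine hD.obj₁_mem_of_mor₁_eq_zero
    (DerivedCategory.triangleOfSES_distinguished (restrictShortComplex_shortExact hp)) ?_ hquot
  have h := homotopyMk (isHomogeneous_inclMatrix _) (diff_mul_inclMatrix hp) g hg hgp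
  exact (DerivedCategory.Q_map_eq_of_homotopy _ h).trans (Functor.map_zero _ _ _)

omit [DecidablePred p] in
lemma toDerived_restrict_restrict_mem_iff {q r : ι → Prop} [Fintype (Subtype p)]
    [Fintype (Subtype r)] [Fintype {i : Subtype p // q i}] (hr : ∀ i, r i ↔ p i ∧ q i)
    (hp' : ∀ i j k, p i → p k → V.diff i j ≠ 0 → V.diff j k ≠ 0 → p j) (hq' hr') :
    ((V.restrict p hp').restrict (fun i ↦ q i) hq').toDerived ∈ D ↔
      (V.restrict r hr').toDerived ∈ D :=
  toDerived_mem_iff_of_equiv hD ((Equiv.subtypeSubtypeEquivSubtypeInter p q).trans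
    (Equiv.subtypeEquivRight fun i ↦ (hr i).symm)) (n := 0) (fun _ ↦ (add_zero _).symm) 1
    fun _ _ ↦ (one_smul _ _).symm

end ToDerived

section Filtration

variable {A : Type u} [CommRing A] {ι Λ L : Type} [Fintype ι] [LinearOrder L]
  {V : MatrixComplex A ι} {f : ι → Λ} {rank : Λ → L}
  (hf : ∀ i j, V.diff i j ≠ 0 → f i = f j ∨ rank (f i) < rank (f j))

include hf in
lemma rank_le_of_diff_ne_zero {i j : ι} (hij : V.diff i j ≠ 0) : rank (f i) ≤ rank (f j) := by
  obtain h | h := hf i j hij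
  · rw [h]
  · exact h.le

variable [DecidableEq Λ]

/-- The graded piece with label `a` of the filtration of `V` given by a labelling `f` of its
basis vectors, along which the differential strictly decreases the rank of the label. -/
def fiber (a : Λ) : MatrixComplex A {i // f i = a} :=
  V.restrict (f · = a) fun i j k hi hk hij hjk ↦
    (hf j k hjk).elim (·.trans hk) fun hlt ↦ absurd (rank_le_of_diff_ne_zero hf hij)
      (by rw [hi, ← hk]; exact hlt.not_ge)

variable [HasDerivedCategory.{w} (ModuleCat.{u} A)]
  {D : Set (DerivedCategory (ModuleCat.{u} A))} (hD : IsThickSubcategory D)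

include hD

lemma toDerived_restrict_mem_of_fiber (hfib : ∀ i, (fiber hf (f i)).toDerived ∈ D) (s : Finset Λ)
    (hs : ↑s ⊆ Set.range f)
    (hconv : ∀ i j k, f i ∈ s → f k ∈ s → V.diff i j ≠ 0 → V.diff j k ≠ 0 → f j ∈ s) :
    (V.restrict (f · ∈ s) hconv).toDerived ∈ D := by
  induction s using Finset.induction_on_max_value rank with
  | empty =>
    have : IsEmpty {i // f i ∈ (∅ : Finset Λ)} := ⟨fun i ↦ Finset.notMem_empty _ i.2⟩
    exact toDerived_mem_of_isEmpty hD
  | insert a s ha hmax ih =>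
    have hne {i : ι} (hi : f i ∈ s) : f i ≠ a := fun h ↦ ha (h ▸ hi)
    have hlower (i j : ι) (hi : f i ∈ insert a s) (hj : f j ∈ s) (hij : V.diff i j ≠ 0) :
        f i ∈ s := by
      obtain h | h := hf i j hij
      · rwa [h]
      · refine (Finset.mem_insert.1 hi).resolve_left fun hia ↦ ?_
        exact ((hmax _ hj).trans_lt (hia ▸ h)).false
    obtain ⟨i₀, rfl⟩ := hs (Finset.mem_insert_self a s)
    refine toDerived_mem_of_sub_of_quotient hD (p := fun i ↦ f i.1 ∈ s)
      (fun i j hj hij ↦ hlower i j i.2 hj hij) ?_ ?_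
    · refine (toDerived_restrict_restrict_mem_iff hD (q := fun i ↦ f i ∈ s) (fun i ↦ ?_) _ _ _).2
        (ih (fun x hx ↦ hs (Finset.mem_insert_of_mem hx)) fun i j k hi hk hij hjk ↦ hlower j k
          (hconv i j k (Finset.mem_insert_of_mem hi) (Finset.mem_insert_of_mem hk) hij hjk) hk hjk)
      exact ⟨fun hi ↦ ⟨Finset.mem_insert_of_mem hi, hi⟩, And.right⟩
    · refine (toDerived_restrict_restrict_mem_iff hD (q := fun i ↦ f i ∉ s) (fun i ↦ ?_) _ _ _).2
        (hfib i₀)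
      exact ⟨fun hi ↦ ⟨hi ▸ Finset.mem_insert_self _ _, hi ▸ ha⟩,
        fun hi ↦ (Finset.mem_insert.1 hi.1).resolve_right hi.2⟩

theorem toDerived_mem_of_fiber (hfib : ∀ i, (fiber hf (f i)).toDerived ∈ D) :
    V.toDerived ∈ D := by
  have hmem (i : ι) : f i ∈ Finset.univ.image f := Finset.mem_image_of_mem f (Finset.mem_univ i)
  refine (toDerived_mem_iff_of_equiv hD (Equiv.subtypeUnivEquiv hmem).symm (n := 0)
    (fun i ↦ (add_zero _).symm) 1 fun _ _ ↦ (one_smul _ _).symm).2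
    (toDerived_restrict_mem_of_fiber hf hD hfib (Finset.univ.image f) (by simp)
      fun _ j _ _ _ _ _ ↦ hmem j)

end Filtration

section WordComplex

variable {A : Type*} [CommRing A] {ι κ μ : Type*} [Fintype ι] [DecidableEq ι] [Fintype κ]
  [DecidableEq κ] [Fintype μ] [DecidableEq μ]
  {V : MatrixComplex A ι} {W : MatrixComplex A κ} {U : MatrixComplex A μ} {n : ℕ}

lemma tensor_diff_apply (x y : κ × μ) :
    (W.tensor U).diff x y = (if x.2 = y.2 then W.diff x.1 y.1 else 0) +
      if x.1 = y.1 then koszulSign A (W.deg x.1) * U.diff x.2 y.2 else 0 := by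
  simp [tensor, sign, Matrix.one_apply, Matrix.diagonal_apply]

lemma cases_of_tensor_diff_ne_zero {x y : κ × μ} (h : (W.tensor U).diff x y ≠ 0) :
    (x.2 = y.2 ∧ W.diff x.1 y.1 ≠ 0) ∨ (x.1 = y.1 ∧ U.diff x.2 y.2 ≠ 0) := by
  rw [tensor_diff_apply] at h
  grind

lemma length_le_of_wordComplex_diff_ne_zero {w w' : words (ι × ι) n}
    (h : (V.wordComplex n).diff w' w ≠ 0) : w'.1.length ≤ w.1.length :=
  V.isHomogeneousBasis_stdBasis.length_le_of_repr_d_wordBasis_ne_zero h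

lemma same_cell_or_of_wordComplex_diff_ne_zero {i j i' j' : ι} {w w' : List (ι × ι)} {hw hw'}
    (h : (V.wordComplex n).diff ⟨(i', j') :: w', hw'⟩ ⟨(i, j) :: w, hw⟩ ≠ 0) :
    (j' = j ∧ w' = w) ∨ w'.length < w.length ∨ (w'.length = w.length ∧ i' = i) := by
  rcases V.isHomogeneousBasis_stdBasis.cases_of_repr_d_wordBasis_ne_zero h with
    ⟨-, rfl⟩ | ⟨h', rfl⟩ | ⟨h', h''⟩
  · simp
  · rw [stdBasis_repr_endAlgebra_d] at h'
    grind
  · have hle := V.isHomogeneousBasis_stdBasis.length_le_of_repr_d_wordBasis_ne_zero h''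
    simp only [Prod.mk.injEq] at h'
    grind

lemma wordComplex_diff_cons_cons (i j i' : ι) {w : List (ι × ι)} (hw hw') :
    (V.wordComplex n).diff ⟨(i', j) :: w, hw'⟩ ⟨(i, j) :: w, hw⟩ = V.diff i' i := by
  refine (V.isHomogeneousBasis_stdBasis.repr_d_wordBasis_cons_cons _ _ _ _).trans ?_
  have hself : (wordBasis (Matrix.stdBasis A ι ι)).repr (V.endAlgebra.tensorAlgebrad V.supertrace
      (wordBasis (Matrix.stdBasis A ι ι) w)) w = 0 := by
    have hw₁ : w ∈ words (ι × ι) n := mem_words.2 ((Nat.le_succ _).trans (mem_words.1 hw))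
    exact (V.wordComplex n).diff_self ⟨w, hw₁⟩
  simp [stdBasis_repr_endAlgebra_d, diff_self, hself]

end WordComplex

section Tower

variable {A : Type u} [CommRing A] {ι κ : Type} [Fintype ι] [DecidableEq ι] [Fintype κ]
  [DecidableEq κ] (V : MatrixComplex A ι) (W : MatrixComplex A κ) (n : ℕ)

/-- The cell containing a basis vector of `W ⊗ V.wordComplex n` other than those coming from `W`.
Only the row index of the first letter of the word varies in a cell, so that it is a shifted copy
of `V`. -/
def cell (x : {x : κ × words (ι × ι) n // ¬x.2.1 = []}) : κ × ι × List (ι × ι) :=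
  (x.1.1, (x.1.2.1.head x.2).2, x.1.2.1.tail)

/-- The rank of a cell of `W ⊗ V.wordComplex n`: cells of longer words come last, and among cells
of the same length those of smaller degree. -/
def cellRank (c : κ × ι × List (ι × ι)) : ℕ ×ₗ ℤ :=
  toLex (c.2.2.length,
    V.deg c.2.1 - W.deg c.1 - (c.2.2.map fun a ↦ V.deg a.1 - V.deg a.2 - 1).sum)

variable {V W n}

lemma eq_nil_of_tensor_wordComplex_diff_ne_zero {x y : κ × words (ι × ι) n} (hy : y.2.1 = [])
    (h : (W.tensor (V.wordComplex n)).diff x y ≠ 0) : x.2.1 = [] := by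
  rcases cases_of_tensor_diff_ne_zero h with ⟨h, -⟩ | ⟨-, h⟩
  · rw [h, hy]
  · simpa [hy] using length_le_of_wordComplex_diff_ne_zero h

/-- The part of `W ⊗ V.wordComplex n` spanned by the nonempty words. -/
noncomputable abbrev wordQuotient (V : MatrixComplex A ι) (W : MatrixComplex A κ) (n : ℕ) :
    MatrixComplex A {x : κ × words (ι × ι) n // ¬x.2.1 = []} :=
  quotient (V := W.tensor (V.wordComplex n)) (p := fun x ↦ x.2.1 = [])
    fun _ _ ↦ eq_nil_of_tensor_wordComplex_diff_ne_zero

/-- The part of `W ⊗ V.wordComplex n` spanned by the empty word. -/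
noncomputable abbrev nilSub (V : MatrixComplex A ι) (W : MatrixComplex A κ) (n : ℕ) :
    MatrixComplex A {x : κ × words (ι × ι) n // x.2.1 = []} :=
  sub (V := W.tensor (V.wordComplex n)) (p := fun x ↦ x.2.1 = [])
    fun _ _ ↦ eq_nil_of_tensor_wordComplex_diff_ne_zero

/-- The part spanned by the empty word has the same index set as `W`. -/
def nilEquiv : {x : κ × words (ι × ι) n // x.2.1 = []} ≃ κ where
  toFun x := x.1.1
  invFun k := ⟨(k, ⟨[], mem_words.2 n.zero_le⟩), rfl⟩
  left_inv x := Subtype.ext (Prod.ext rfl (Subtype.ext x.2.symm))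
  right_inv _ := rfl

lemma nilSub_deg (x) : (nilSub V W n).deg x = W.deg (nilEquiv x) := by
  obtain ⟨k, rfl⟩ := nilEquiv.symm.surjective x
  exact add_zero _

lemma nilSub_diff : (nilSub V W n).diff = W.diff.submatrix nilEquiv nilEquiv := by
  ext x y
  obtain ⟨i, rfl⟩ := nilEquiv.symm.surjective x
  obtain ⟨j, rfl⟩ := nilEquiv.symm.surjective y
  refine (tensor_diff_apply ..).trans ?_
  simp [nilEquiv, diff_self]

lemma tensor_wordComplex_deg_cons (k : κ) (i j : ι) (w : List (ι × ι)) (hw) :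
    (W.tensor (V.wordComplex n)).deg (k, ⟨(i, j) :: w, hw⟩) =
      W.deg k + (V.deg i - V.deg j - 1 +
        (w.map fun a ↦ V.deg a.1 - V.deg a.2 - 1).sum) := rfl

lemma cell_eq_or_cellRank_lt (x y) (h : (wordQuotient V W n).diff x y ≠ 0) :
    cell n x = cell n y ∨ cellRank V W (cell n x) < cellRank V W (cell n y) := by
  have hdeg := (wordQuotient V W n).deg_eq x y h
  obtain ⟨⟨k', ⟨_ | ⟨⟨i', j'⟩, w'⟩, hw'⟩⟩, hx⟩ := x
  · exact absurd rfl hx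
  obtain ⟨⟨k, ⟨_ | ⟨⟨i, j⟩, w⟩, hw⟩⟩, hy⟩ := y
  · exact absurd rfl hy
  replace hdeg := (tensor_wordComplex_deg_cons ..).symm.trans
    (hdeg.trans (congrArg (· + 1) (tensor_wordComplex_deg_cons ..)))
  simp only [cell, cellRank, List.head_cons, List.tail_cons, Prod.Lex.toLex_lt_toLex]
  rcases cases_of_tensor_diff_ne_zero h with ⟨h, -⟩ | ⟨h, h'⟩
  · grind
  · have := same_cell_or_of_wordComplex_diff_ne_zero h'
    grind

/-- The row index of the first letter identifies a cell with the index set of `V`. -/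
def cellEquiv (k : κ) (j : ι) {w : List (ι × ι)} (hw : ∀ i, (i, j) :: w ∈ words (ι × ι) n) :
    {x // cell n x = (k, j, w)} ≃ ι where
  toFun x := (x.1.1.2.1.head x.1.2).1
  invFun i := ⟨⟨(k, ⟨(i, j) :: w, hw i⟩), List.cons_ne_nil _ _⟩, rfl⟩
  left_inv x := by
    obtain ⟨⟨⟨k, ⟨_ | ⟨⟨i, j⟩, w⟩, hw⟩⟩, hx⟩, hx'⟩ := x
    · exact absurd rfl hx
    · obtain ⟨rfl, rfl, rfl⟩ : k = _ ∧ j = _ ∧ w = _ := by simpa [cell] using hx'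
      rfl
  right_inv i := rfl

variable [HasDerivedCategory.{w} (ModuleCat.{u} A)]
  {D : Set (DerivedCategory (ModuleCat.{u} A))} (hD : IsThickSubcategory D)

include hD

lemma toDerived_fiber_cell_mem (hV : V.toDerived ∈ D) (k : κ) (j : ι) {w : List (ι × ι)}
    (hw : ∀ i, (i, j) :: w ∈ words (ι × ι) n) :
    (fiber (V := wordQuotient V W n) cell_eq_or_cellRank_lt (k, j, w)).toDerived ∈ D := by
  let s : ℤ := (w.map fun a ↦ V.deg a.1 - V.deg a.2 - 1).sum
  have hdeg (i : ι) : V.deg i = W.deg k + (V.deg i - V.deg j - 1 + s) +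
      (V.deg j + 1 - W.deg k - s) := by
    ring
  have hdiff (i' i : ι) : (W.tensor (V.wordComplex n)).diff (k, ⟨(i', j) :: w, hw i'⟩)
      (k, ⟨(i, j) :: w, hw i⟩) = (W.deg k).negOnePow • V.diff i' i := by
    rw [tensor_diff_apply, if_pos rfl, wordComplex_diff_cons_cons, W.diff_self, ite_self, zero_add,
      koszulSign, Units.smul_def, zsmul_eq_mul]
  refine (toDerived_mem_iff_of_equiv hD (cellEquiv k j hw) (n := V.deg j + 1 - W.deg k - s)
    (fun x ↦ ?_) (W.deg k).negOnePow fun x y ↦ ?_).2 hV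
  · obtain ⟨i, rfl⟩ := (cellEquiv k j hw).symm.surjective x
    exact hdeg i
  · obtain ⟨i', rfl⟩ := (cellEquiv k j hw).symm.surjective x
    obtain ⟨i, rfl⟩ := (cellEquiv k j hw).symm.surjective y
    exact hdiff i' i

lemma toDerived_wordQuotient_mem (hV : V.toDerived ∈ D) :
    (wordQuotient V W n).toDerived ∈ D := by
  refine toDerived_mem_of_fiber cell_eq_or_cellRank_lt hD fun x ↦ ?_
  obtain ⟨⟨k, ⟨_ | ⟨⟨i, j⟩, w⟩, hw⟩⟩, hx⟩ := x
  · exact absurd rfl hx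
  · exact toDerived_fiber_cell_mem hD hV k j fun i' ↦ mem_words.2 (by simpa using mem_words.1 hw)

/-- The inclusion of `W` into the tower `W ⊗ V.wordComplex n` is null-homotopic for large `n`, and
its cokernel is a finite iterated extension of shifts of `V`. -/
theorem toDerived_mem_of_forall_exists_pow (hV : V.toDerived ∈ D)
    (hVW : ∀ x h, V.diff * h + h * V.diff = x • (1 : Matrix ι ι A) →
      ∃ m g, W.diff * g + g * W.diff = (x ^ m : A) • (1 : Matrix κ κ A)) :
    W.toDerived ∈ D := by
  obtain ⟨n, g, hg, hgW⟩ := V.exists_homotopy_wordComplex W hVW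
  let g' : Matrix (κ × words (ι × ι) n) {x : κ × words (ι × ι) n // x.2.1 = []} A :=
    g.submatrix id nilEquiv
  have hg' : (W.tensor (V.wordComplex n)).diff * g' + g' * (nilSub V W n).diff =
      inclMatrix A fun x : κ × words (ι × ι) n ↦ x.2.1 = [] := by
    calc
      _ = ((W.tensor (V.wordComplex n)).diff * g + g * W.diff).submatrix id nilEquiv := by
        rw [nilSub_diff, Matrix.submatrix_mul_equiv, Matrix.submatrix_add]
        rfl
      _ = _ := by
        rw [hgW]
        ext ⟨k, v⟩ y
        obtain ⟨k', rfl⟩ := nilEquiv.symm.surjective y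
        simp [inclMatrix, Matrix.one_apply, nilEquiv, Subtype.ext_iff]
  refine (toDerived_mem_iff_of_equiv hD nilEquiv (V := W) (W := nilSub V W n) (n := 0)
    (fun x ↦ (nilSub_deg x).symm.trans (add_zero _).symm) 1 fun x y ↦ ?_).1
    (toDerived_sub_mem_of_homotopy hD _ (fun x y h ↦ ?_) hg' (toDerived_wordQuotient_mem hD hV))
  · rw [nilSub_diff, one_smul, Matrix.submatrix_apply]
  · exact (hg x (nilEquiv y) h).trans (congrArg (· + -1) (nilSub_deg y).symm)

end Tower

end MatrixComplex

/-! ### Classes of torsion modules -/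

section ExactSequences

variable {A : Type*} [CommRing A] {L N Q P : Type*} [AddCommGroup L] [Module A L]
  [AddCommGroup N] [Module A N] [AddCommGroup Q] [Module A Q] [AddCommGroup P] [Module A P]

lemma exists_comp_eq_of_ker_le_ker {g : N →ₗ[A] Q} {φ : N →ₗ[A] P} (hg : Function.Surjective g)
    (h : LinearMap.ker g ≤ LinearMap.ker φ) : ∃ ν : Q →ₗ[A] P, ν ∘ₗ g = φ := by
  refine ⟨(LinearMap.ker g).liftQ φ h ∘ₗ (g.quotKerEquivOfSurjective hg).symm.toLinearMap, ?_⟩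
  ext n
  have hn : (g.quotKerEquivOfSurjective hg).symm (g n) = Submodule.Quotient.mk n :=
    (LinearEquiv.symm_apply_eq _).2 rfl
  simp [hn]

lemma exact_compLeft {f : L →ₗ[A] N} {g : N →ₗ[A] Q} (h : Function.Exact f g) (ι : Type*) :
    Function.Exact (f.compLeft ι) (g.compLeft ι) := by
  rw [LinearMap.exact_iff, LinearMap.ker_compLeft, LinearMap.range_compLeft, h.linearMap_ker_eq]

lemma exact_restrict {f : L →ₗ[A] N} {g : N →ₗ[A] Q} (h : Function.Exact f g)
    (S : Submodule A N) :
    Function.Exact (f.restrict fun _ hl ↦ hl : S.comap f →ₗ[A] S)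
      (g.restrict fun _ ↦ Submodule.mem_map_of_mem : S →ₗ[A] S.map g) := by
  rintro ⟨n, hn⟩
  constructor
  · intro hgn
    obtain ⟨l, rfl⟩ := (h n).1 (congrArg Subtype.val hgn)
    exact ⟨⟨l, hn⟩, rfl⟩
  · rintro ⟨l, hl⟩
    rw [← hl]
    exact Subtype.ext (h.apply_apply_eq_zero _)

lemma exact_mapQ {f : L →ₗ[A] N} {g : N →ₗ[A] Q} (h : Function.Exact f g) (S : Submodule A N) :
    Function.Exact ((S.comap f).mapQ S f le_rfl) (S.mapQ (S.map g) g (S.le_comap_map g)) :=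
  (h.exact_mapQ_iff _ _).2 inf_le_right

lemma mapQ_comap_injective (f : L →ₗ[A] N) (S : Submodule A N) :
    Function.Injective ((S.comap f).mapQ S f le_rfl) :=
  LinearMap.ker_eq_bot.1 (Submodule.ker_liftQ_eq_bot _ _ _ (by
    rw [LinearMap.ker_comp, Submodule.ker_mkQ]))

lemma mapQ_surjective {g : N →ₗ[A] Q} (hg : Function.Surjective g) {S : Submodule A N}
    {T : Submodule A Q} (h : S ≤ T.comap g) : Function.Surjective (S.mapQ T g h) := by
  rw [Submodule.mapQ, ← LinearMap.range_eq_top, Submodule.range_liftQ, LinearMap.range_eq_top]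
  exact T.mkQ_surjective.comp hg

section Snake

variable (φ : N →ₗ[A] P) {S : Submodule A N} {T : Submodule A P} (h : S ≤ T.comap φ)

lemma exact_ker_restrict_ker_mapQ :
    Function.Exact
      (S.subtype.restrict fun _ hx ↦ congrArg Subtype.val hx :
        LinearMap.ker (φ.restrict h) →ₗ[A] LinearMap.ker φ)
      (S.mkQ.restrict fun _ hx ↦ (congrArg T.mkQ hx :) :
        LinearMap.ker φ →ₗ[A] LinearMap.ker (S.mapQ T φ h)) := by
  rintro ⟨x, hx⟩
  constructor
  · intro hxS
    exact ⟨⟨⟨x, (Submodule.Quotient.mk_eq_zero S).1 (congrArg Subtype.val hxS)⟩,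
      Subtype.ext hx⟩, rfl⟩
  · rintro ⟨y, hy⟩
    rw [← hy]
    exact Subtype.ext ((Submodule.Quotient.mk_eq_zero S).2 y.1.2)

lemma range_restrict_le_comap_range :
    LinearMap.range (φ.restrict h) ≤ (LinearMap.range φ).comap T.subtype := by
  rintro _ ⟨x, rfl⟩
  exact ⟨x, rfl⟩

lemma range_mapQ : LinearMap.range (S.mapQ T φ h) = (LinearMap.range φ).map T.mkQ := by
  rw [Submodule.mapQ, Submodule.range_liftQ, LinearMap.range_comp]

lemma exact_coker_restrict_coker_mapQ :
    Function.Exact (Submodule.mapQ _ _ T.subtype (range_restrict_le_comap_range φ h))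
      (Submodule.mapQ (LinearMap.range φ) (LinearMap.range (S.mapQ T φ h)) T.mkQ
        (Submodule.map_le_iff_le_comap.1 (range_mapQ φ h).ge)) :=
  ((LinearMap.exact_subtype_mkQ T).exact_mapQ_iff _ _).2
    (inf_le_right.trans (range_mapQ φ h).le)

/-- The connecting map `δ` comes from the snake lemma for `S → N → N ⧸ S` and `T → P → P ⧸ T`. -/
lemma exists_exact_ker_coker :
    ∃ (i₁ : LinearMap.ker (φ.restrict h) →ₗ[A] LinearMap.ker φ)
      (i₂ : LinearMap.ker φ →ₗ[A] LinearMap.ker (S.mapQ T φ h))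
      (δ : LinearMap.ker (S.mapQ T φ h) →ₗ[A] T ⧸ LinearMap.range (φ.restrict h))
      (p₁ : (T ⧸ LinearMap.range (φ.restrict h)) →ₗ[A] P ⧸ LinearMap.range φ)
      (p₂ : (P ⧸ LinearMap.range φ) →ₗ[A] (P ⧸ T) ⧸ LinearMap.range (S.mapQ T φ h)),
      Function.Injective i₁ ∧ Function.Exact i₁ i₂ ∧ Function.Exact i₂ δ ∧
        Function.Exact δ p₁ ∧ Function.Exact p₁ p₂ ∧ Function.Surjective p₂ := by
  have hι₃ : Function.Exact (LinearMap.ker (S.mapQ T φ h)).subtype (S.mapQ T φ h) :=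
    LinearMap.exact_subtype_ker_map _
  have hπ₁ := LinearMap.exact_map_mkQ_range (φ.restrict h)
  have hf := LinearMap.exact_subtype_mkQ S
  have hg := LinearMap.exact_subtype_mkQ T
  have h₁ : T.subtype ∘ₗ φ.restrict h = φ ∘ₗ S.subtype := rfl
  have h₂ : T.mkQ ∘ₗ φ = S.mapQ T φ h ∘ₗ S.mkQ := rfl
  have hs := S.mkQ_surjective
  have hi := T.injective_subtype
  exact ⟨_, _, SnakeLemma.δ' _ φ _ _ _ hf _ _ hg h₁ h₂ _ hι₃ _ hπ₁ hs hi, _, _,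
    fun _ _ hxy ↦ Subtype.ext (Subtype.ext (Subtype.ext_iff.1 hxy :)),
    exact_ker_restrict_ker_mapQ φ h,
    SnakeLemma.exact_δ'_right _ φ _ _ _ hf _ _ hg h₁ h₂ _ (LinearMap.exact_subtype_ker_map φ)
      _ hι₃ _ hπ₁ hs hi _ rfl (Submodule.injective_subtype _),
    SnakeLemma.exact_δ'_left _ φ _ _ _ hf _ _ hg h₁ h₂ _ hι₃ _ hπ₁ _
      (LinearMap.exact_map_mkQ_range φ) hs hi _ rfl (Submodule.mkQ_surjective _),
    exact_coker_restrict_coker_mapQ φ h, mapQ_surjective T.mkQ_surjective _⟩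

end Snake

lemma exists_shortExact_of_exact {M₁ M₂ M₃ M₄ M₅ : Type*} [AddCommGroup M₁] [Module A M₁]
    [AddCommGroup M₂] [Module A M₂] [AddCommGroup M₃] [Module A M₃] [AddCommGroup M₄]
    [Module A M₄] [AddCommGroup M₅] [Module A M₅] {f₁ : M₁ →ₗ[A] M₂} {f₂ : M₂ →ₗ[A] M₃}
    {f₃ : M₃ →ₗ[A] M₄} {f₄ : M₄ →ₗ[A] M₅} (h₁ : Function.Exact f₁ f₂)
    (h₂ : Function.Exact f₂ f₃) (h₃ : Function.Exact f₃ f₄) :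
    ∃ (f : (M₂ ⧸ LinearMap.range f₁) →ₗ[A] M₃) (g : M₃ →ₗ[A] LinearMap.ker f₄),
      Function.Injective f ∧ Function.Surjective g ∧ Function.Exact f g := by
  refine ⟨(LinearMap.range f₁).liftQ f₂ h₁.linearMap_ker_eq.ge,
    f₃.codRestrict _ fun x ↦ LinearMap.mem_ker.2 (h₃.apply_apply_eq_zero x),
    LinearMap.injective_range_liftQ_of_exact h₁, ?_, ?_⟩
  · rintro ⟨y, hy⟩
    obtain ⟨x, rfl⟩ := (h₃ y).1 hy
    exact ⟨x, rfl⟩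
  · rw [LinearMap.exact_iff, LinearMap.ker_codRestrict, Submodule.range_liftQ,
      h₂.linearMap_ker_eq]

end ExactSequences

section SmulSum

variable {A : Type*} [CommRing A] {ι : Type*} [Fintype ι] (x : ι → A)

/-- The map `(ι → N) → N` sending a family `v` to `∑ i, x i • v i`. -/
def smulSum (N : Type*) [AddCommGroup N] [Module A N] : (ι → N) →ₗ[A] N :=
  ∑ i, x i • LinearMap.proj i

variable {L N Q : Type*} [AddCommGroup L] [Module A L] [AddCommGroup N] [Module A N]
  [AddCommGroup Q] [Module A Q]

@[simp]
lemma smulSum_apply (v : ι → N) : smulSum x N v = ∑ i, x i • v i := by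
  simp [smulSum, LinearMap.sum_apply]

lemma comp_smulSum (g : N →ₗ[A] Q) : g ∘ₗ smulSum x N = smulSum x Q ∘ₗ g.compLeft ι := by
  ext
  simp

variable (N) in
lemma range_smulSum : LinearMap.range (smulSum x N) = Ideal.span (Set.range x) • ⊤ := by
  classical
  apply le_antisymm
  · rintro _ ⟨v, rfl⟩
    rw [smulSum_apply]
    exact sum_mem fun i _ ↦ Submodule.smul_mem_smul (Submodule.subset_span ⟨i, rfl⟩) trivial
  · refine Submodule.smul_le.2 fun a ha n _ ↦ ?_
    induction ha using Submodule.span_induction with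
    | mem a h =>
      obtain ⟨i, rfl⟩ := h
      exact ⟨Pi.single i n, by simp [Pi.single_apply]⟩
    | zero => simp
    | add a b _ _ ha hb => simpa [add_smul] using add_mem ha hb
    | smul c a _ ha => simpa [mul_smul] using Submodule.smul_mem _ c ha

lemma exists_range_eq_comap_smul_top {f : L →ₗ[A] N} {g : N →ₗ[A] Q}
    (hf : Function.Injective f) (hg : Function.Surjective g) (h : Function.Exact f g)
    (hL : Ideal.span (Set.range x) ≤ Module.annihilator A L) :
    ∃ ψ : LinearMap.ker (smulSum x Q) →ₗ[A] L,
      LinearMap.range ψ = (Ideal.span (Set.range x) • (⊤ : Submodule A N)).comap f := by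
  have hgι : Function.Surjective (g.compLeft ι) := hg.comp_left
  have hxL : smulSum x L = 0 := by
    refine LinearMap.ext fun v ↦ (smulSum_apply x v).trans (Finset.sum_eq_zero fun i _ ↦ ?_)
    exact Module.mem_annihilator.1 (hL (Ideal.subset_span ⟨i, rfl⟩)) (v i)
  obtain ⟨ν, hν⟩ := exists_comp_eq_of_ker_le_ker (φ := smulSum x N) hgι (by
    rw [(exact_compLeft h ι).linearMap_ker_eq, LinearMap.range_le_ker_iff, ← comp_smulSum, hxL,
      LinearMap.comp_zero])
  have hgν : g ∘ₗ ν = smulSum x Q := by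
    rw [← LinearMap.cancel_right hgι, LinearMap.comp_assoc, hν, comp_smulSum]
  have hνmem (q : LinearMap.ker (smulSum x Q)) : ν q ∈ LinearMap.range f :=
    (h _).1 ((LinearMap.congr_fun hgν q).trans q.2)
  let ψ := (ν ∘ₗ (LinearMap.ker (smulSum x Q)).subtype).codRestrictOfInjective f hf hνmem
  have hψ (q : LinearMap.ker (smulSum x Q)) : f (ψ q) = ν q :=
    LinearMap.codRestrictOfInjective_comp_apply ..
  refine ⟨ψ, Submodule.ext fun l ↦ ?_⟩
  rw [← range_smulSum, ← hν, LinearMap.range_comp_of_range_eq_top _ (LinearMap.range_eq_top.2 hgι)]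
  constructor
  · rintro ⟨q, rfl⟩
    exact ⟨q, (hψ q).symm⟩
  · rintro ⟨q, hq⟩
    have hq' : smulSum x Q q = 0 := by
      rw [← hgν, LinearMap.comp_apply, hq, h.apply_apply_eq_zero]
    exact ⟨⟨q, hq'⟩, hf ((hψ _).trans hq)⟩

end SmulSum

section Annihilator

variable {A : Type*} [CommRing A] {N Q : Type*} [AddCommGroup N] [Module A N]
  [AddCommGroup Q] [Module A Q]

lemma le_annihilator_quotient_smul_top (b : Ideal A) :
    b ≤ Module.annihilator A (N ⧸ (b • ⊤ : Submodule A N)) := fun x hx ↦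
  Module.mem_annihilator.2 fun y ↦ by
    obtain ⟨y, rfl⟩ := Submodule.Quotient.mk_surjective _ y
    exact (Submodule.Quotient.mk_eq_zero _).2 (Submodule.smul_mem_smul hx trivial)

lemma map_smul_top_of_surjective {g : N →ₗ[A] Q} (hg : Function.Surjective g) (b : Ideal A) :
    (b • ⊤ : Submodule A N).map g = b • ⊤ := by
  rw [Submodule.map_smul'', Submodule.map_top, LinearMap.range_eq_top.2 hg]

lemma le_annihilator_smul_top_iff {b c : Ideal A} :
    c ≤ Module.annihilator A (b • ⊤ : Submodule A N) ↔ c * b ≤ Module.annihilator A N := by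
  rw [← Submodule.annihilator_top (M := N), Submodule.le_annihilator_iff,
    Submodule.le_annihilator_iff, ← smul_eq_mul, smul_assoc]

lemma mul_le_annihilator_of_exact {L : Type*} [AddCommGroup L] [Module A L] {f : L →ₗ[A] N}
    {g : N →ₗ[A] Q} (h : Function.Exact f g) {b c : Ideal A} (hL : b ≤ Module.annihilator A L)
    (hQ : c ≤ Module.annihilator A Q) : b * c ≤ Module.annihilator A N := by
  refine Ideal.mul_le.2 fun x hx y hy ↦ Module.mem_annihilator.2 fun n ↦ ?_
  obtain ⟨l, hl⟩ := (h (y • n)).1 (by rw [map_smul, Module.mem_annihilator.1 (hQ hy)])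
  rw [mul_smul, ← hl, ← map_smul, Module.mem_annihilator.1 (hL hx), map_zero]

lemma smul_top_le_ker {f : N →ₗ[A] Q} {b : Ideal A} (hQ : b ≤ Module.annihilator A Q) :
    b • ⊤ ≤ LinearMap.ker f :=
  Submodule.smul_le.2 fun x hx n _ ↦ by
    rw [LinearMap.mem_ker, map_smul, Module.mem_annihilator.1 (hQ hx)]

end Annihilator

/-- A class of `b`-torsion modules which is *wide* among the modules annihilated by `b`: it is
closed under isomorphisms, kernels and cokernels, and under those extensions which are annihilated
by `b`. For `b = ⊥` this is a nonempty wide subcategory, phrased with unbundled modules. -/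
structure IsWideTorsionClass {A : Type u} [CommRing A] (b : Ideal A)
    (E : Set (ModuleCat.{u} A)) : Prop where
  mem_of_equiv : ∀ {M N : Type u} [AddCommGroup M] [Module A M] [AddCommGroup N] [Module A N],
    (M ≃ₗ[A] N) → ModuleCat.of A M ∈ E → ModuleCat.of A N ∈ E
  punit_mem : ModuleCat.of A PUnit.{u + 1} ∈ E
  ker_mem : ∀ {M N : Type u} [AddCommGroup M] [Module A M] [AddCommGroup N] [Module A N]
    (f : M →ₗ[A] N), ModuleCat.of A M ∈ E → ModuleCat.of A N ∈ E →
      ModuleCat.of A (LinearMap.ker f) ∈ E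
  coker_mem : ∀ {M N : Type u} [AddCommGroup M] [Module A M] [AddCommGroup N] [Module A N]
    (f : M →ₗ[A] N), ModuleCat.of A M ∈ E → ModuleCat.of A N ∈ E →
      ModuleCat.of A (N ⧸ LinearMap.range f) ∈ E
  le_annihilator : ∀ {M : Type u} [AddCommGroup M] [Module A M],
    ModuleCat.of A M ∈ E → b ≤ Module.annihilator A M
  extension_mem : ∀ {L N Q : Type u} [AddCommGroup L] [Module A L] [AddCommGroup N] [Module A N]
    [AddCommGroup Q] [Module A Q] {f : L →ₗ[A] N} {g : N →ₗ[A] Q}, Function.Injective f →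
      Function.Surjective g → Function.Exact f g → b ≤ Module.annihilator A N →
        ModuleCat.of A L ∈ E → ModuleCat.of A Q ∈ E → ModuleCat.of A N ∈ E

/-- The modules `N` which are extensions of two modules in `E`, where `E` is a class of `b`-torsion
modules. We ask that the canonical extension of `N ⧸ b N` by `b N` be of this kind, which makes
the class manifestly functorial; see `IsWideTorsionClass.mem_selfExtensions`. -/
def selfExtensions {A : Type u} [CommRing A] (b : Ideal A) (E : Set (ModuleCat.{u} A)) :
    Set (ModuleCat.{u} A) :=
  {N | ModuleCat.of A (b • ⊤ : Submodule A N) ∈ E ∧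
    ModuleCat.of A (N ⧸ (b • ⊤ : Submodule A N)) ∈ E}

/-- The `j`-fold iteration of `selfExtensions`, starting from a class of `b`-torsion modules; its
members are annihilated by `b ^ 2 ^ j`. -/
def iterSelfExtensions {A : Type u} [CommRing A] (b : Ideal A) (E : Set (ModuleCat.{u} A)) :
    ℕ → Set (ModuleCat.{u} A)
  | 0 => E
  | j + 1 => selfExtensions (b ^ 2 ^ j) (iterSelfExtensions b E j)

namespace IsWideTorsionClass

variable {A : Type u} [CommRing A] {b : Ideal A} {E : Set (ModuleCat.{u} A)}
  {L N Q P : Type u} [AddCommGroup L] [Module A L] [AddCommGroup N] [Module A N]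
  [AddCommGroup Q] [Module A Q] [AddCommGroup P] [Module A P]

section Closure

variable (hE : IsWideTorsionClass b E)
include hE

lemma mem_of_subsingleton [Subsingleton N] : ModuleCat.of A N ∈ E :=
  hE.mem_of_equiv (LinearEquiv.ofSubsingleton (R := A) PUnit.{u + 1} N) hE.punit_mem

lemma range_mem (f : N →ₗ[A] P) (hN : ModuleCat.of A N ∈ E) (hP : ModuleCat.of A P ∈ E) :
    ModuleCat.of A (LinearMap.range f) ∈ E := by
  have h := hE.coker_mem (LinearMap.ker f).subtype (hE.ker_mem f hN hP) hN
  rw [Submodule.range_subtype] at h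
  exact hE.mem_of_equiv f.quotKerEquivRange h

lemma prod_mem (hN : ModuleCat.of A N ∈ E) (hP : ModuleCat.of A P ∈ E) :
    ModuleCat.of A (N × P) ∈ E := by
  refine hE.extension_mem LinearMap.inl_injective LinearMap.snd_surjective .inl_snd ?_ hN hP
  rw [Module.annihilator_prod]
  exact le_inf (hE.le_annihilator hN) (hE.le_annihilator hP)

lemma fin_fun_mem (hN : ModuleCat.of A N ∈ E) (r : ℕ) : ModuleCat.of A (Fin r → N) ∈ E := by
  induction r with
  | zero => exact hE.mem_of_subsingleton
  | succ r ih =>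
    exact hE.mem_of_equiv (Fin.consLinearEquiv A fun _ : Fin (r + 1) ↦ N) (hE.prod_mem hN ih)

lemma mem_of_exact {M₁ M₂ M₃ M₄ M₅ : Type u} [AddCommGroup M₁] [Module A M₁]
    [AddCommGroup M₂] [Module A M₂] [AddCommGroup M₃] [Module A M₃] [AddCommGroup M₄]
    [Module A M₄] [AddCommGroup M₅] [Module A M₅] {f₁ : M₁ →ₗ[A] M₂} {f₂ : M₂ →ₗ[A] M₃}
    {f₃ : M₃ →ₗ[A] M₄} {f₄ : M₄ →ₗ[A] M₅} (h₁ : Function.Exact f₁ f₂)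
    (h₂ : Function.Exact f₂ f₃) (h₃ : Function.Exact f₃ f₄)
    (m₁ : ModuleCat.of A M₁ ∈ E) (m₂ : ModuleCat.of A M₂ ∈ E)
    (hb : b ≤ Module.annihilator A M₃)
    (m₄ : ModuleCat.of A M₄ ∈ E) (m₅ : ModuleCat.of A M₅ ∈ E) : ModuleCat.of A M₃ ∈ E := by
  obtain ⟨f, g, hf, hg, h⟩ := exists_shortExact_of_exact h₁ h₂ h₃
  exact hE.extension_mem hf hg h hb (hE.coker_mem f₁ m₁ m₂) (hE.ker_mem f₄ m₄ m₅)

end Closure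

section SelfExtensions

lemma subset_selfExtensions (hE : IsWideTorsionClass b E) : E ⊆ selfExtensions b E := fun M hM ↦ by
  have hbM : b • (⊤ : Submodule A M) = ⊥ := by
    rw [← Submodule.le_annihilator_iff, Submodule.annihilator_top]
    exact hE.le_annihilator hM
  change ModuleCat.of A (b • ⊤ : Submodule A M) ∈ E ∧
    ModuleCat.of A (M ⧸ (b • ⊤ : Submodule A M)) ∈ E
  rw [hbM]
  exact ⟨hE.mem_of_subsingleton, hE.mem_of_equiv (Submodule.quotEquivOfEqBot ⊥ rfl).symm hM⟩

lemma mul_le_annihilator_of_mem_selfExtensions (hE : IsWideTorsionClass b E)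
    (hN : ModuleCat.of A N ∈ selfExtensions b E) : b * b ≤ Module.annihilator A N :=
  mul_le_annihilator_of_exact (LinearMap.exact_subtype_mkQ _) (hE.le_annihilator hN.1)
    (hE.le_annihilator hN.2)

lemma mem_selfExtensions_of_syzygy (hE : IsWideTorsionClass b E) {r : ℕ} {x : Fin r → A}
    (hx : Ideal.span (Set.range x) = b) {f : L →ₗ[A] N} {g : N →ₗ[A] Q}
    (hf : Function.Injective f) (hg : Function.Surjective g) (h : Function.Exact f g)
    (hN : b * b ≤ Module.annihilator A N) (hL : ModuleCat.of A L ∈ E)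
    (hQ : ModuleCat.of A Q ∈ selfExtensions b E)
    (hK : ModuleCat.of A (LinearMap.ker (smulSum x Q)) ∈ selfExtensions b E) :
    ModuleCat.of A N ∈ selfExtensions b E := by
  obtain ⟨ψ, hψ⟩ := exists_range_eq_comap_smul_top x hf hg h (hx ▸ hE.le_annihilator hL)
  have hS := hE.range_mem (Submodule.liftQ _ ψ (smul_top_le_ker (hE.le_annihilator hL))) hK.2 hL
  rw [Submodule.range_liftQ, hψ, hx] at hS
  have hLS := hE.coker_mem (Submodule.subtype _) hS hL
  rw [Submodule.range_subtype] at hLS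
  obtain ⟨hQ₁, hQ₂⟩ : ModuleCat.of A (b • ⊤ : Submodule A Q) ∈ E ∧
    ModuleCat.of A (Q ⧸ (b • ⊤ : Submodule A Q)) ∈ E := hQ
  rw [← map_smul_top_of_surjective hg] at hQ₁ hQ₂
  refine ⟨hE.extension_mem ?_ ?_ (exact_restrict h _) (le_annihilator_smul_top_iff.2 hN) hS hQ₁,
    hE.extension_mem (mapQ_comap_injective f _) (mapQ_surjective hg _) (exact_mapQ h _)
      (le_annihilator_quotient_smul_top b) hLS hQ₂⟩
  · exact fun _ _ hl ↦ Subtype.ext (hf (Subtype.ext_iff.1 hl))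
  · rintro ⟨_, n, hn, rfl⟩
    exact ⟨⟨n, hn⟩, rfl⟩

lemma mem_selfExtensions (hE : IsWideTorsionClass b E) (hb : b.FG) {f : L →ₗ[A] N}
    {g : N →ₗ[A] Q} (hf : Function.Injective f) (hg : Function.Surjective g)
    (h : Function.Exact f g) (hL : ModuleCat.of A L ∈ E) (hQ : ModuleCat.of A Q ∈ E) :
    ModuleCat.of A N ∈ selfExtensions b E := by
  obtain ⟨r, x, hx⟩ := Submodule.fg_iff_exists_fin_generating_family.1 hb
  exact hE.mem_selfExtensions_of_syzygy hx hf hg h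
    (mul_le_annihilator_of_exact h (hE.le_annihilator hL) (hE.le_annihilator hQ)) hL
    (hE.subset_selfExtensions hQ)
    (hE.subset_selfExtensions (hE.ker_mem _ (hE.fin_fun_mem hQ r) hQ))

lemma mem_selfExtensions_of_exact (hE : IsWideTorsionClass b E) (hb : b.FG)
    {M₁ M₂ M₃ M₄ M₅ : Type u} [AddCommGroup M₁] [Module A M₁]
    [AddCommGroup M₂] [Module A M₂] [AddCommGroup M₃] [Module A M₃] [AddCommGroup M₄]
    [Module A M₄] [AddCommGroup M₅] [Module A M₅] {f₁ : M₁ →ₗ[A] M₂} {f₂ : M₂ →ₗ[A] M₃}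
    {f₃ : M₃ →ₗ[A] M₄} {f₄ : M₄ →ₗ[A] M₅} (h₁ : Function.Exact f₁ f₂)
    (h₂ : Function.Exact f₂ f₃) (h₃ : Function.Exact f₃ f₄)
    (m₁ : ModuleCat.of A M₁ ∈ E) (m₂ : ModuleCat.of A M₂ ∈ E)
    (m₄ : ModuleCat.of A M₄ ∈ E) (m₅ : ModuleCat.of A M₅ ∈ E) :
    ModuleCat.of A M₃ ∈ selfExtensions b E := by
  obtain ⟨f, g, hf, hg, h⟩ := exists_shortExact_of_exact h₁ h₂ h₃
  exact hE.mem_selfExtensions hb hf hg h (hE.coker_mem f₁ m₁ m₂) (hE.ker_mem f₄ m₄ m₅)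

lemma ker_mem_selfExtensions (hE : IsWideTorsionClass b E) (hb : b.FG) (φ : N →ₗ[A] P)
    (hN : ModuleCat.of A N ∈ selfExtensions b E) (hP : ModuleCat.of A P ∈ selfExtensions b E) :
    ModuleCat.of A (LinearMap.ker φ) ∈ selfExtensions b E := by
  obtain ⟨i₁, i₂, δ, -, -, hi₁, hi, hδ, -⟩ :=
    exists_exact_ker_coker φ (Submodule.smul_top_le_comap_smul_top b φ)
  exact hE.mem_selfExtensions_of_exact hb
    ((LinearMap.exact_zero_iff_injective PUnit.{u + 1} i₁).2 hi₁) hi hδ hE.punit_mem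
    (hE.ker_mem _ hN.1 hP.1) (hE.ker_mem _ hN.2 hP.2) (hE.coker_mem _ hN.1 hP.1)

lemma coker_mem_selfExtensions (hE : IsWideTorsionClass b E) (hb : b.FG) (φ : N →ₗ[A] P)
    (hN : ModuleCat.of A N ∈ selfExtensions b E) (hP : ModuleCat.of A P ∈ selfExtensions b E) :
    ModuleCat.of A (P ⧸ LinearMap.range φ) ∈ selfExtensions b E := by
  obtain ⟨-, -, δ, p₁, p₂, -, -, -, hδ, hp, hp₂⟩ :=
    exists_exact_ker_coker φ (Submodule.smul_top_le_comap_smul_top b φ)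
  exact hE.mem_selfExtensions_of_exact hb hδ hp
    ((LinearMap.exact_zero_iff_surjective PUnit.{u + 1} p₂).2 hp₂)
    (hE.ker_mem _ hN.2 hP.2) (hE.coker_mem _ hN.1 hP.1) (hE.coker_mem _ hN.2 hP.2) hE.punit_mem

lemma fin_fun_mem_selfExtensions (hE : IsWideTorsionClass b E) (hb : b.FG)
    (hN : ModuleCat.of A N ∈ selfExtensions b E) (r : ℕ) :
    ModuleCat.of A (Fin r → N) ∈ selfExtensions b E :=
  hE.mem_selfExtensions hb (Subtype.val_injective.comp_left) (Submodule.mkQ_surjective _).comp_left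
    (exact_compLeft (LinearMap.exact_subtype_mkQ _) (Fin r)) (hE.fin_fun_mem hN.1 r)
    (hE.fin_fun_mem hN.2 r)

lemma mem_selfExtensions_of_shortExact (hE : IsWideTorsionClass b E) (hb : b.FG)
    {f : L →ₗ[A] N} {g : N →ₗ[A] Q} (hf : Function.Injective f) (hg : Function.Surjective g)
    (h : Function.Exact f g) (hN : b * b ≤ Module.annihilator A N)
    (hL : ModuleCat.of A L ∈ E) (hQ : ModuleCat.of A Q ∈ selfExtensions b E) :
    ModuleCat.of A N ∈ selfExtensions b E := by
  obtain ⟨r, x, hx⟩ := Submodule.fg_iff_exists_fin_generating_family.1 hb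
  exact hE.mem_selfExtensions_of_syzygy hx hf hg h hN hL hQ
    (hE.ker_mem_selfExtensions hb _ (hE.fin_fun_mem_selfExtensions hb hQ r) hQ)

lemma mem_selfExtensions_of_equiv (hE : IsWideTorsionClass b E) (hb : b.FG) (e : N ≃ₗ[A] P)
    (hN : ModuleCat.of A N ∈ selfExtensions b E) : ModuleCat.of A P ∈ selfExtensions b E :=
  hE.mem_selfExtensions hb (f := e.toLinearMap ∘ₗ Submodule.subtype _)
    (g := Submodule.mkQ _ ∘ₗ e.symm.toLinearMap) (e.injective.comp Subtype.val_injective)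
    ((Submodule.mkQ_surjective _).comp e.symm.surjective)
    ((LinearEquiv.conj_exact_iff_exact _ _ e).2 (LinearMap.exact_subtype_mkQ _)) hN.1 hN.2

/-- An extension `N` of `Q` by `L` is built up in two steps, from `b L` and the extension
`N ⧸ b L` of `Q` by `L ⧸ b L`. -/
lemma extension_mem_selfExtensions (hE : IsWideTorsionClass b E) (hb : b.FG)
    {f : L →ₗ[A] N} {g : N →ₗ[A] Q} (hf : Function.Injective f) (hg : Function.Surjective g)
    (h : Function.Exact f g) (hN : b * b ≤ Module.annihilator A N)
    (hL : ModuleCat.of A L ∈ selfExtensions b E) (hQ : ModuleCat.of A Q ∈ selfExtensions b E) :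
    ModuleCat.of A N ∈ selfExtensions b E := by
  let B : Submodule A N := (b • ⊤ : Submodule A L).map f
  have hB : ModuleCat.of A B ∈ E := hE.mem_of_equiv (Submodule.equivMapOfInjective f hf _) hL.1
  have hLB : B.comap f = b • ⊤ := Submodule.comap_map_eq_of_injective hf _
  have hgB : B.map g = ⊥ := by
    rw [← Submodule.map_comp, h.linearMap_comp_eq_zero, Submodule.map_zero]
  have hL₂ : ModuleCat.of A (L ⧸ B.comap f) ∈ E := hLB ▸ hL.2
  have hQB : ModuleCat.of A (Q ⧸ B.map g) ∈ selfExtensions b E :=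
    hE.mem_selfExtensions_of_equiv hb (Submodule.quotEquivOfEqBot _ hgB).symm hQ
  have hNB := hE.mem_selfExtensions_of_shortExact hb (mapQ_comap_injective f B)
    (mapQ_surjective hg _) (exact_mapQ h B)
    (hN.trans (LinearMap.annihilator_le_of_surjective _ B.mkQ_surjective)) hL₂ hQB
  exact hE.mem_selfExtensions_of_shortExact hb B.injective_subtype B.mkQ_surjective
    (LinearMap.exact_subtype_mkQ B) hN hB hNB

protected theorem selfExtensions (hE : IsWideTorsionClass b E) (hb : b.FG) :
    IsWideTorsionClass (b * b) (selfExtensions b E) where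
  mem_of_equiv e := hE.mem_selfExtensions_of_equiv hb e
  punit_mem := hE.subset_selfExtensions hE.punit_mem
  ker_mem := hE.ker_mem_selfExtensions hb
  coker_mem := hE.coker_mem_selfExtensions hb
  le_annihilator := hE.mul_le_annihilator_of_mem_selfExtensions
  extension_mem := hE.extension_mem_selfExtensions hb

end SelfExtensions

section WideClosure

lemma mem_of_mem_selfExtensions (hE : IsWideTorsionClass b E)
    (hN : ModuleCat.of A N ∈ selfExtensions b E) (hb : b ≤ Module.annihilator A N) :
    ModuleCat.of A N ∈ E :=
  hE.extension_mem (Submodule.injective_subtype _) (Submodule.mkQ_surjective _)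
    (LinearMap.exact_subtype_mkQ _) hb hN.1 hN.2

theorem iterSelfExtensions (hE : IsWideTorsionClass b E) (hb : b.FG) (j : ℕ) :
    IsWideTorsionClass (b ^ 2 ^ j) (iterSelfExtensions b E j) := by
  induction j with
  | zero => simpa [_root_.iterSelfExtensions] using hE
  | succ j ih =>
    rw [pow_succ, mul_two, pow_add]
    exact ih.selfExtensions hb.pow

lemma iterSelfExtensions_mono (hE : IsWideTorsionClass b E) (hb : b.FG) :
    Monotone (_root_.iterSelfExtensions b E) :=
  monotone_nat_of_le_succ fun j ↦ (hE.iterSelfExtensions hb j).subset_selfExtensions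

lemma mem_of_mem_iterSelfExtensions (hE : IsWideTorsionClass b E) (hb : b.FG) {j : ℕ}
    (hN : ModuleCat.of A N ∈ _root_.iterSelfExtensions b E j)
    (hbN : b ≤ Module.annihilator A N) : ModuleCat.of A N ∈ E := by
  induction j with
  | zero => exact hN
  | succ j ih =>
    exact ih ((hE.iterSelfExtensions hb j).mem_of_mem_selfExtensions hN
      ((Ideal.pow_le_self (by positivity)).trans hbN))

theorem iUnion_iterSelfExtensions (hE : IsWideTorsionClass b E) (hb : b.FG) :
    IsWideTorsionClass ⊥ (⋃ j, _root_.iterSelfExtensions b E j) := by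
  have key {M N : ModuleCat.{u} A} (hM : M ∈ ⋃ j, _root_.iterSelfExtensions b E j)
      (hN : N ∈ ⋃ j, _root_.iterSelfExtensions b E j) : ∃ j,
      M ∈ _root_.iterSelfExtensions b E j ∧ N ∈ _root_.iterSelfExtensions b E j := by
    obtain ⟨i, hi⟩ := Set.mem_iUnion.1 hM
    obtain ⟨j, hj⟩ := Set.mem_iUnion.1 hN
    exact ⟨max i j, hE.iterSelfExtensions_mono hb (le_max_left i j) hi,
      hE.iterSelfExtensions_mono hb (le_max_right i j) hj⟩
  have hEj := hE.iterSelfExtensions hb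
  refine ⟨fun e hM ↦ ?_, Set.mem_iUnion.2 ⟨0, (hEj 0).punit_mem⟩, fun f hM hN ↦ ?_,
    fun f hM hN ↦ ?_, fun _ ↦ bot_le, fun hf hg h _ hL hQ ↦ ?_⟩
  · obtain ⟨j, hj⟩ := Set.mem_iUnion.1 hM
    exact Set.mem_iUnion.2 ⟨j, (hEj j).mem_of_equiv e hj⟩
  · obtain ⟨j, hMj, hNj⟩ := key hM hN
    exact Set.mem_iUnion.2 ⟨j, (hEj j).ker_mem f hMj hNj⟩
  · obtain ⟨j, hMj, hNj⟩ := key hM hN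
    exact Set.mem_iUnion.2 ⟨j, (hEj j).coker_mem f hMj hNj⟩
  · obtain ⟨j, hLj, hQj⟩ := key hL hQ
    exact Set.mem_iUnion.2 ⟨j + 1, (hEj j).mem_selfExtensions hb.pow hf hg h hLj hQj⟩

theorem isWideSubcategory (hE : IsWideTorsionClass ⊥ E) : IsWideSubcategory E where
  mem_of_iso {X Y} e hX := hE.mem_of_equiv (M := X) (N := Y) e.toLinearEquiv hX
  kernel_mem f hX hY := hE.mem_of_equiv (M := LinearMap.ker f.hom)
    (N := (kernel f : ModuleCat.{u} A)) (ModuleCat.kernelIsoKer f).symm.toLinearEquiv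
    (hE.ker_mem f.hom hX hY)
  cokernel_mem {_ Y} f hX hY := hE.mem_of_equiv (M := Y ⧸ LinearMap.range f.hom)
    (N := (cokernel f : ModuleCat.{u} A))
    (ModuleCat.cokernelIsoRangeQuotient f).symm.toLinearEquiv (hE.coker_mem f.hom hX hY)
  extension_mem S hS h₁ h₃ := hE.extension_mem (L := S.X₁) (N := S.X₂) (Q := S.X₃)
    hS.moduleCat_injective_f hS.moduleCat_surjective_g
    ((ShortComplex.ShortExact.moduleCat_exact_iff_function_exact S).1 hS.exact) bot_le h₁ h₃

theorem mem_of_mem_wideClosure (hE : IsWideTorsionClass b E) (hb : b.FG)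
    (hN : ModuleCat.of A N ∈ wideClosure E) (hbN : b ≤ Module.annihilator A N) :
    ModuleCat.of A N ∈ E := by
  have h := Set.mem_sInter.1 hN _ ⟨(hE.iUnion_iterSelfExtensions hb).isWideSubcategory,
    Set.subset_iUnion (_root_.iterSelfExtensions b E) 0⟩
  obtain ⟨j, hj⟩ := Set.mem_iUnion.1 h
  exact hE.mem_of_mem_iterSelfExtensions hb hj hbN

end WideClosure

end IsWideTorsionClass

theorem IsWideSubcategory.isWideTorsionClass {A : Type u} [CommRing A]
    {C : Set (ModuleCat.{u} A)} (hC : IsWideSubcategory C) (hne : C.Nonempty) :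
    IsWideTorsionClass ⊥ C where
  mem_of_equiv e hM := hC.mem_of_iso e.toModuleIso hM
  punit_mem := by
    obtain ⟨M, hM⟩ := hne
    have hz : IsZero (kernel (𝟙 M)) := isZero_kernel_of_mono _
    exact hC.mem_of_iso (hz.iso (ModuleCat.isZero_of_subsingleton _)) (hC.kernel_mem (𝟙 M) hM hM)
  ker_mem f hM hN := hC.mem_of_iso (ModuleCat.kernelIsoKer (ModuleCat.ofHom f))
    (hC.kernel_mem _ hM hN)
  coker_mem f hM hN := hC.mem_of_iso (ModuleCat.cokernelIsoRangeQuotient (ModuleCat.ofHom f))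
    (hC.cokernel_mem _ hM hN)
  le_annihilator _ := bot_le
  extension_mem {L N Q} _ _ _ _ _ _ f g hf hg h _ hL hQ := by
    let S : ShortComplex (ModuleCat.{u} A) :=
      ShortComplex.mk (ModuleCat.ofHom f) (ModuleCat.ofHom g)
        (ModuleCat.hom_ext h.linearMap_comp_eq_zero)
    exact hC.extension_mem S (ModuleCat.shortComplex_shortExact S h hf hg) hL hQ

lemma isWideSubcategory_wideClosure {T : Type*} [Category T] [Abelian T] (S : Set T) :
    IsWideSubcategory (wideClosure S) where
  mem_of_iso e hX C hC := hC.1.mem_of_iso e (hX C hC)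
  kernel_mem f hX hY C hC := hC.1.kernel_mem f (hX C hC) (hY C hC)
  cokernel_mem f hX hY C hC := hC.1.cokernel_mem f (hX C hC) (hY C hC)
  extension_mem Z hZ h₁ h₃ C hC := hC.1.extension_mem Z hZ (h₁ C hC) (h₃ C hC)

lemma subset_wideClosure {T : Type*} [Category T] [Abelian T] (S : Set T) : S ⊆ wideClosure S :=
  fun _ hX _ hC ↦ hC.2 hX

lemma wideClosure_subset {T : Type*} [Category T] [Abelian T] {S C : Set T}
    (hC : IsWideSubcategory C) (h : S ⊆ C) : wideClosure S ⊆ C :=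
  Set.sInter_subset_of_mem ⟨hC, h⟩

/-- A module is *coherent* if its finitely generated submodules are finitely presented. Unlike in
part of the literature, the module itself need not be finitely generated. -/
def IsCoherentModule (A M : Type*) [Ring A] [AddCommGroup M] [Module A M] : Prop :=
  ∀ K : Submodule A M, K.FG → Module.FinitePresentation A K

namespace IsCoherentModule

variable {A L N Q : Type*} [CommRing A] [AddCommGroup L] [Module A L] [AddCommGroup N]
  [Module A N] [AddCommGroup Q] [Module A Q]

lemma of_injective {f : L →ₗ[A] N} (hf : Function.Injective f) (hN : IsCoherentModule A N) :
    IsCoherentModule A L := fun K hK ↦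
  have := hN (K.map f) (hK.map f)
  .of_equiv (Submodule.equivMapOfInjective f hf K).symm

lemma of_exact {f : L →ₗ[A] N} {g : N →ₗ[A] Q} (hf : Function.Injective f)
    (h : Function.Exact f g) (hL : IsCoherentModule A L) (hQ : IsCoherentModule A Q) :
    IsCoherentModule A N := by
  intro K hK
  have := hQ (K.map g) (hK.map g)
  let gK : K →ₗ[A] K.map g := g.restrict fun x hx ↦ ⟨x, hx, rfl⟩
  have hgK : Function.Surjective gK := by
    rintro ⟨_, x, hx, rfl⟩
    exact ⟨⟨x, hx⟩, rfl⟩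
  have : Module.Finite A K := Module.Finite.iff_fg.2 hK
  have hker : (LinearMap.ker gK).FG := Module.FinitePresentation.fg_ker gK hgK
  let t : LinearMap.ker gK →ₗ[A] L := LinearMap.codRestrictOfInjective
    (K.subtype ∘ₗ (LinearMap.ker gK).subtype) f hf
    fun p ↦ (h p.1.1).1 (Subtype.ext_iff.1 p.2)
  have ht : Function.Injective t := fun x y hxy ↦ by
    have hft (p) : f (t p) = p.1.1 := LinearMap.codRestrictOfInjective_comp_apply _ _ hf _ p
    exact Subtype.ext (Subtype.ext ((hft x).symm.trans ((congrArg f hxy).trans (hft y))))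
  have := hL.of_injective ht ⊤ (Module.Finite.iff_fg.2 hker).1
  have : Module.FinitePresentation A (LinearMap.ker gK) := .of_equiv Submodule.topEquiv
  exact Module.finitePresentation_of_ker gK hgK

lemma of_surjective {f : N →ₗ[A] Q} (hf : Function.Surjective f) (hker : (LinearMap.ker f).FG)
    (hN : IsCoherentModule A N) : IsCoherentModule A Q := by
  intro K hK
  have hle : LinearMap.ker f ≤ K.comap f := LinearMap.ker_le_comap f
  have hKf : (K.comap f).FG := by
    refine Submodule.fg_of_fg_map_of_fg_inf_ker f ?_ ?_
    · rwa [Submodule.map_comap_eq_of_surjective hf]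
    · rwa [inf_eq_right.2 hle]
  have := hN _ hKf
  refine Module.finitePresentation_of_surjective
    (f.restrict (p := K.comap f) (q := K) fun _ hx ↦ hx)
    (fun ⟨x, hx⟩ ↦ ?_) ?_
  · obtain ⟨y, rfl⟩ := hf x
    exact ⟨⟨y, hx⟩, rfl⟩
  · refine Submodule.fg_of_fg_map_injective (K.comap f).subtype Subtype.val_injective ?_
    rw [LinearMap.ker_restrict, Submodule.map_comap_subtype]
    rwa [inf_eq_right.2 hle]

end IsCoherentModule

namespace IsLeftCoherentRing

variable {A : Type u} [CommRing A] (hA : IsLeftCoherentRing A)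
include hA

lemma isCoherentModule_fin_fun (n : ℕ) : IsCoherentModule A (Fin n → A) := by
  induction n with
  | zero => exact fun K _ ↦ inferInstance
  | succ n ih =>
    let e := Fin.consLinearEquiv A fun _ : Fin (n + 1) ↦ A
    have hprod : IsCoherentModule A (A × (Fin n → A)) :=
      .of_exact LinearMap.inl_injective .inl_snd hA ih
    exact hprod.of_injective e.symm.injective

lemma isCoherentModule (N : Type*) [AddCommGroup N] [Module A N] [Module.FinitePresentation A N] :
    IsCoherentModule A N := by
  obtain ⟨n, K, e, hK⟩ := Module.FinitePresentation.exists_fin A N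
  refine (hA.isCoherentModule_fin_fun n).of_surjective (f := e.symm.toLinearMap ∘ₗ K.mkQ)
    (e.symm.surjective.comp K.mkQ_surjective) ?_
  rwa [LinearEquiv.ker_comp, Submodule.ker_mkQ]

theorem isWideTorsionClass_finPresModules : IsWideTorsionClass ⊥ (finPresModules A) where
  mem_of_equiv e (_ : Module.FinitePresentation A _) := .of_equiv e
  punit_mem := inferInstanceAs (Module.FinitePresentation A PUnit.{u + 1})
  ker_mem {M N} _ _ _ _ f hM hN := by
    change Module.FinitePresentation A M at hM
    change Module.FinitePresentation A N at hN
    have := hA.isCoherentModule N (LinearMap.range f)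
      (Module.Finite.iff_fg.1 inferInstance)
    have hker := Module.FinitePresentation.fg_ker f.rangeRestrict f.surjective_rangeRestrict
    rw [LinearMap.ker_rangeRestrict] at hker
    exact hA.isCoherentModule M _ hker
  coker_mem {M N} _ _ _ _ f (hM : Module.FinitePresentation A M)
      (hN : Module.FinitePresentation A N) := by
    refine Module.finitePresentation_of_surjective (LinearMap.range f).mkQ
      (Submodule.mkQ_surjective _) ?_
    rw [Submodule.ker_mkQ]
    exact Module.Finite.iff_fg.1 inferInstance
  le_annihilator _ := bot_le
  extension_mem {L N Q} _ _ _ _ _ _ f g hf hg h _ hL hQ := by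
    change Module.FinitePresentation A L at hL
    change Module.FinitePresentation A Q at hQ
    have : Module.FinitePresentation A (LinearMap.ker g) := .of_equiv
      ((LinearEquiv.ofInjective f hf).trans (LinearEquiv.ofEq _ _ (LinearMap.exact_iff.1 h).symm))
    exact Module.finitePresentation_of_ker g hg

theorem finPresModules_mem_wideLatticeFP : finPresModules A ∈ wideLatticeFP A :=
  ⟨hA.isWideTorsionClass_finPresModules.isWideSubcategory,
    ⟨_, hA.isWideTorsionClass_finPresModules.punit_mem⟩, subset_rfl⟩

end IsLeftCoherentRing

section Quotient

variable {A : Type u} [CommRing A] {a : Ideal A}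

lemma finitePresentation_quotient (ha : a.FG) : Module.FinitePresentation A (A ⧸ a) := by
  refine Module.finitePresentation_of_surjective a.mkQ (Submodule.mkQ_surjective _) ?_
  rwa [Submodule.ker_mkQ]

lemma finitePresentation_quotient_iff (ha : a.FG) {N : Type*} [AddCommGroup N] [Module A N]
    [Module (A ⧸ a) N] [IsScalarTower A (A ⧸ a) N] :
    Module.FinitePresentation (A ⧸ a) N ↔ Module.FinitePresentation A N := by
  have := finitePresentation_quotient ha
  refine ⟨fun _ ↦ .trans A N (A ⧸ a), fun _ ↦ ?_⟩
  have : Module.Finite (A ⧸ a) N := .of_restrictScalars_finite A _ _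
  obtain ⟨n, f, hf⟩ := Module.Finite.exists_fin' (A ⧸ a) N
  exact Module.finitePresentation_of_surjective f hf
    (.of_restrictScalars (R := A) (Module.FinitePresentation.fg_ker (f.restrictScalars A) hf))

theorem IsLeftCoherentRing.quotient (hA : IsLeftCoherentRing A) (ha : a.FG) :
    IsLeftCoherentRing (A ⧸ a) := by
  intro I hI
  have := finitePresentation_quotient ha
  have : Module.Finite (A ⧸ a) I := Module.Finite.iff_fg.2 hI
  have hfin : Module.Finite A I := .trans (A ⧸ a) I
  rw [finitePresentation_quotient_iff ha]
  exact hA.isCoherentModule _ (I.restrictScalars A) (Module.Finite.iff_fg.1 hfin)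

/-- The class of `A`-modules obtained from a class `C` of `A ⧸ a`-modules by restriction of
scalars, closed under isomorphism. -/
def restrictScalarsClass (C : Set (ModuleCat.{u} (A ⧸ a))) : Set (ModuleCat.{u} A) :=
  {N | ∃ M ∈ C, ∃ e : M ≃+ N, ∀ (r : A) (m : M), e (Ideal.Quotient.mk a r • m) = r • e m}

variable {C : Set (ModuleCat.{u} (A ⧸ a))} {N : Type u} [AddCommGroup N] [Module A N]

lemma le_annihilator_of_mem_restrictScalarsClass
    (hN : ModuleCat.of A N ∈ restrictScalarsClass C) : a ≤ Module.annihilator A N := by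
  obtain ⟨M, -, e, he⟩ := hN
  refine fun x hx ↦ Module.mem_annihilator.2 fun n ↦ ?_
  obtain ⟨m, rfl⟩ := e.surjective n
  have := he x m
  rw [Ideal.Quotient.eq_zero_iff_mem.2 hx, zero_smul, map_zero] at this
  exact this.symm

lemma exists_isScalarTower_quotient (hN : a ≤ Module.annihilator A N) :
    ∃ _ : Module (A ⧸ a) N, IsScalarTower A (A ⧸ a) N :=
  have h : Module.IsTorsionBySet A N (a : Set A) :=
    fun n x ↦ Module.mem_annihilator.1 (hN x.2) n
  ⟨h.module, h.isScalarTower⟩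

lemma mem_restrictScalarsClass_iff [Module (A ⧸ a) N] [IsScalarTower A (A ⧸ a) N]
    (hC : IsWideTorsionClass ⊥ C) :
    ModuleCat.of A N ∈ restrictScalarsClass C ↔ ModuleCat.of (A ⧸ a) N ∈ C := by
  have hmk (r : A) (n : N) : Ideal.Quotient.mk a r • n = r • n := algebraMap_smul (A ⧸ a) r n
  constructor
  · rintro ⟨M, hM, e, he⟩
    change M ≃+ N at e
    refine hC.mem_of_equiv (M := M) { e with map_smul' := fun r m ↦ ?_ } hM
    obtain ⟨r, rfl⟩ := Ideal.Quotient.mk_surjective r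
    exact (he r m).trans (hmk r (e m)).symm
  · exact fun h ↦ ⟨_, h, AddEquiv.refl _, hmk⟩

theorem isWideTorsionClass_restrictScalarsClass (hC : IsWideTorsionClass ⊥ C) :
    IsWideTorsionClass a (restrictScalarsClass C) := by
  have hmk := Ideal.Quotient.mk_surjective (I := a)
  refine ⟨fun {M N} _ _ _ _ e ⟨M', hM', e', he⟩ ↦ ?_,
    ⟨_, hC.punit_mem, AddEquiv.refl _, fun _ _ ↦ rfl⟩, fun {M N} _ _ _ _ f hM hN ↦ ?_,
    fun {M N} _ _ _ _ f hM hN ↦ ?_, le_annihilator_of_mem_restrictScalarsClass,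
    fun {L N Q} _ _ _ _ _ _ f g hf hg h hN hL hQ ↦ ?_⟩
  · change M' ≃+ M at e'
    exact ⟨M', hM', e'.trans e.toAddEquiv, fun r m ↦
      (congrArg e (he r m)).trans (map_smul e r _)⟩
  · obtain ⟨_, _⟩ := exists_isScalarTower_quotient (le_annihilator_of_mem_restrictScalarsClass hM)
    obtain ⟨_, _⟩ := exists_isScalarTower_quotient (le_annihilator_of_mem_restrictScalarsClass hN)
    rw [mem_restrictScalarsClass_iff hC] at hM hN
    exact (mem_restrictScalarsClass_iff
      (N := LinearMap.ker (f.extendScalarsOfSurjective (S := A ⧸ a) hmk)) hC).2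
      (hC.ker_mem _ hM hN)
  · obtain ⟨_, _⟩ := exists_isScalarTower_quotient (le_annihilator_of_mem_restrictScalarsClass hM)
    obtain ⟨_, _⟩ := exists_isScalarTower_quotient (le_annihilator_of_mem_restrictScalarsClass hN)
    rw [mem_restrictScalarsClass_iff hC] at hM hN
    exact (mem_restrictScalarsClass_iff
      (N := N ⧸ LinearMap.range (f.extendScalarsOfSurjective (S := A ⧸ a) hmk)) hC).2
      (hC.coker_mem _ hM hN)
  · obtain ⟨_, _⟩ := exists_isScalarTower_quotient (le_annihilator_of_mem_restrictScalarsClass hL)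
    obtain ⟨_, _⟩ := exists_isScalarTower_quotient (le_annihilator_of_mem_restrictScalarsClass hQ)
    obtain ⟨_, _⟩ := exists_isScalarTower_quotient hN
    rw [mem_restrictScalarsClass_iff hC] at hL hQ ⊢
    exact hC.extension_mem (f := f.extendScalarsOfSurjective (S := A ⧸ a) hmk)
      (g := g.extendScalarsOfSurjective (S := A ⧸ a) hmk) hf hg h bot_le hL hQ

lemma restrictScalarsClass_subset_finPresModules (ha : a.FG) (hC : IsWideTorsionClass ⊥ C)
    (h : C ⊆ finPresModules (A ⧸ a)) : restrictScalarsClass C ⊆ finPresModules A := by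
  intro M hM
  change ModuleCat.of A M ∈ restrictScalarsClass C at hM
  obtain ⟨_, _⟩ := exists_isScalarTower_quotient (le_annihilator_of_mem_restrictScalarsClass hM)
  rw [mem_restrictScalarsClass_iff hC] at hM
  exact (finitePresentation_quotient_iff ha).1 (h hM)

end Quotient

/-! ### Small objects of the derived category -/

section DerivedHomology

variable {A : Type u} [CommRing A] [HasDerivedCategory.{w} (ModuleCat.{u} A)]

/-- The cohomology module of an object of the derived category. -/
noncomputable abbrev derivedHomology (n : ℤ) (X : DerivedCategory (ModuleCat.{u} A)) :
    ModuleCat.{u} A :=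
  (DerivedCategory.homologyFunctor (ModuleCat.{u} A) n).obj X

/-- The map on cohomology modules induced by a morphism in the derived category. -/
noncomputable abbrev derivedHomologyMap (n : ℤ) {X Y : DerivedCategory (ModuleCat.{u} A)}
    (f : X ⟶ Y) : derivedHomology n X →ₗ[A] derivedHomology n Y :=
  ((DerivedCategory.homologyFunctor (ModuleCat.{u} A) n).map f).hom

/-- The identification of the cohomology modules of a shift. -/
noncomputable def derivedHomologyShiftEquiv (m n n' : ℤ) (h : m + n = n')
    (X : DerivedCategory (ModuleCat.{u} A)) :
    derivedHomology n (X⟦m⟧) ≃ₗ[A] derivedHomology n' X :=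
  (((DerivedCategory.homologyFunctor (ModuleCat.{u} A) 0).shiftIso m n n' h).app X).toLinearEquiv

lemma leftInverse_derivedHomologyMap {X Y : DerivedCategory (ModuleCat.{u} A)} {i : X ⟶ Y}
    {r : Y ⟶ X} (h : i ≫ r = 𝟙 X) (n : ℤ) :
    Function.LeftInverse (derivedHomologyMap n r) (derivedHomologyMap n i) := fun v ↦ by
  have := (DerivedCategory.homologyFunctor (ModuleCat.{u} A) n).map_comp i r
  rw [h, CategoryTheory.Functor.map_id] at this
  exact (LinearMap.congr_fun (congrArg ModuleCat.Hom.hom this) v).symm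

lemma subsingleton_derivedHomology_of_isZero {X : DerivedCategory (ModuleCat.{u} A)}
    (h : IsZero X) (n : ℤ) : Subsingleton (derivedHomology n X) :=
  ModuleCat.subsingleton_of_isZero (Functor.map_isZero _ h)

lemma linear_homologyFunctor (n : ℤ) :
    (DerivedCategory.homologyFunctor (ModuleCat.{u} A) n).Linear A := by
  let F := HomologicalComplex.homologyFunctor (ModuleCat.{u} A) (ComplexShape.up ℤ) n
  let G := DerivedCategory.homologyFunctor (ModuleCat.{u} A) n
  let W := HomologicalComplex.quasiIso (ModuleCat.{u} A) (ComplexShape.up ℤ)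
  have hF : F.Linear A := ⟨fun f x ↦ ShortComplex.homologyMap_smul
    ((HomologicalComplex.shortComplexFunctor _ _ n).map f) x⟩
  have : Localization.Lifting DerivedCategory.Q W F G :=
    ⟨DerivedCategory.homologyFunctorFactors (ModuleCat.{u} A) n⟩
  exact (Localization.functor_linear_iff DerivedCategory.Q W A F G).1 hF

lemma derivedHomologyMap_smul_id (n : ℤ) (x : A) (X : DerivedCategory (ModuleCat.{u} A)) :
    derivedHomologyMap n (x • 𝟙 X) = x • LinearMap.id := by
  have := linear_homologyFunctor (A := A) n
  have h := (DerivedCategory.homologyFunctor (ModuleCat.{u} A) n).map_smul (R := A) x (𝟙 X)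
  rw [CategoryTheory.Functor.map_id] at h
  exact congrArg ModuleCat.Hom.hom h

section Exact

variable {T : Triangle (DerivedCategory (ModuleCat.{u} A))} (hT : T ∈ distTriang _)
include hT

lemma exact_derivedHomologyMap (n : ℤ) :
    Function.Exact (derivedHomologyMap n T.mor₁) (derivedHomologyMap n T.mor₂) :=
  (ShortComplex.ShortExact.moduleCat_exact_iff_function_exact _).1
    (DerivedCategory.HomologySequence.exact₂ T hT n)

lemma exists_exact_derivedHomologyMap (n₀ n₁ : ℤ) (h : n₀ + 1 = n₁) :
    ∃ δ : derivedHomology n₀ T.obj₃ →ₗ[A] derivedHomology n₁ T.obj₁,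
      Function.Exact (derivedHomologyMap n₀ T.mor₂) δ ∧
      Function.Exact δ (derivedHomologyMap n₁ T.mor₁) :=
  ⟨(DerivedCategory.HomologySequence.δ T n₀ n₁ h).hom,
    (ShortComplex.ShortExact.moduleCat_exact_iff_function_exact _).1
      (DerivedCategory.HomologySequence.exact₃ T hT n₀ n₁ h),
    (ShortComplex.ShortExact.moduleCat_exact_iff_function_exact _).1
      (DerivedCategory.HomologySequence.exact₁ T hT n₀ n₁ h)⟩

end Exact

end DerivedHomology

lemma IsWideTorsionClass.mem_of_leftInverse {A : Type u} [CommRing A] {b : Ideal A}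
    {E : Set (ModuleCat.{u} A)} (hE : IsWideTorsionClass b E) {M N : Type u} [AddCommGroup M]
    [Module A M] [AddCommGroup N] [Module A N] {i : M →ₗ[A] N} {r : N →ₗ[A] M}
    (h : Function.LeftInverse r i) (hN : ModuleCat.of A N ∈ E) : ModuleCat.of A M ∈ E := by
  have hr := hE.range_mem (i ∘ₗ r) hN hN
  rw [LinearMap.range_comp_of_range_eq_top _ (LinearMap.range_eq_top.2 h.surjective)] at hr
  exact hE.mem_of_equiv (LinearEquiv.ofInjective i h.injective).symm hr

section Thick

variable {A : Type u} [CommRing A] [HasDerivedCategory.{w} (ModuleCat.{u} A)]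

theorem isThickSubcategory_setOf_derivedHomology_mem {C : Set (ModuleCat.{u} A)}
    (hC : IsWideTorsionClass ⊥ C) : IsThickSubcategory
      {X : DerivedCategory (ModuleCat.{u} A) | ∀ n : ℤ, derivedHomology n X ∈ C} where
  mem_of_iso {X Y} e hX n := hC.mem_of_leftInverse (M := derivedHomology n Y)
    (N := derivedHomology n X) (leftInverse_derivedHomologyMap e.inv_hom_id n) (hX n)
  zero_mem n :=
    have := subsingleton_derivedHomology_of_isZero (A := A) (isZero_zero _) n
    hC.mem_of_subsingleton
  shift_mem X m hX n := hC.mem_of_equiv (M := derivedHomology (m + n) X)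
    (N := derivedHomology n (X⟦m⟧)) (derivedHomologyShiftEquiv m n _ rfl X).symm (hX _)
  ext₂ T hT h₁ h₃ n := by
    obtain ⟨δ, -, hδ⟩ := exists_exact_derivedHomologyMap hT (n - 1) n (by ring)
    obtain ⟨δ', hδ', -⟩ := exists_exact_derivedHomologyMap hT n (n + 1) rfl
    exact hC.mem_of_exact hδ (exact_derivedHomologyMap hT n) hδ' (h₃ _) (h₁ _) bot_le (h₃ _) (h₁ _)
  retract_mem X Y i r h hY n := hC.mem_of_leftInverse (M := derivedHomology n X)
    (N := derivedHomology n Y) (leftInverse_derivedHomologyMap h n) (hY n)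

theorem isThickSubcategory_setOf_isSmallObject :
    IsThickSubcategory {X : DerivedCategory (ModuleCat.{u} A) | IsSmallObject X} where
  mem_of_iso e hX D hD h := hD.mem_of_iso e (hX D hD h)
  zero_mem _ hD _ := hD.zero_mem
  shift_mem X n hX D hD h := hD.shift_mem X n (hX D hD h)
  ext₂ T hT h₁ h₃ D hD h := hD.ext₂ T hT (h₁ D hD h) (h₃ D hD h)
  retract_mem X Y i r hir hY D hD h := hD.retract_mem X Y i r hir (hY D hD h)

theorem IsThickSubcategory.inter {T : Type*} [Category T] [HasZeroObject T] [Preadditive T]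
    [HasShift T ℤ] [∀ n : ℤ, (shiftFunctor T n).Additive] [Pretriangulated T] {D D' : Set T}
    (h : IsThickSubcategory D) (h' : IsThickSubcategory D') : IsThickSubcategory (D ∩ D') where
  mem_of_iso e hX := ⟨h.mem_of_iso e hX.1, h'.mem_of_iso e hX.2⟩
  zero_mem := ⟨h.zero_mem, h'.zero_mem⟩
  shift_mem X n hX := ⟨h.shift_mem X n hX.1, h'.shift_mem X n hX.2⟩
  ext₂ T hT h₁ h₃ := ⟨h.ext₂ T hT h₁.1 h₃.1, h'.ext₂ T hT h₁.2 h₃.2⟩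
  retract_mem X Y i r hir hY := ⟨h.retract_mem X Y i r hir hY.1, h'.retract_mem X Y i r hir hY.2⟩

theorem fSet_mem_thickLatticeSmall {C : Set (ModuleCat.{u} A)} (hC : IsWideTorsionClass ⊥ C) :
    fSet C ∈ thickLatticeSmall.{w} A :=
  ⟨isThickSubcategory_setOf_isSmallObject.inter (isThickSubcategory_setOf_derivedHomology_mem hC),
    fun _ hX ↦ hX.1⟩

theorem isThickSubcategory_setOf_finite_derivedHomology : IsThickSubcategory
    {X : DerivedCategory (ModuleCat.{u} A) | {n | Nontrivial (derivedHomology n X)}.Finite} where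
  mem_of_iso {X Y} e hX := hX.subset fun n (_ : Nontrivial (derivedHomology n Y)) ↦
    (leftInverse_derivedHomologyMap e.inv_hom_id n).injective.nontrivial
  zero_mem := Set.finite_empty.subset fun n (hn : Nontrivial _) ↦
    not_nontrivial_iff_subsingleton.2
      (subsingleton_derivedHomology_of_isZero (A := A) (isZero_zero _) n) hn
  shift_mem X m hX := (hX.preimage (add_right_injective m).injOn).subset
    fun n (_ : Nontrivial (derivedHomology n (X⟦m⟧))) ↦
      (derivedHomologyShiftEquiv m n _ rfl X).symm.surjective.nontrivial
  ext₂ T hT h₁ h₃ := (h₁.union h₃).subset fun n (hn : Nontrivial (derivedHomology n T.obj₂)) ↦ by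
    by_contra! h
    obtain ⟨h₁, h₃⟩ : ¬ Nontrivial (derivedHomology n T.obj₁) ∧
      ¬ Nontrivial (derivedHomology n T.obj₃) := by simpa using h
    rw [not_nontrivial_iff_subsingleton] at h₁ h₃
    obtain ⟨v, hv⟩ := exists_ne (0 : derivedHomology n T.obj₂)
    obtain ⟨u, rfl⟩ := (exact_derivedHomologyMap hT n v).1 (Subsingleton.elim _ _)
    exact hv (by rw [Subsingleton.elim u 0, map_zero])
  retract_mem X Y i r h hY := hY.subset fun n (_ : Nontrivial (derivedHomology n X)) ↦
    (leftInverse_derivedHomologyMap h n).injective.nontrivial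

end Thick

section HomologyAnnihilator

variable {A : Type u} [CommRing A] [HasDerivedCategory.{w} (ModuleCat.{u} A)]

/-- The ideal of all scalars which annihilate every cohomology module of an object of the derived
category. -/
noncomputable def homologyAnnihilator (X : DerivedCategory (ModuleCat.{u} A)) : Ideal A :=
  ⨅ n : ℤ, Module.annihilator A (derivedHomology n X)

variable {X Y : DerivedCategory (ModuleCat.{u} A)}

lemma mem_homologyAnnihilator {x : A} :
    x ∈ homologyAnnihilator X ↔ ∀ (n : ℤ) (v : derivedHomology n X), x • v = 0 := by
  simp only [homologyAnnihilator, Submodule.mem_iInf, Module.mem_annihilator]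

lemma homologyAnnihilator_le_annihilator (X : DerivedCategory (ModuleCat.{u} A)) (n : ℤ) :
    homologyAnnihilator X ≤ Module.annihilator A (derivedHomology n X) :=
  iInf_le _ n

lemma homologyAnnihilator_le_of_retract {i : X ⟶ Y} {r : Y ⟶ X} (h : i ≫ r = 𝟙 X) :
    homologyAnnihilator Y ≤ homologyAnnihilator X :=
  iInf_mono fun n ↦
    LinearMap.annihilator_le_of_injective _ (leftInverse_derivedHomologyMap h n).injective

lemma homologyAnnihilator_eq_of_iso (e : X ≅ Y) : homologyAnnihilator X = homologyAnnihilator Y :=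
  (homologyAnnihilator_le_of_retract e.inv_hom_id).antisymm
    (homologyAnnihilator_le_of_retract e.hom_inv_id)

lemma homologyAnnihilator_le_shift (X : DerivedCategory (ModuleCat.{u} A)) (m : ℤ) :
    homologyAnnihilator X ≤ homologyAnnihilator (X⟦m⟧) :=
  le_iInf fun n ↦ (iInf_le _ (m + n)).trans
    (derivedHomologyShiftEquiv m n _ rfl X).symm.annihilator_eq.le

lemma homologyAnnihilator_mul_le {T : Triangle (DerivedCategory (ModuleCat.{u} A))}
    (hT : T ∈ distTriang _) :
    homologyAnnihilator T.obj₁ * homologyAnnihilator T.obj₃ ≤ homologyAnnihilator T.obj₂ :=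
  le_iInf fun n ↦ mul_le_annihilator_of_exact (exact_derivedHomologyMap hT n) (iInf_le _ n)
    (iInf_le _ n)

theorem isThickSubcategory_setOf_mem_radical (x : A) : IsThickSubcategory
    {X : DerivedCategory (ModuleCat.{u} A) | x ∈ (homologyAnnihilator X).radical} where
  mem_of_iso e hX := Ideal.radical_mono (homologyAnnihilator_eq_of_iso e).le hX
  zero_mem := Ideal.le_radical (mem_homologyAnnihilator.2 fun n _ ↦
    have := subsingleton_derivedHomology_of_isZero (A := A) (isZero_zero _) n
    Subsingleton.elim _ _)
  shift_mem X m hX := Ideal.radical_mono (homologyAnnihilator_le_shift X m) hX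
  ext₂ _ hT h₁ h₃ := Ideal.radical_mono (homologyAnnihilator_mul_le hT)
    ((Ideal.radical_mul _ _).ge ⟨h₁, h₃⟩)
  retract_mem _ _ _ _ h hY := Ideal.radical_mono (homologyAnnihilator_le_of_retract h) hY

end HomologyAnnihilator

section Pretriangulated

variable {T : Type*} [Category T] [Preadditive T] [HasZeroObject T] [HasShift T ℤ]
  [∀ n : ℤ, (shiftFunctor T n).Additive] [Pretriangulated T]

lemma exists_distTriang_retract {X : Triangle T} (hX : X ∈ distTriang T) {M N : T}
    {i : X.obj₁ ⟶ M} {r : M ⟶ X.obj₁} (h : i ≫ r = 𝟙 _)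
    {i' : X.obj₃ ⟶ N} {r' : N ⟶ X.obj₃} (h' : i' ≫ r' = 𝟙 _) :
    ∃ (W : T) (f : M ⟶ W) (g : W ⟶ N) (k : N ⟶ M⟦(1 : ℤ)⟧), Triangle.mk f g k ∈ distTriang T ∧
      ∃ (φ : X.obj₂ ⟶ W) (ψ : W ⟶ X.obj₂), φ ≫ ψ = 𝟙 _ := by
  obtain ⟨W, f, g, hW⟩ := distinguished_cocone_triangle₂ (r' ≫ X.mor₃ ≫ i⟦1⟧')
  obtain ⟨(φ : X.obj₂ ⟶ W), hφ₁ : X.mor₁ ≫ φ = i ≫ f, hφ₂ : X.mor₂ ≫ i' = φ ≫ g⟩ :=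
    complete_distinguished_triangle_morphism₂ X _ hX hW i i' (by
      change X.mor₃ ≫ i⟦1⟧' = i' ≫ r' ≫ X.mor₃ ≫ i⟦1⟧'
      rw [reassoc_of% h'])
  obtain ⟨(ψ : W ⟶ X.obj₂), hψ₁ : f ≫ ψ = r ≫ X.mor₁, hψ₂ : g ≫ r' = ψ ≫ X.mor₂⟩ :=
    complete_distinguished_triangle_morphism₂ _ X hW hX r r' (by
      change (r' ≫ X.mor₃ ≫ i⟦1⟧') ≫ r⟦1⟧' = r' ≫ X.mor₃
      rw [Category.assoc, Category.assoc, ← Functor.map_comp, h, CategoryTheory.Functor.map_id,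
        Category.comp_id])
  let θ : X ⟶ X :=
    { hom₁ := 𝟙 _
      hom₂ := φ ≫ ψ
      hom₃ := 𝟙 _
      comm₁ := by rw [reassoc_of% hφ₁, hψ₁, reassoc_of% h, Category.id_comp]
      comm₂ := by rw [Category.assoc, ← hψ₂, ← reassoc_of% hφ₂, h'] }
  have : IsIso (φ ≫ ψ) := isIso₂_of_isIso₁₃ θ hX hX (inferInstanceAs (IsIso (𝟙 _)))
    (inferInstanceAs (IsIso (𝟙 _)))
  exact ⟨W, f, g, _, hW, φ, ψ ≫ inv (φ ≫ ψ), by rw [← Category.assoc, IsIso.hom_inv_id]⟩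

lemma nonempty_iso_biprod_of_retract {X M : T} {i : X ⟶ M} {r : M ⟶ X} (h : i ≫ r = 𝟙 X) :
    ∃ X' : T, Nonempty (M ≅ X ⊞ X') := by
  obtain ⟨X', v, δ, hT⟩ := distinguished_cocone_triangle i
  have : Mono (i ≫ r) := h ▸ inferInstance
  have : Mono i := mono_of_mono i r
  obtain ⟨e, -, -⟩ := exists_iso_binaryBiproduct_of_distTriang _ hT
    (Triangle.mor₃_eq_zero_of_mono₁ _ hT this)
  exact ⟨X', ⟨e⟩⟩

lemma nonempty_iso_of_distTriang_biprod_inr {X X' Z : T} {v : X ⊞ X' ⟶ Z} {w : Z ⟶ X'⟦(1 : ℤ)⟧}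
    (hZ : Triangle.mk (biprod.inr : X' ⟶ X ⊞ X') v w ∈ distTriang T) : Nonempty (Z ≅ X) :=
  ⟨Triangle.π₃.mapIso (isoTriangleOfIso₁₂ _ _ hZ (binaryBiproductTriangle_distinguished X' X)
    (Iso.refl _) (biprod.braiding X X') (by
      change (biprod.inr : X' ⟶ X ⊞ X') ≫ (biprod.braiding X X').hom = 𝟙 X' ≫ biprod.inl
      ext <;> simp))⟩

variable {X X' W : T} {v : X ⊞ X' ⟶ W} {w : W ⟶ (X ⊞ X')⟦(1 : ℤ)⟧}
  (hW : Triangle.mk (biprod.snd ≫ biprod.inr : X ⊞ X' ⟶ X ⊞ X') v w ∈ distTriang T)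
include hW

lemma exists_distTriang_cone_biprod_snd_inr [IsTriangulated T] :
    ∃ (Z : T) (_ : Z ≅ X) (a : X⟦(1 : ℤ)⟧ ⟶ W) (b : W ⟶ Z) (c : Z ⟶ X⟦(1 : ℤ)⟧⟦(1 : ℤ)⟧),
      Triangle.mk a b c ∈ distTriang T := by
  obtain ⟨Z, p, q, hZ⟩ := distinguished_cocone_triangle (biprod.inr : X' ⟶ X ⊞ X')
  have o := Triangulated.someOctahedron rfl
    (rot_of_distTriang _ (binaryBiproductTriangle_distinguished X X')) hZ hW
  exact ⟨Z, (nonempty_iso_of_distTriang_biprod_inr hZ).some, _, _, _, o.mem⟩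

lemma exists_retract_cone_biprod_snd_inr :
    ∃ (φ : X⟦(1 : ℤ)⟧ ⟶ W) (ψ : W ⟶ X⟦(1 : ℤ)⟧), φ ≫ ψ = 𝟙 _ := by
  obtain ⟨(φ : X⟦(1 : ℤ)⟧ ⟶ W), -, hφ : 𝟙 _ ≫ (biprod.inl : X ⟶ X ⊞ X')⟦(1 : ℤ)⟧' = φ ≫ w⟩ :=
    complete_distinguished_triangle_morphism _ _ (contractible_distinguished₂ X) hW biprod.inl 0 (by
      change (0 : X ⟶ 0) ≫ (0 : 0 ⟶ X ⊞ X') = biprod.inl ≫ biprod.snd ≫ biprod.inr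
      simp)
  refine ⟨φ, w ≫ biprod.fst⟦1⟧', ?_⟩
  rw [Category.id_comp] at hφ
  rw [← reassoc_of% hφ, ← Functor.map_comp, biprod.inl_fst, CategoryTheory.Functor.map_id]

end Pretriangulated

namespace IsThickSubcategory

variable {T : Type*} [Category T] [Preadditive T] [HasZeroObject T] [HasShift T ℤ]
  [∀ n : ℤ, (shiftFunctor T n).Additive] [Pretriangulated T]

/-- The cone of the idempotent of `X ⊞ X'` with image `X'` is `X⟦1⟧ ⊞ X`: membership of `X` in a
thick subcategory can be tested on it, even if `X'` is arbitrary. -/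
lemma cone_biprod_snd_inr_mem_iff [IsTriangulated T] {D : Set T} (hD : IsThickSubcategory D)
    {X X' W : T} {v : X ⊞ X' ⟶ W} {w : W ⟶ (X ⊞ X')⟦(1 : ℤ)⟧}
    (hW : Triangle.mk (biprod.snd ≫ biprod.inr : X ⊞ X' ⟶ X ⊞ X') v w ∈ distTriang T) :
    W ∈ D ↔ X ∈ D := by
  constructor
  · intro h
    obtain ⟨φ, ψ, hφ⟩ := exists_retract_cone_biprod_snd_inr hW
    exact (hD.shift_mem_iff X 1).1 (hD.retract_mem _ W φ ψ hφ h)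
  · intro h
    obtain ⟨Z, e, a, b, c, hZ⟩ := exists_distTriang_cone_biprod_snd_inr hW
    exact hD.ext₂ _ hZ (hD.shift_mem X 1 h) (hD.mem_of_iso e.symm h)

end IsThickSubcategory

section BoundedFiniteFree

variable {A : Type u} [CommRing A]

/-- A bounded complex of finite free modules. -/
structure IsBoundedFiniteFree (L : CochainComplex (ModuleCat.{u} A) ℤ) : Prop where
  bounded : ∃ N : ℤ, ∀ n, N < |n| → Subsingleton (L.X n)
  free (n : ℤ) : Module.Free A (L.X n)
  finite (n : ℤ) : Module.Finite A (L.X n)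

namespace IsBoundedFiniteFree

variable {L L' : CochainComplex (ModuleCat.{u} A) ℤ}

lemma isKProjective (h : IsBoundedFiniteFree L) : L.IsKProjective := by
  obtain ⟨N, hN⟩ := h.bounded
  have : L.IsStrictlyLE N := (CochainComplex.isStrictlyLE_iff _ _).2 fun i hi ↦
    have := hN i (hi.trans_le (le_abs_self _))
    ModuleCat.isZero_of_subsingleton _
  have (n : ℤ) : Projective (L.X n) :=
    have := h.free n
    (IsProjective.iff_projective (L.X n)).1 inferInstance
  exact CochainComplex.isKProjective_of_projective L N

variable (A) in
lemma single : IsBoundedFiniteFree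
    ((CochainComplex.singleFunctor (ModuleCat.{u} A) 0).obj (ModuleCat.of A A)) := by
  set K := (CochainComplex.singleFunctor (ModuleCat.{u} A) 0).obj (ModuleCat.of A A)
  have h₀ (n : ℤ) (hn : n ≠ 0) : Subsingleton (K.X n) :=
    ModuleCat.subsingleton_of_isZero (HomologicalComplex.isZero_single_obj_X _ _ _ _ hn)
  have e : K.X 0 ≃ₗ[A] A := (HomologicalComplex.singleObjXSelf (ComplexShape.up ℤ) 0
    (ModuleCat.of A A)).toLinearEquiv
  refine ⟨⟨0, fun n hn ↦ h₀ n (abs_pos.1 hn)⟩, fun n ↦ ?_, fun n ↦ ?_⟩ <;>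
    obtain rfl | hn := eq_or_ne n 0
  · exact Module.Free.of_equiv e.symm
  · have := h₀ n hn
    infer_instance
  · exact Module.Finite.equiv e.symm
  · have := h₀ n hn
    infer_instance

lemma shift (h : IsBoundedFiniteFree L) (m : ℤ) : IsBoundedFiniteFree (L⟦m⟧) where
  bounded := by
    obtain ⟨N, hN⟩ := h.bounded
    refine ⟨N + |m|, fun n hn ↦ hN (n + m) ?_⟩
    grind
  free n := h.free (n + m)
  finite n := h.finite (n + m)

lemma mappingCone (h : IsBoundedFiniteFree L) (h' : IsBoundedFiniteFree L') (f : L ⟶ L') :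
    IsBoundedFiniteFree (CochainComplex.mappingCone f) := by
  let e (n : ℤ) : (CochainComplex.mappingCone f).X n ≃ₗ[A] L.X (n + 1) × L'.X n :=
    (HomologicalComplex.homotopyCofiber.XIsoBiprod f n (n + 1) rfl ≪≫
      ModuleCat.biprodIsoProd _ _).toLinearEquiv
  refine ⟨?_, fun n ↦ ?_, fun n ↦ ?_⟩
  · obtain ⟨N, hN⟩ := h.bounded
    obtain ⟨N', hN'⟩ := h'.bounded
    refine ⟨max (N + 1) N', fun n hn ↦ ?_⟩
    have := hN (n + 1) (by grind)
    have := hN' n (by grind)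
    exact (e n).toEquiv.subsingleton
  · have := h.free (n + 1)
    have := h'.free n
    exact Module.Free.of_equiv (e n).symm
  · have := h.finite (n + 1)
    have := h'.finite n
    exact Module.Finite.equiv (e n).symm

lemma exists_Q_map_eq [HasDerivedCategory.{w} (ModuleCat.{u} A)] (h : IsBoundedFiniteFree L)
    (φ : DerivedCategory.Q.obj L ⟶ DerivedCategory.Q.obj L') :
    ∃ f : L ⟶ L', DerivedCategory.Q.map f = φ := by
  have := h.isKProjective
  let q := DerivedCategory.quotientCompQhIso (ModuleCat.{u} A)
  obtain ⟨g, hg⟩ := (CochainComplex.IsKProjective.Qh_map_bijective L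
    ((HomotopyCategory.quotient _ _).obj L')).surjective (q.hom.app L ≫ φ ≫ q.inv.app L')
  obtain ⟨f, rfl⟩ := (HomotopyCategory.quotient _ (ComplexShape.up ℤ)).map_surjective g
  have hf := q.hom.naturality f
  rw [Functor.comp_map, hg] at hf
  exact ⟨f, by simpa using hf.symm⟩

end IsBoundedFiniteFree

variable [HasDerivedCategory.{w} (ModuleCat.{u} A)]

/-- An object of the derived category represented by a bounded complex of finite free modules. -/
def IsFiniteFreeObject (X : DerivedCategory (ModuleCat.{u} A)) : Prop :=
  ∃ L, IsBoundedFiniteFree L ∧ Nonempty (DerivedCategory.Q.obj L ≅ X)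

namespace IsFiniteFreeObject

variable {X Y : DerivedCategory (ModuleCat.{u} A)}

lemma of_iso (e : X ≅ Y) : IsFiniteFreeObject X → IsFiniteFreeObject Y :=
  fun ⟨L, hL, ⟨e'⟩⟩ ↦ ⟨L, hL, ⟨e' ≪≫ e⟩⟩

lemma shift (m : ℤ) : IsFiniteFreeObject X → IsFiniteFreeObject (X⟦m⟧) :=
  fun ⟨L, hL, ⟨e⟩⟩ ↦ ⟨L⟦m⟧, hL.shift m,
    ⟨(DerivedCategory.Q.commShiftIso m).app L ≪≫ (shiftFunctor _ m).mapIso e⟩⟩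

lemma obj₃ {T : Triangle (DerivedCategory (ModuleCat.{u} A))} (hT : T ∈ distTriang _)
    (h₁ : IsFiniteFreeObject T.obj₁) (h₂ : IsFiniteFreeObject T.obj₂) :
    IsFiniteFreeObject T.obj₃ := by
  obtain ⟨L, hL, ⟨e⟩⟩ := h₁
  obtain ⟨L', hL', ⟨e'⟩⟩ := h₂
  obtain ⟨f, hf⟩ := hL.exists_Q_map_eq (e.hom ≫ T.mor₁ ≫ e'.inv)
  refine ⟨_, hL.mappingCone hL' f, ⟨Triangle.π₃.mapIso (isoTriangleOfIso₁₂ _ _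
    (DerivedCategory.mappingCone_triangle_distinguished f) hT e e' ?_)⟩⟩
  change DerivedCategory.Q.map f ≫ _ = _
  rw [hf, Category.assoc, Category.assoc, Iso.inv_hom_id, Category.comp_id]
  rfl

lemma obj₂ {T : Triangle (DerivedCategory (ModuleCat.{u} A))} (hT : T ∈ distTriang _)
    (h₁ : IsFiniteFreeObject T.obj₁) (h₃ : IsFiniteFreeObject T.obj₃) :
    IsFiniteFreeObject T.obj₂ :=
  obj₃ (inv_rot_of_distTriang _ hT) (h₃.shift _) h₁

variable (A) in
lemma single : IsFiniteFreeObject.{w}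
    ((DerivedCategory.singleFunctor (ModuleCat.{u} A) 0).obj (ModuleCat.of A A)) :=
  ⟨_, IsBoundedFiniteFree.single A, ⟨Iso.refl _⟩⟩

theorem isThickSubcategory_setOf_retract : IsThickSubcategory
    {X : DerivedCategory (ModuleCat.{u} A) |
      ∃ M, IsFiniteFreeObject M ∧ ∃ (i : X ⟶ M) (r : M ⟶ X), i ≫ r = 𝟙 X} where
  mem_of_iso e := fun ⟨M, hM, i, r, h⟩ ↦ ⟨M, hM, e.inv ≫ i, r ≫ e.hom, by simp [reassoc_of% h]⟩
  zero_mem := ⟨_, single A, 0, 0, (isZero_zero _).eq_of_src _ _⟩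
  shift_mem X n := fun ⟨M, hM, i, r, h⟩ ↦ ⟨_, hM.shift n, i⟦n⟧', r⟦n⟧', by
    rw [← Functor.map_comp, h, CategoryTheory.Functor.map_id]⟩
  ext₂ T hT := by
    rintro ⟨M, hM, i, r, h⟩ ⟨N, hN, i', r', h'⟩
    obtain ⟨W, f, g, k, hW, φ, ψ, hφ⟩ := exists_distTriang_retract hT h h'
    exact ⟨W, obj₂ hW hM hN, φ, ψ, hφ⟩
  retract_mem X Y i r h := fun ⟨M, hM, i', r', h'⟩ ↦
    ⟨M, hM, i ≫ i', r' ≫ r, by simp [reassoc_of% h', h]⟩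

end IsFiniteFreeObject

theorem IsSmallObject.exists_isBoundedFiniteFree {X : DerivedCategory (ModuleCat.{u} A)}
    (hX : IsSmallObject X) : ∃ L, IsBoundedFiniteFree L ∧
      ∀ D, IsThickSubcategory D → (DerivedCategory.Q.obj L ∈ D ↔ X ∈ D) := by
  obtain ⟨M, hM, i, r, hir⟩ := hX _ IsFiniteFreeObject.isThickSubcategory_setOf_retract
    ⟨_, .single A, 𝟙 _, 𝟙 _, Category.id_comp _⟩
  obtain ⟨X', ⟨e⟩⟩ := nonempty_iso_biprod_of_retract hir
  have hM' : IsFiniteFreeObject (X ⊞ X') := hM.of_iso e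
  obtain ⟨W, v, w, hW⟩ := distinguished_cocone_triangle
    (biprod.snd ≫ biprod.inr : X ⊞ X' ⟶ X ⊞ X')
  obtain ⟨L, hL, ⟨eL⟩⟩ := IsFiniteFreeObject.obj₃ hW hM' hM'
  exact ⟨L, hL, fun D hD ↦ (hD.mem_iff_of_iso eL).trans (hD.cone_biprod_snd_inr_mem_iff hW)⟩

end BoundedFiniteFree

section Cycles

variable {A : Type u} [CommRing A]

lemma mem_annihilator_moduleCatHomology_iff (S : ShortComplex (ModuleCat.{u} A)) {x : A} :
    x ∈ Module.annihilator A (LinearMap.ker S.g.hom ⧸ LinearMap.range S.moduleCatToCycles) ↔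
      ∀ v : S.X₂, S.g.hom v = 0 → ∃ w : S.X₁, S.f.hom w = x • v := by
  rw [Module.mem_annihilator, (Submodule.Quotient.mk_surjective _).forall, Subtype.forall]
  refine forall₂_congr fun v hv ↦ ?_
  rw [← Submodule.Quotient.mk_smul, Submodule.Quotient.mk_eq_zero]
  exact exists_congr fun w ↦ Subtype.ext_iff

lemma mem_annihilator_derivedHomology_Q_iff [HasDerivedCategory.{w} (ModuleCat.{u} A)]
    (K : CochainComplex (ModuleCat.{u} A) ℤ) (n : ℤ) {x : A} :
    x ∈ Module.annihilator A (derivedHomology n (DerivedCategory.Q.obj K)) ↔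
      ∀ v : K.X n, K.d n (n + 1) v = 0 → ∃ w : K.X (n - 1), K.d (n - 1) n w = x • v := by
  let S := K.sc' (n - 1) n (n + 1)
  let e : derivedHomology n (DerivedCategory.Q.obj K) ≃ₗ[A]
      LinearMap.ker S.g.hom ⧸ LinearMap.range S.moduleCatToCycles :=
    ((DerivedCategory.homologyFunctorFactors (ModuleCat.{u} A) n).app K ≪≫
      K.homologyIsoSc' (n - 1) n (n + 1) (by simp) (by simp) ≪≫
      S.moduleCatHomologyIso).toLinearEquiv
  rw [e.annihilator_eq]
  exact mem_annihilator_moduleCatHomology_iff S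

end Cycles

namespace MatrixComplex

section Annihilator

open Matrix

variable {A : Type u} [CommRing A] {ι : Type} [Fintype ι] {V : MatrixComplex A ι}

lemma sum_diff_mul_eq_sum_subtype {k : ℤ} (w : ι → A) {i : ι} (hi : V.deg i = k + 1) :
    ∑ j : {j // V.deg j = k}, V.diff i j * w j = (V.diff *ᵥ w) i := by
  rw [← Finset.sum_subtype {j | V.deg j = k} (by simp) fun j ↦ V.diff i j * w j]
  refine Finset.sum_filter_of_ne fun j _ hj ↦ ?_
  have := V.deg_eq i j (left_ne_zero_of_mul hj)
  lia

lemma mem_homologyAnnihilator_toDerived [HasDerivedCategory.{w} (ModuleCat.{u} A)] {x : A} :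
    x ∈ homologyAnnihilator V.toDerived ↔
      ∀ v, V.diff *ᵥ v = 0 → ∃ w, V.diff *ᵥ w = x • v := by
  rw [homologyAnnihilator, Submodule.mem_iInf]
  constructor
  · intro hx v hv
    have (n : ℤ) : ∃ w : {j // V.deg j = n - 1} → A, ∀ i : {i // V.deg i = n},
        ∑ j : {j // V.deg j = n - 1}, V.diff i j * w j = x * v i := by
      obtain ⟨w, hw⟩ := (mem_annihilator_derivedHomology_Q_iff _ n).1 (hx n) (fun i ↦ v i)
        (funext fun i ↦ (sum_diff_mul_eq_sum_subtype v i.2).trans (congrFun hv i))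
      exact ⟨w, congrFun hw⟩
    choose w hw using this
    refine ⟨fun j ↦ w (V.deg j + 1) ⟨j, by ring⟩, funext fun i ↦ ?_⟩
    refine (sum_diff_mul_eq_sum_subtype (k := V.deg i - 1) _ (by ring)).symm.trans
      (.trans (Finset.sum_congr rfl fun j _ ↦ ?_) (hw (V.deg i) ⟨i, rfl⟩))
    have (n : ℤ) (hj : V.deg j = n - 1) :
        w (V.deg j + 1) ⟨j, by ring⟩ = w n ⟨j, hj⟩ := by
      obtain rfl : n = V.deg j + 1 := by lia
      rfl
    exact congrArg _ (this _ j.2)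
  · intro hx n
    refine (mem_annihilator_derivedHomology_Q_iff _ n).2 fun v hv ↦ ?_
    let v' (i : ι) : A := if h : V.deg i = n then v ⟨i, h⟩ else 0
    have hv' (i : {i // V.deg i = n}) : v' i = v i := dif_pos i.2
    obtain ⟨w, hw⟩ := hx v' (funext fun i ↦ by
      by_cases hi : V.deg i = n + 1
      · rw [← sum_diff_mul_eq_sum_subtype v' hi]
        simp only [hv']
        exact congrFun hv ⟨i, hi⟩
      · refine Finset.sum_eq_zero fun j _ ↦ ?_
        by_contra! hne
        have hj : V.deg j = n := by
          by_contra hj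
          exact right_ne_zero_of_mul hne (dif_neg hj)
        exact hi (hj ▸ V.deg_eq i j (left_ne_zero_of_mul hne)))
    refine ⟨fun j ↦ w j, funext fun i ↦ ?_⟩
    exact (sum_diff_mul_eq_sum_subtype w (by rw [i.2]; ring)).trans
      ((congrFun hw i).trans (congrArg (x * ·) (hv' i)))

variable [DecidableEq ι]

lemma mem_homologyAnnihilator_of_contraction [HasDerivedCategory.{w} (ModuleCat.{u} A)] {x : A}
    {h : Matrix ι ι A} (hx : V.diff * h + h * V.diff = x • (1 : Matrix ι ι A)) :
    x ∈ homologyAnnihilator V.toDerived :=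
  mem_homologyAnnihilator_toDerived.2 fun v hv ↦ ⟨h *ᵥ v, by
    have := congr($hx *ᵥ v)
    rwa [add_mulVec, ← mulVec_mulVec, ← mulVec_mulVec, hv, mulVec_zero, add_zero, smul_mulVec,
      one_mulVec] at this⟩

omit [DecidableEq ι] in
lemma mul_diff_apply_congr {g g' : Matrix ι ι A} {i j : ι}
    (h : ∀ l, V.deg l = V.deg j + 1 → g i l = g' i l) :
    (g * V.diff) i j = (g' * V.diff) i j := by
  rw [Matrix.mul_apply, Matrix.mul_apply]
  refine Finset.sum_congr rfl fun l _ ↦ ?_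
  by_cases hl : V.diff l j = 0
  · simp only [hl, mul_zero]
  · rw [h l (V.deg_eq l j hl)]

lemma exists_contraction_succ {x y : A} (hx : ∀ v, V.diff *ᵥ v = 0 → ∃ w, V.diff *ᵥ w = x • v)
    {k : ℤ} {g : Matrix ι ι A} (hg : ∀ i j, k + 1 ≤ V.deg j →
      (V.diff * g + g * V.diff) i j = (y • (1 : Matrix ι ι A)) i j) :
    ∃ g' : Matrix ι ι A, ∀ i j, k ≤ V.deg j →
      (V.diff * g' + g' * V.diff) i j = ((x * y) • (1 : Matrix ι ι A)) i j := by
  let E := y • (1 : Matrix ι ι A) - g * V.diff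
  have hE (j : ι) (hj : k ≤ V.deg j) : V.diff *ᵥ E.col j = 0 := by
    funext i
    have : ((V.diff * g + g * V.diff) * V.diff) i j = ((y • (1 : Matrix ι ι A)) * V.diff) i j :=
      mul_diff_apply_congr fun l hl ↦ hg i l (by lia)
    rw [add_mul, mul_assoc g, V.diff_mul_diff, mul_zero, add_zero, smul_one_mul] at this
    change (V.diff * E) i j = 0
    rw [mul_sub, mul_smul_one, ← mul_assoc, Matrix.sub_apply, this, sub_self]
  have (j : ι) : ∃ w, k ≤ V.deg j → V.diff *ᵥ w = x • E.col j := by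
    by_cases hj : k ≤ V.deg j
    · exact (hx _ (hE j hj)).imp fun w hw _ ↦ hw
    · exact ⟨0, fun h ↦ absurd h hj⟩
  choose w hw using this
  let g' : Matrix ι ι A := .of fun i j ↦ if V.deg j = k then w j i else x * g i j
  have hg'd (i j : ι) (hj : k ≤ V.deg j) : (g' * V.diff) i j = x * (g * V.diff) i j :=
    (mul_diff_apply_congr (g' := x • g) fun l hl ↦ if_neg (by lia)).trans
      (by rw [smul_mul, Matrix.smul_apply, smul_eq_mul])
  refine ⟨g', fun i j hj ↦ ?_⟩
  rw [Matrix.add_apply, hg'd i j hj, mul_smul, Matrix.smul_apply, smul_eq_mul]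
  obtain rfl | hj' := hj.eq_or_lt
  · have : (V.diff * g') i j = x * E i j := by
      refine Eq.trans ?_ (congrFun (hw j hj) i)
      exact Finset.sum_congr rfl fun l _ ↦ congrArg _ (if_pos rfl)
    rw [this, ← mul_add]
    exact congrArg (x * ·) (sub_add_cancel _ _)
  · have : (V.diff * g') i j = x * (V.diff * g) i j := by
      simp only [Matrix.mul_apply, Finset.mul_sum, mul_left_comm x]
      exact Finset.sum_congr rfl fun l _ ↦ congrArg _ (if_neg hj'.ne')
    rw [this, ← mul_add, ← Matrix.add_apply, hg i j hj']

theorem exists_pow_contraction_of_mem_homologyAnnihilator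
    [HasDerivedCategory.{w} (ModuleCat.{u} A)] {x : A}
    (hx : x ∈ homologyAnnihilator V.toDerived) :
    ∃ (m : ℕ) (g : Matrix ι ι A), V.diff * g + g * V.diff = (x ^ m : A) • (1 : Matrix ι ι A) := by
  obtain ⟨a, ha⟩ := (Set.finite_range V.deg).bddAbove
  obtain ⟨b, hb⟩ := (Set.finite_range V.deg).bddBelow
  rw [mem_homologyAnnihilator_toDerived] at hx
  have (k : ℤ) (hk : k ≤ a + 1) : ∃ (m : ℕ) (g : Matrix ι ι A), ∀ i j, k ≤ V.deg j →
      (V.diff * g + g * V.diff) i j = (x ^ m • (1 : Matrix ι ι A)) i j := by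
    induction k, hk using Int.leInductionDown with
    | base => exact ⟨0, 0, fun i j hj ↦ absurd (ha ⟨j, rfl⟩) (by lia)⟩
    | pred k _ ih =>
      obtain ⟨m, g, hg⟩ := ih
      obtain ⟨g', hg'⟩ := exists_contraction_succ hx (k := k - 1) (by simpa using hg)
      exact ⟨m + 1, g', by simpa only [pow_succ'] using hg'⟩
  obtain ⟨m, g, hg⟩ := this (min b (a + 1)) (min_le_right _ _)
  exact ⟨m, g, Matrix.ext fun i j ↦ hg i j ((min_le_left _ _).trans (hb ⟨j, rfl⟩))⟩

end Annihilator

section OfBases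

open Matrix

variable {A : Type u} [CommRing A] {ι : Type} [Fintype ι] [DecidableEq ι]
  (L : CochainComplex (ModuleCat.{u} A) ℤ) (deg : ι → ℤ)
  (b : ∀ k, Module.Basis {i // deg i = k} A (L.X k))

/-- The matrix of all the differentials of `L` with respect to bases of its terms. -/
noncomputable def diffMatrix : Matrix ι ι A :=
  .of fun i j ↦ LinearMap.toMatrix (b (deg j)) (b (deg i)) (L.d _ _).hom ⟨i, rfl⟩ ⟨j, rfl⟩

variable {deg}

lemma diffMatrix_apply {k l : ℤ} (i : {i // deg i = l}) (j : {j // deg j = k}) :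
    diffMatrix L deg b i j = LinearMap.toMatrix (b k) (b l) (L.d k l).hom i j := by
  obtain ⟨i, rfl⟩ := i
  obtain ⟨j, rfl⟩ := j
  rfl

lemma deg_eq_of_diffMatrix_ne_zero {i j : ι} (h : diffMatrix L deg b i j ≠ 0) :
    deg i = deg j + 1 := by
  by_contra hne
  refine h ?_
  rw [diffMatrix, Matrix.of_apply, L.shape _ _ (Ne.symm hne), ModuleCat.hom_zero, map_zero,
    Matrix.zero_apply]

lemma diffMatrix_mul_diffMatrix : diffMatrix L deg b * diffMatrix L deg b = 0 := by
  ext i j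
  let l := deg j + 1
  calc ∑ x, diffMatrix L deg b i x * diffMatrix L deg b x j
    _ = ∑ x with deg x = l, diffMatrix L deg b i x * diffMatrix L deg b x j :=
      (Finset.sum_filter_of_ne fun x _ hx ↦
        deg_eq_of_diffMatrix_ne_zero L b (right_ne_zero_of_mul hx)).symm
    _ = ∑ x : {x // deg x = l}, diffMatrix L deg b i x * diffMatrix L deg b x j :=
      Finset.sum_subtype _ (by simp) _
    _ = (LinearMap.toMatrix (b l) (b (deg i)) (L.d l (deg i)).hom *
          LinearMap.toMatrix (b (deg j)) (b l) (L.d (deg j) l).hom) ⟨i, rfl⟩ ⟨j, rfl⟩ :=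
      Finset.sum_congr rfl fun x _ ↦ congrArg₂ _ (diffMatrix_apply L b ⟨i, rfl⟩ x)
        (diffMatrix_apply L b x ⟨j, rfl⟩)
    _ = 0 := by
      rw [← LinearMap.toMatrix_comp, ← ModuleCat.hom_comp, L.d_comp_d, ModuleCat.hom_zero,
        map_zero, Matrix.zero_apply]

/-- The complex in matrix form obtained from bases of the terms of `L`, the basis of `L.X k` being
indexed by the elements of degree `k`. -/
noncomputable def ofBases : MatrixComplex A ι where
  deg := deg
  diff := diffMatrix L deg b
  deg_eq _ _ := deg_eq_of_diffMatrix_ne_zero L b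
  diff_mul_diff := diffMatrix_mul_diffMatrix L b

/-- The complex associated with `ofBases L b` is isomorphic to `L`. -/
noncomputable def ofBasesIso : (ofBases L b).toComplex ≅ L :=
  HomologicalComplex.Hom.isoOfComponents
    (fun k ↦ ((b k).equivFun.symm.toModuleIso : ModuleCat.of A _ ≅ _)) fun k l _ ↦ by
      ext v
      obtain ⟨v, rfl⟩ := (b k).equivFun.surjective v
      change (L.d k l).hom ((b k).equivFun.symm ((b k).equivFun v)) =
        (b l).equivFun.symm (((diffMatrix L deg b).submatrix _ _) *ᵥ _)
      rw [LinearEquiv.symm_apply_apply, LinearEquiv.eq_symm_apply]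
      have hM : (diffMatrix L deg b).submatrix Subtype.val Subtype.val =
          LinearMap.toMatrix (b k) (b l) (L.d k l).hom := Matrix.ext (diffMatrix_apply L b)
      exact (LinearMap.toMatrix_mulVec_repr (b k) (b l) _ v).symm.trans (congr($hM.symm *ᵥ _))

end OfBases

end MatrixComplex

section Realization

variable {A : Type u} [CommRing A]

theorem IsBoundedFiniteFree.exists_matrixComplex {L : CochainComplex (ModuleCat.{u} A) ℤ}
    (hL : IsBoundedFiniteFree L) :
    ∃ (ι : Type) (_ : Fintype ι) (_ : DecidableEq ι) (V : MatrixComplex A ι),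
      Nonempty (V.toComplex ≅ L) := by
  obtain ⟨N, hN⟩ := hL.bounded
  have (k : ℤ) : ∃ n, Nonempty (Module.Basis (Fin n) A (L.X k)) :=
    have := hL.free k
    have := hL.finite k
    ⟨_, ⟨(Module.Free.chooseBasis A (L.X k)).reindex (Fintype.equivFin _)⟩⟩
  choose r b using this
  let ι := Σ k : Finset.Icc (-N) N, Fin (r k)
  have (k : ℤ) : Nonempty (Module.Basis {i : ι // (i.1 : ℤ) = k} A (L.X k)) := by
    by_cases hk : k ∈ Finset.Icc (-N) N
    · let e : {i : ι // i.1 = ⟨k, hk⟩} ≃ Fin (r k) := Equiv.sigmaSubtype _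
      exact ⟨(b k).some.reindex
        (e.symm.trans (Equiv.subtypeEquivRight fun _ ↦ Subtype.ext_iff))⟩
    · have := hN k (by rwa [← not_le, abs_le, ← Finset.mem_Icc])
      have : IsEmpty {i : ι // (i.1 : ℤ) = k} := ⟨fun i ↦ hk (i.2 ▸ i.1.1.2)⟩
      exact ⟨Module.Basis.empty _⟩
  exact ⟨ι, inferInstance, inferInstance, .ofBases L fun k ↦ (this k).some,
    ⟨MatrixComplex.ofBasesIso L _⟩⟩

variable [HasDerivedCategory.{w} (ModuleCat.{u} A)]

lemma IsSmallObject.exists_matrixComplex {X : DerivedCategory (ModuleCat.{u} A)}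
    (hX : IsSmallObject X) :
    ∃ (ι : Type) (_ : Fintype ι) (_ : DecidableEq ι) (V : MatrixComplex A ι),
      ∀ D, IsThickSubcategory D → (V.toDerived ∈ D ↔ X ∈ D) := by
  obtain ⟨L, hL, hLX⟩ := hX.exists_isBoundedFiniteFree
  obtain ⟨ι, _, _, V, ⟨e⟩⟩ := hL.exists_matrixComplex
  exact ⟨ι, _, inferInstance, V, fun D hD ↦
    (hD.mem_iff_of_iso (DerivedCategory.Q.mapIso e)).trans (hLX D hD)⟩

theorem IsThickSubcategory.mem_of_homologyAnnihilator_le_radical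
    {D : Set (DerivedCategory (ModuleCat.{u} A))} (hD : IsThickSubcategory D)
    {X Y : DerivedCategory (ModuleCat.{u} A)} (hX : IsSmallObject X) (hY : IsSmallObject Y)
    (hYD : Y ∈ D) (h : homologyAnnihilator Y ≤ (homologyAnnihilator X).radical) : X ∈ D := by
  obtain ⟨ι, _, _, V, hV⟩ := hY.exists_matrixComplex
  obtain ⟨κ, _, _, W, hW⟩ := hX.exists_matrixComplex
  refine (hW D hD).1 (MatrixComplex.toDerived_mem_of_forall_exists_pow hD ((hV D hD).2 hYD) ?_)
  intro x g hg
  have hxY : x ∈ (homologyAnnihilator Y).radical :=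
    (hV _ (isThickSubcategory_setOf_mem_radical x)).1
      (Ideal.le_radical (MatrixComplex.mem_homologyAnnihilator_of_contraction hg))
  have hxX : x ∈ (homologyAnnihilator X).radical := Ideal.radical_le_radical_iff.2 h hxY
  obtain ⟨k, hk⟩ := (hW _ (isThickSubcategory_setOf_mem_radical x)).2 hxX
  obtain ⟨m, g', hg'⟩ := MatrixComplex.exists_pow_contraction_of_mem_homologyAnnihilator hk
  exact ⟨k * m, g', by rw [pow_mul, hg']⟩

end Realization

section SmallObjects

variable (A : Type u) [CommRing A] [HasDerivedCategory.{w} (ModuleCat.{u} A)]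

/-- The ring itself, as an object of its derived category concentrated in degree zero. -/
noncomputable abbrev derivedRing : DerivedCategory (ModuleCat.{u} A) :=
  (DerivedCategory.singleFunctor (ModuleCat.{u} A) 0).obj (ModuleCat.of A A)

/-- The identification of the cohomology in degree zero of the ring with the ring. -/
noncomputable def derivedHomologyZeroDerivedRing : A ≃ₗ[A] derivedHomology 0 (derivedRing A) :=
  ((DerivedCategory.singleFunctorCompHomologyFunctorIso (ModuleCat.{u} A) 0).app
    (ModuleCat.of A A)).symm.toLinearEquiv

variable {A}

lemma subsingleton_derivedHomology_derivedRing {n : ℤ} (hn : n ≠ 0) :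
    Subsingleton (derivedHomology n (derivedRing A)) :=
  have hzero := (HomologicalComplex.exactAt_single_obj (ComplexShape.up ℤ) 0
    (ModuleCat.of A A) n hn).isZero_homology
  ModuleCat.subsingleton_of_isZero
    (hzero.of_iso ((DerivedCategory.homologyFunctorFactors (ModuleCat.{u} A) n).app _))

namespace IsSmallObject

variable {X : DerivedCategory (ModuleCat.{u} A)} (hX : IsSmallObject X)
include hX

lemma derivedHomology_mem {C : Set (ModuleCat.{u} A)} (hC : IsWideTorsionClass ⊥ C)
    (hA : ModuleCat.of A A ∈ C) (n : ℤ) : derivedHomology n X ∈ C := by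
  refine hX _ (isThickSubcategory_setOf_derivedHomology_mem hC) (fun n ↦ ?_) n
  obtain rfl | hn := eq_or_ne n 0
  · exact hC.mem_of_equiv (N := derivedHomology 0 (derivedRing A))
      (derivedHomologyZeroDerivedRing A) hA
  · have := subsingleton_derivedHomology_derivedRing (A := A) hn
    exact hC.mem_of_subsingleton (N := derivedHomology n (derivedRing A))

lemma finitePresentation_derivedHomology (hA : IsLeftCoherentRing A) (n : ℤ) :
    Module.FinitePresentation A (derivedHomology n X) :=
  hX.derivedHomology_mem hA.isWideTorsionClass_finPresModules
    (inferInstanceAs (Module.FinitePresentation A A)) n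

lemma finite_setOf_nontrivial_derivedHomology :
    {n | Nontrivial (derivedHomology n X)}.Finite :=
  hX _ isThickSubcategory_setOf_finite_derivedHomology <|
    (Set.finite_singleton 0).subset fun n (hn : Nontrivial _) ↦ by
      by_contra h
      exact not_nontrivial_iff_subsingleton.2
        (subsingleton_derivedHomology_derivedRing (A := A) h) hn

end IsSmallObject

end SmallObjects

/-! ### Koszul objects and the correspondence -/

lemma ker_comp_eq_span_sup_ker {A M N : Type*} [CommRing A] [AddCommGroup M] [Module A M]
    [AddCommGroup N] [Module A N] {q : A →ₗ[A] M} (hq : Function.Surjective q) {g : M →ₗ[A] N}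
    {y : A} (hg : Function.Exact (y • LinearMap.id : M →ₗ[A] M) g) :
    LinearMap.ker (g ∘ₗ q) = Ideal.span {y} ⊔ LinearMap.ker q := by
  ext t
  have hexact : g (q t) = 0 ↔ ∃ v, y • v = q t := hg (q t)
  rw [LinearMap.mem_ker, LinearMap.comp_apply, hexact, hq.exists, Ideal.mem_span_singleton_sup]
  constructor
  · rintro ⟨s, hs⟩
    refine ⟨s, t - s * y, ?_, by ring⟩
    rw [LinearMap.mem_ker, map_sub, ← hs, mul_comm, ← smul_eq_mul, map_smul, sub_self]
  · rintro ⟨s, b, hb, rfl⟩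
    refine ⟨s, ?_⟩
    rw [map_add, LinearMap.mem_ker.1 hb, add_zero, mul_comm, ← smul_eq_mul, map_smul]

section Koszul

variable {A : Type u} [CommRing A] [HasDerivedCategory.{w} (ModuleCat.{u} A)]

/-- The properties of the Koszul complex on a finite set of generators of the ideal `I`, viewed in
the derived category, which are preserved when a further generator is added. -/
structure IsKoszulObject (I : Ideal A) (K : DerivedCategory (ModuleCat.{u} A)) : Prop where
  isSmallObject : IsSmallObject K
  subsingleton_of_pos (n : ℤ) : 0 < n → Subsingleton (derivedHomology n K)
  le_radical : I ≤ (homologyAnnihilator K).radical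
  exists_surjective_ker_eq : ∃ q : A →ₗ[A] derivedHomology 0 K,
    Function.Surjective q ∧ LinearMap.ker q = I

section Cone

variable {K K' : DerivedCategory (ModuleCat.{u} A)} {y : A} {g : K ⟶ K'} {d : K' ⟶ K⟦(1 : ℤ)⟧}
  (hT : Triangle.mk (y • 𝟙 K) g d ∈ distTriang _)
include hT

lemma exact_smul_id_derivedHomologyMap (n : ℤ) :
    Function.Exact (y • LinearMap.id : derivedHomology n K →ₗ[A] derivedHomology n K)
      (derivedHomologyMap n g) :=
  derivedHomologyMap_smul_id n y K ▸ exact_derivedHomologyMap hT n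

lemma exists_exact_derivedHomologyMap_smul_id (n : ℤ) :
    ∃ δ : derivedHomology n K' →ₗ[A] derivedHomology (n + 1) K,
      Function.Exact (derivedHomologyMap n g) δ ∧
      Function.Exact δ (y • LinearMap.id : derivedHomology (n + 1) K →ₗ[A] _) :=
  derivedHomologyMap_smul_id (n + 1) y K ▸ exists_exact_derivedHomologyMap hT n (n + 1) rfl

lemma mem_radical_homologyAnnihilator_cone : y ∈ (homologyAnnihilator K').radical := by
  refine ⟨2, mem_homologyAnnihilator.2 fun n v ↦ ?_⟩
  obtain ⟨δ, hg, hδ⟩ := exists_exact_derivedHomologyMap_smul_id hT n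
  obtain ⟨u, hu⟩ := (hg (y • v)).1 ((map_smul δ y v).trans (hδ.apply_apply_eq_zero v))
  rw [pow_two, mul_smul, ← hu, ← map_smul]
  exact (exact_smul_id_derivedHomologyMap hT n).apply_apply_eq_zero u

lemma surjective_derivedHomologyMap_of_subsingleton {n : ℤ}
    (h : Subsingleton (derivedHomology (n + 1) K)) :
    Function.Surjective (derivedHomologyMap n g) := fun v ↦ by
  obtain ⟨δ, hg, -⟩ := exists_exact_derivedHomologyMap_smul_id hT n
  exact (hg v).1 (Subsingleton.elim _ _)

theorem IsKoszulObject.cone {I : Ideal A} (hK : IsKoszulObject I K) :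
    IsKoszulObject (Ideal.span {y} ⊔ I) K' := by
  have hsurj (n : ℤ) (hn : 0 ≤ n) : Function.Surjective (derivedHomologyMap n g) :=
    surjective_derivedHomologyMap_of_subsingleton hT (hK.subsingleton_of_pos _ (by lia))
  refine ⟨isThickSubcategory_setOf_isSmallObject.ext₃ hT hK.1 hK.1, fun n hn ↦ ?_, ?_, ?_⟩
  · have := hK.subsingleton_of_pos n hn
    exact (hsurj n hn.le).subsingleton
  · refine sup_le ?_ fun x hx ↦ ?_
    · exact (Ideal.span_singleton_le_iff_mem _).2 (mem_radical_homologyAnnihilator_cone hT)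
    · have hKx : K ∈ {X : DerivedCategory _ | x ∈ (homologyAnnihilator X).radical} :=
        hK.le_radical hx
      have hKx' := (isThickSubcategory_setOf_mem_radical x).ext₃ hT hKx hKx
      exact hKx'
  · obtain ⟨q, hq, rfl⟩ := hK.exists_surjective_ker_eq
    exact ⟨derivedHomologyMap 0 g ∘ₗ q, (hsurj 0 le_rfl).comp hq,
      ker_comp_eq_span_sup_ker hq (exact_smul_id_derivedHomologyMap hT 0)⟩

end Cone

lemma isKoszulObject_derivedRing : IsKoszulObject ⊥ (derivedRing A) where
  isSmallObject _ _ h := h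
  subsingleton_of_pos _ hn := subsingleton_derivedHomology_derivedRing hn.ne'
  le_radical := bot_le
  exists_surjective_ker_eq := ⟨derivedHomologyZeroDerivedRing A,
    (derivedHomologyZeroDerivedRing A).surjective, LinearEquiv.ker _⟩

theorem exists_isKoszulObject {I : Ideal A} (hI : I.FG) :
    ∃ K : DerivedCategory (ModuleCat.{u} A), IsKoszulObject I K := by
  classical
  obtain ⟨s, rfl⟩ := hI
  induction s using Finset.induction_on with
  | empty => exact ⟨derivedRing A, by simpa using isKoszulObject_derivedRing⟩
  | insert y s _ ih =>
    obtain ⟨K, hK⟩ := ih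
    obtain ⟨K', g, d, hT⟩ := distinguished_cocone_triangle (y • 𝟙 K)
    refine ⟨K', ?_⟩
    rw [Finset.coe_insert, ← Ideal.submodule_span_eq, Submodule.span_insert]
    exact hK.cone hT

lemma IsKoszulObject.nonempty_equiv {I : Ideal A} {K : DerivedCategory (ModuleCat.{u} A)}
    (hK : IsKoszulObject I K) : Nonempty ((A ⧸ I) ≃ₗ[A] derivedHomology 0 K) := by
  obtain ⟨q, hq, rfl⟩ := hK.exists_surjective_ker_eq
  exact ⟨q.quotKerEquivOfSurjective hq⟩

end Koszul

section Filtration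

variable {A : Type u} [CommRing A] {C : Set (ModuleCat.{u} A)} {I : Ideal A}
  {N : Type u} [AddCommGroup N] [Module A N] [Module.FinitePresentation A N]

namespace IsWideTorsionClass

variable (hC : IsWideTorsionClass ⊥ C) (hI : I.FG) (hIC : ModuleCat.of A (A ⧸ I) ∈ C)
include hC hI hIC

lemma mem_of_le_annihilator (hIN : I ≤ Module.annihilator A N) : ModuleCat.of A N ∈ C := by
  obtain ⟨_, _⟩ := exists_isScalarTower_quotient hIN
  have : Module.FinitePresentation (A ⧸ I) N := (finitePresentation_quotient_iff hI).2 inferInstance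
  obtain ⟨n, K, e, hK⟩ := Module.FinitePresentation.exists_fin (A ⧸ I) N
  have : Module.Finite (A ⧸ I) K := Module.Finite.iff_fg.2 hK
  obtain ⟨m, f, hf⟩ := Module.Finite.exists_fin' (A ⧸ I) K
  have hrange : LinearMap.range ((K.subtype ∘ₗ f).restrictScalars A) = K.restrictScalars A := by
    rw [LinearMap.range_restrictScalars, LinearMap.range_comp_of_range_eq_top _
      (LinearMap.range_eq_top.2 hf), Submodule.range_subtype]
  have hmem := hC.coker_mem ((K.subtype ∘ₗ f).restrictScalars A) (hC.fin_fun_mem hIC m)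
    (hC.fin_fun_mem hIC n)
  rw [hrange] at hmem
  exact hC.mem_of_equiv ((Submodule.Quotient.restrictScalarsEquiv A K).trans
    (e.symm.restrictScalars A)) hmem

lemma mem_of_pow_le_annihilator (hA : IsLeftCoherentRing A) (m : ℕ)
    (hN : I ^ m ≤ Module.annihilator A N) : ModuleCat.of A N ∈ C := by
  induction m generalizing N with
  | zero =>
    rw [pow_zero, Ideal.one_eq_top, top_le_iff, Module.annihilator_eq_top_iff] at hN
    exact hC.mem_of_subsingleton
  | succ m ih =>
    have hfg : (I • (⊤ : Submodule A N)).FG := Submodule.FG.smul hI Module.Finite.fg_top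
    have := hA.isCoherentModule N _ hfg
    have : Module.FinitePresentation A (N ⧸ (I • (⊤ : Submodule A N))) :=
      Module.finitePresentation_of_surjective _ (Submodule.mkQ_surjective _)
        (by rwa [Submodule.ker_mkQ])
    exact hC.extension_mem (Submodule.subtype_injective _) (Submodule.mkQ_surjective _)
      (LinearMap.exact_subtype_mkQ (I • ⊤)) bot_le
      (ih (le_annihilator_smul_top_iff.2 (pow_succ I m ▸ hN)))
      (hC.mem_of_le_annihilator hI hIC (le_annihilator_quotient_smul_top I))

lemma mem_of_le_radical_annihilator (hA : IsLeftCoherentRing A)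
    (hN : I ≤ (Module.annihilator A N).radical) : ModuleCat.of A N ∈ C := by
  obtain ⟨m, hm⟩ := Ideal.exists_pow_le_of_le_radical_of_fg hN hI
  exact hC.mem_of_pow_le_annihilator hI hIC hA m hm

end IsWideTorsionClass

lemma IsLeftCoherentRing.annihilator_fg (hA : IsLeftCoherentRing A) (N : Type u) [AddCommGroup N]
    [Module A N] [hN : Module.FinitePresentation A N] : (Module.annihilator A N).FG := by
  obtain ⟨n, s, hs⟩ := Module.Finite.exists_fin (R := A) (M := N)
  let f : A →ₗ[A] (Fin n → N) := LinearMap.pi fun i ↦ LinearMap.toSpanSingleton A N (s i)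
  have hker : Module.annihilator A N = LinearMap.ker f := by
    ext x
    rw [← Submodule.annihilator_top, ← hs, Submodule.mem_annihilator_span, LinearMap.mem_ker,
      funext_iff, Set.forall_subtype_range_iff]
    exact Iff.rfl
  have hfp : Module.FinitePresentation A (LinearMap.ker f) :=
    hA.isWideTorsionClass_finPresModules.ker_mem f
      (inferInstanceAs (Module.FinitePresentation A A))
      (hA.isWideTorsionClass_finPresModules.fin_fun_mem hN n)
  rw [hker]
  exact Module.Finite.iff_fg.1 inferInstance

end Filtration

lemma IsThickSubcategory.biprod_mem {T : Type*} [Category T] [HasZeroObject T] [Preadditive T]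
    [HasShift T ℤ] [∀ n : ℤ, (shiftFunctor T n).Additive] [Pretriangulated T] {D : Set T}
    (hD : IsThickSubcategory D) {X Y : T} (hX : X ∈ D) (hY : Y ∈ D) : (X ⊞ Y) ∈ D :=
  hD.ext₂ _ (binaryBiproductTriangle_distinguished X Y) hX hY

section Support

variable {A : Type u} [CommRing A] [HasDerivedCategory.{w} (ModuleCat.{u} A)]
  {D : Set (DerivedCategory (ModuleCat.{u} A))}

lemma gSet_subset {C : Set (ModuleCat.{u} A)} (hC : IsWideTorsionClass ⊥ C)
    (h : ∀ X ∈ D, ∀ n, derivedHomology n X ∈ C) : gSet D ⊆ C := by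
  refine wideClosure_subset hC.isWideSubcategory ?_
  rintro N ⟨X, hX, n, ⟨e⟩⟩
  exact hC.mem_of_equiv (M := derivedHomology n X) e.toLinearEquiv (h X hX n)

lemma derivedHomology_mem_gSet {X : DerivedCategory (ModuleCat.{u} A)} (hX : X ∈ D) (n : ℤ) :
    derivedHomology n X ∈ gSet D :=
  subset_wideClosure _ ⟨X, hX, n, ⟨Iso.refl _⟩⟩

/-- The modules which are annihilated, up to powers, by the homology annihilator of some object of
`D`. A finitely generated module is in this class if and only if its support is contained in the
closed set cut out by such an annihilator. -/
def supportClass (D : Set (DerivedCategory (ModuleCat.{u} A))) : Set (ModuleCat.{u} A) :=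
  {M | ∃ Y ∈ D, homologyAnnihilator Y ≤ (Module.annihilator A M).radical}

namespace IsThickSubcategory

variable (hD : IsThickSubcategory D)
include hD

lemma exists_homologyAnnihilator_le_inf {Y Z : DerivedCategory (ModuleCat.{u} A)} (hY : Y ∈ D)
    (hZ : Z ∈ D) : ∃ W ∈ D, homologyAnnihilator W ≤ homologyAnnihilator Y ⊓ homologyAnnihilator Z :=
  ⟨Y ⊞ Z, hD.biprod_mem hY hZ, le_inf (homologyAnnihilator_le_of_retract biprod.inl_fst)
    (homologyAnnihilator_le_of_retract biprod.inr_snd)⟩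

lemma isWideTorsionClass_supportClass : IsWideTorsionClass ⊥ (supportClass D) where
  mem_of_equiv e := fun ⟨Y, hY, h⟩ ↦ ⟨Y, hY, h.trans (Ideal.radical_mono e.annihilator_eq.le)⟩
  punit_mem := ⟨0, hD.zero_mem, fun _ _ ↦
    Ideal.le_radical (Module.mem_annihilator.2 fun _ ↦ Subsingleton.elim _ _)⟩
  ker_mem f := fun ⟨Y, hY, h⟩ _ ↦ ⟨Y, hY, h.trans (Ideal.radical_mono
    (LinearMap.annihilator_le_of_injective _ (Submodule.subtype_injective (LinearMap.ker f))))⟩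
  coker_mem f := fun _ ⟨Y, hY, h⟩ ↦ ⟨Y, hY, h.trans (Ideal.radical_mono
    (LinearMap.annihilator_le_of_surjective _ (Submodule.mkQ_surjective (LinearMap.range f))))⟩
  le_annihilator _ := bot_le
  extension_mem _ _ hexact _ := fun ⟨_, hY, h⟩ ⟨_, hZ, h'⟩ ↦ by
    obtain ⟨W, hW, hle⟩ := hD.exists_homologyAnnihilator_le_inf hY hZ
    exact ⟨W, hW, (hle.trans (inf_le_inf h h')).trans ((Ideal.radical_mul _ _).ge.trans
      (Ideal.radical_mono (mul_le_annihilator_of_exact hexact le_rfl le_rfl)))⟩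

lemma gSet_subset_supportClass : gSet D ⊆ supportClass D :=
  gSet_subset hD.isWideTorsionClass_supportClass fun Y hY n ↦
    ⟨Y, hY, (homologyAnnihilator_le_annihilator Y n).trans Ideal.le_radical⟩

end IsThickSubcategory

end Support

section Correspondence

variable {A : Type u} [CommRing A] [HasDerivedCategory.{w} (ModuleCat.{u} A)]

lemma IsThickSubcategory.exists_homologyAnnihilator_le_radical
    {D : Set (DerivedCategory (ModuleCat.{u} A))} (hD : IsThickSubcategory D)
    {X : DerivedCategory (ModuleCat.{u} A)} (hX : IsSmallObject X)
    (h : ∀ n, derivedHomology n X ∈ supportClass D) :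
    ∃ Y ∈ D, homologyAnnihilator Y ≤ (homologyAnnihilator X).radical := by
  have hfin (s : Set ℤ) (hs : s.Finite) : ∃ Y ∈ D, homologyAnnihilator Y ≤
      (⨅ n ∈ s, Module.annihilator A (derivedHomology n X)).radical := by
    induction s, hs using Set.Finite.induction_on with
    | empty => exact ⟨0, hD.zero_mem, by simp [Ideal.radical_top]⟩
    | insert _ _ ih =>
      obtain ⟨Y, hY, hle⟩ := h _
      obtain ⟨Z, hZ, hle'⟩ := ih
      obtain ⟨W, hW, hWle⟩ := hD.exists_homologyAnnihilator_le_inf hY hZ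
      rw [iInf_insert, Ideal.radical_inf]
      exact ⟨W, hW, hWle.trans (inf_le_inf hle hle')⟩
  obtain ⟨Y, hY, hle⟩ := hfin _ hX.finite_setOf_nontrivial_derivedHomology
  refine ⟨Y, hY, hle.trans (Ideal.radical_mono (le_iInf fun n ↦ ?_))⟩
  by_cases hn : Nontrivial (derivedHomology n X)
  · exact iInf₂_le n hn
  · exact le_top.trans (Module.annihilator_eq_top_iff.2 (not_nontrivial_iff_subsingleton.1 hn)).ge

section Lattice

variable {C : Set (ModuleCat.{u} A)} {D : Set (DerivedCategory (ModuleCat.{u} A))}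

lemma gSet_mem_wideLatticeFP (hA : IsLeftCoherentRing A) (hD : D ∈ thickLatticeSmall.{w} A) :
    gSet D ∈ wideLatticeFP A :=
  ⟨isWideSubcategory_wideClosure _, ⟨_, derivedHomology_mem_gSet hD.1.zero_mem 0⟩,
    gSet_subset hA.isWideTorsionClass_finPresModules fun X hX n ↦
      (hD.2 X hX).finitePresentation_derivedHomology hA n⟩

theorem fSet_gSet (hD : D ∈ thickLatticeSmall.{w} A) : fSet (gSet D) = D := by
  refine Set.Subset.antisymm (fun X ⟨hX, hXD⟩ ↦ ?_) fun X hX ↦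
    ⟨hD.2 X hX, derivedHomology_mem_gSet hX⟩
  obtain ⟨Y, hY, hle⟩ := hD.1.exists_homologyAnnihilator_le_radical hX fun n ↦
    hD.1.gSet_subset_supportClass (hXD n)
  exact hD.1.mem_of_homologyAnnihilator_le_radical hX (hD.2 Y hY) hY hle

lemma exists_isKoszulObject_mem_of_mem_gSet (hA : IsLeftCoherentRing A)
    (hD : D ∈ thickLatticeSmall.{w} A) {M : ModuleCat.{u} A} (hM : M ∈ gSet D) :
    ∃ K ∈ D, IsKoszulObject (Module.annihilator A M) K := by
  have : Module.FinitePresentation A M := (gSet_mem_wideLatticeFP hA hD).2.2 hM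
  obtain ⟨K, hK⟩ := exists_isKoszulObject.{w} (hA.annihilator_fg M)
  obtain ⟨Y, hY, hle⟩ := hD.1.gSet_subset_supportClass hM
  exact ⟨K, hD.1.mem_of_homologyAnnihilator_le_radical hK.isSmallObject (hD.2 Y hY) hY
    (hle.trans (Ideal.radical_le_radical_iff.2 hK.le_radical)), hK⟩

lemma IsKoszulObject.quotient_mem {I : Ideal A} {K : DerivedCategory (ModuleCat.{u} A)}
    (hK : IsKoszulObject I K) (hC : IsWideTorsionClass ⊥ C) (hKC : K ∈ fSet C) :
    ModuleCat.of A (A ⧸ I) ∈ C := by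
  obtain ⟨e⟩ := hK.nonempty_equiv
  exact hC.mem_of_equiv (M := derivedHomology 0 K) e.symm (hKC.2 0)

lemma IsKoszulObject.mem_fSet {I : Ideal A} {K : DerivedCategory (ModuleCat.{u} A)}
    (hK : IsKoszulObject I K) (hA : IsLeftCoherentRing A) (hI : I.FG)
    (hC : IsWideTorsionClass ⊥ C) (hIC : ModuleCat.of A (A ⧸ I) ∈ C) : K ∈ fSet C :=
  ⟨hK.isSmallObject, fun n ↦
    have := hK.isSmallObject.finitePresentation_derivedHomology hA n
    hC.mem_of_le_radical_annihilator (N := derivedHomology n K) hI hIC hA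
      (hK.le_radical.trans (Ideal.radical_mono (homologyAnnihilator_le_annihilator K n)))⟩

end Lattice

/-- A class of modules containing `A ⧸ Module.annihilator A M` whenever it contains `M`. For a wide
subcategory of finitely presented modules over a coherent ring this says that membership only
depends on the support. -/
def ContainsAnnihilatorQuotients {A : Type u} [CommRing A] (C : Set (ModuleCat.{u} A)) : Prop :=
  ∀ M ∈ C, ModuleCat.of A (A ⧸ Module.annihilator A M) ∈ C

lemma subset_of_fSet_subset (hA : IsLeftCoherentRing A) {C₁ C₂ : Set (ModuleCat.{u} A)}
    (hC₁ : C₁ ∈ wideLatticeFP A) (hC₂ : C₂ ∈ wideLatticeFP A)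
    (hann : ContainsAnnihilatorQuotients C₁) (h : fSet.{w} C₁ ⊆ fSet C₂) : C₁ ⊆ C₂ := fun M hM ↦ by
  have : Module.FinitePresentation A M := hC₁.2.2 hM
  have hI := hA.annihilator_fg M
  have hw₁ := hC₁.1.isWideTorsionClass hC₁.2.1
  have hw₂ := hC₂.1.isWideTorsionClass hC₂.2.1
  obtain ⟨K, hK⟩ := exists_isKoszulObject.{w} hI
  have hKC₂ : K ∈ fSet C₂ := h (hK.mem_fSet hA hI hw₁ (hann M hM))
  exact hw₂.mem_of_le_annihilator hI (hK.quotient_mem hw₂ hKC₂) le_rfl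

theorem fIsLatticeIso_iff (hA : IsLeftCoherentRing A) :
    fIsLatticeIso.{w} A ↔ ∀ C ∈ wideLatticeFP A, ContainsAnnihilatorQuotients C := by
  have hfC {C} (hC : C ∈ wideLatticeFP A) : fSet C ∈ thickLatticeSmall.{w} A :=
    fSet_mem_thickLatticeSmall (hC.1.isWideTorsionClass hC.2.1)
  constructor
  · intro hiso C hC M hM
    have hsub : C ⊆ gSet (fSet.{w} C) :=
      (hiso.2.1 C hC _ (gSet_mem_wideLatticeFP hA (hfC hC))).1 (fSet_gSet (hfC hC)).ge
    obtain ⟨K, hKC, hK⟩ := exists_isKoszulObject_mem_of_mem_gSet hA (hfC hC) (hsub hM)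
    exact hK.quotient_mem (hC.1.isWideTorsionClass hC.2.1) hKC
  · intro hann
    refine ⟨fun C ↦ hfC, fun C₁ hC₁ C₂ hC₂ ↦ ⟨subset_of_fSet_subset hA hC₁ hC₂ (hann C₁ hC₁),
      fun hle X hX ↦ ⟨hX.1, fun n ↦ hle (hX.2 n)⟩⟩,
      fun D hD ↦ ⟨gSet D, gSet_mem_wideLatticeFP hA hD, fSet_gSet hD⟩⟩

end Correspondence

section Quotient

variable {A : Type u} [CommRing A] {a : Ideal A}

lemma nonempty_quotient_annihilator_equiv (a : Ideal A) (M : Type*) [AddCommGroup M] [Module A M]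
    [Module (A ⧸ a) M] [IsScalarTower A (A ⧸ a) M] :
    Nonempty ((A ⧸ Module.annihilator A M) ≃ₗ[A] (A ⧸ a) ⧸ Module.annihilator (A ⧸ a) M) := by
  let q : A →ₗ[A] (A ⧸ a) ⧸ Module.annihilator (A ⧸ a) M :=
    (Submodule.mkQ (Module.annihilator (A ⧸ a) M)).restrictScalars A ∘ₗ Submodule.mkQ a
  have hq : Function.Surjective q :=
    (Submodule.mkQ_surjective _).comp (Submodule.mkQ_surjective _)
  have hker : LinearMap.ker q = Module.annihilator A M := by
    ext r
    have hr : r ∈ LinearMap.ker q ↔ Ideal.Quotient.mk a r ∈ Module.annihilator (A ⧸ a) M :=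
      Submodule.Quotient.mk_eq_zero _
    exact hr.trans (SetLike.ext_iff.1 (Module.comap_annihilator (R := A ⧸ a) (M := M)) r)
  exact ⟨(Submodule.quotEquivOfEq _ _ hker.symm).trans (q.quotKerEquivOfSurjective hq)⟩

lemma wideClosure_restrictScalarsClass_mem_wideLatticeFP (hA : IsLeftCoherentRing A) (ha : a.FG)
    {C : Set (ModuleCat.{u} (A ⧸ a))} (hC : C ∈ wideLatticeFP (A ⧸ a)) :
    wideClosure (restrictScalarsClass C) ∈ wideLatticeFP A :=
  have hw := hC.1.isWideTorsionClass hC.2.1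
  ⟨isWideSubcategory_wideClosure _,
    ⟨_, subset_wideClosure _ (isWideTorsionClass_restrictScalarsClass hw).punit_mem⟩,
    wideClosure_subset hA.finPresModules_mem_wideLatticeFP.1
      (restrictScalarsClass_subset_finPresModules ha hw hC.2.2)⟩

lemma mem_quotient_annihilator_of_isScalarTower (hA : IsLeftCoherentRing A) (ha : a.FG)
    (h : ∀ C ∈ wideLatticeFP A, ContainsAnnihilatorQuotients C)
    {C : Set (ModuleCat.{u} (A ⧸ a))} (hC : C ∈ wideLatticeFP (A ⧸ a))
    (M : Type u) [AddCommGroup M] [Module A M] [Module (A ⧸ a) M] [IsScalarTower A (A ⧸ a) M]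
    (hM : ModuleCat.of (A ⧸ a) M ∈ C) :
    ModuleCat.of (A ⧸ a) ((A ⧸ a) ⧸ Module.annihilator (A ⧸ a) M) ∈ C := by
  have hw := hC.1.isWideTorsionClass hC.2.1
  have hE := isWideTorsionClass_restrictScalarsClass hw
  have hME : ModuleCat.of A M ∈ restrictScalarsClass C := (mem_restrictScalarsClass_iff hw).2 hM
  have haM : a ≤ Module.annihilator A (A ⧸ Module.annihilator A M) := by
    rw [Ideal.annihilator_quotient]
    exact le_annihilator_of_mem_restrictScalarsClass hME
  have hwide := wideClosure_restrictScalarsClass_mem_wideLatticeFP hA ha hC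
  have hMclosure := subset_wideClosure _ hME
  have hclosure := h _ hwide _ hMclosure
  have hquot := hE.mem_of_mem_wideClosure ha hclosure haM
  obtain ⟨e⟩ := nonempty_quotient_annihilator_equiv a M
  exact (mem_restrictScalarsClass_iff hw).1 (hE.mem_of_equiv e hquot)

theorem containsAnnihilatorQuotients_quotient (hA : IsLeftCoherentRing A) (ha : a.FG)
    (h : ∀ C ∈ wideLatticeFP A, ContainsAnnihilatorQuotients C)
    {C : Set (ModuleCat.{u} (A ⧸ a))} (hC : C ∈ wideLatticeFP (A ⧸ a)) :
    ContainsAnnihilatorQuotients C := fun M hM ↦ by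
  let _ : Module A M := Module.compHom M (Ideal.Quotient.mk a)
  have : IsScalarTower A (A ⧸ a) M := .of_algebraMap_smul fun _ _ ↦ rfl
  exact mem_quotient_annihilator_of_isScalarTower hA ha h hC M hM

end Quotient

/-- Theorem 4.6, first part: suppose `R` is a commutative coherent
ring such that the map `f_R`, from wide subcategories of finitely presented `R`-modules
to thick subcategories of small objects of `D(R)`, is a (lattice) isomorphism, and let
`a` be a finitely generated ideal of `R`.  Then `f_{R/a}` is also an isomorphism. -/
theorem fIsLatticeIso_quotient (R : Type u) [CommRing R]
    [HasDerivedCategory.{w} (ModuleCat.{u} R)]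
    (hcoh : IsLeftCoherentRing R)
    (a : Ideal R) (ha : a.FG)
    [HasDerivedCategory.{w} (ModuleCat.{u} (R ⧸ a))]
    (hR : fIsLatticeIso R) :
    fIsLatticeIso (R ⧸ a) := by
  rw [fIsLatticeIso_iff (hcoh.quotient ha)]
  intro C hC
  exact containsAnnihilatorQuotients_quotient hcoh ha ((fIsLatticeIso_iff hcoh).1 hR) hC
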